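/- (Hasse–Minkowski) Let K be a number field, m ≥ 1, and a₁, …, a_m ∈ Kˣ. Then the quadratic form a₁x₁² + ⋯ + a_mx_m² has a nontrivial zero over K if and only if both of the following hold: (i) for every ring embedding σ : K → ℝ, the real quadratic form σ(a₁)x₁² + ⋯ + σ(a_m)x_m² has a nontrivial zero over ℝ; and (ii) for every finite place v of K, the form a₁x₁² + ⋯ + a_mx_m² has a nontrivial zero over the completion K_v. -/

import Mathlib

open IsDedekindDomain NumberField
namespace HM

/-- the subgroup of squares -/
abbrev sqs (A : Type*) [CommGroup A] : Subgroup A := (powMonoidHom 2 : A →* A).range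

theorem mem_sqs {A : Type*} [CommGroup A] {x : A} : x ∈ sqs A ↔ ∃ y, y ^ 2 = x := Iff.rfl

theorem HQ {A : Type*} [CommGroup A] (W : Subgroup A) (hW : W.index ≠ 0) :
    (sqs A).index = W.relIndex (powMonoidHom 2 : A →* A).ker *
      (W.map (powMonoidHom 2 : A →* A)).relIndex W := by
  set f := (powMonoidHom 2 : A →* A) with hf
  have h1 : W.map f ≤ W := by
    rintro _ ⟨x, hx, rfl⟩
    exact W.pow_mem hx 2
  have h2 : W.map f ≤ f.range := by
    rintro _ ⟨x, hx, rfl⟩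
    exact ⟨x, rfl⟩
  have e1 := Subgroup.relIndex_mul_index h1
  have e2 := Subgroup.relIndex_mul_index h2
  have e3 : (W.map f).relIndex f.range = (W ⊔ f.ker).index := by
    rw [MonoidHom.range_eq_map, ← Subgroup.relIndex_comap, Subgroup.comap_map_eq,
      Subgroup.relIndex_top_right]
  have e4 := Subgroup.relIndex_mul_index (le_sup_left : W ≤ W ⊔ f.ker)
  have e5 : W.relIndex (W ⊔ f.ker) = W.relIndex f.ker := by
    rw [sup_comm, Subgroup.relIndex_sup_right]
  have h0 : (W ⊔ f.ker).index ≠ 0 := by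
    intro h; rw [h, mul_zero] at e4; exact hW e4.symm
  rw [e3] at e2
  rw [← e4, e5] at e1
  apply Nat.eq_of_mul_eq_mul_left (Nat.pos_of_ne_zero h0)
  rw [show (sqs A) = f.range from rfl, e2, ← e1]
  ring

theorem QI {B E : Type*} [CommGroup B] [CommGroup E] (i : B →* E) (N : E →* B)
    (hNi : ∀ b, N (i b) = b ^ 2)
    (hker : ∀ x, N x = 1 → ∃ y : E, ∃ b : B, x = y ^ 2 * i b)
    (hsq : ∀ y : E, ∃ x : E, ∃ b : B, N x = 1 ∧ y ^ 2 = x * i b) :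
    N.range.index * (sqs E).index * (sqs B).relIndex ((sqs E).comap i)
      = (sqs B).index ^ 2 := by
  have hBN : sqs B = i.range.map N := by
    ext b
    constructor
    · rintro ⟨c, rfl⟩
      exact ⟨i c, ⟨c, rfl⟩, hNi c⟩
    · rintro ⟨_, ⟨c, rfl⟩, rfl⟩
      exact ⟨c, (hNi c).symm⟩
  have hle : sqs B ≤ N.range := by
    rw [hBN]
    rintro _ ⟨x, -, rfl⟩
    exact ⟨x, rfl⟩
  have e1 := Subgroup.relIndex_mul_index hle
  have hsup : i.range ⊔ N.ker = i.range ⊔ sqs E := by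
    apply le_antisymm
    · refine sup_le le_sup_left ?_
      intro x hx
      obtain ⟨y, b, rfl⟩ := hker x hx
      exact mul_mem ((le_sup_right : sqs E ≤ _) ⟨y, rfl⟩)
        ((le_sup_left : i.range ≤ i.range ⊔ sqs E) ⟨b, rfl⟩)
    · refine sup_le le_sup_left ?_
      rintro _ ⟨y, rfl⟩
      obtain ⟨x, b, hx, h⟩ := hsq y
      change y ^ 2 ∈ _
      rw [h]
      exact mul_mem ((le_sup_right : N.ker ≤ _) hx)
        ((le_sup_left : i.range ≤ i.range ⊔ N.ker) ⟨b, rfl⟩)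
  have e2 : (sqs B).relIndex N.range = (i.range ⊔ sqs E).index := by
    rw [hBN, MonoidHom.range_eq_map N, ← Subgroup.relIndex_comap, Subgroup.comap_map_eq,
      Subgroup.relIndex_top_right, hsup]
  have e3 := Subgroup.relIndex_mul_index (le_sup_right : sqs E ≤ i.range ⊔ sqs E)
  have e4 : (sqs E).relIndex (i.range ⊔ sqs E) = ((sqs E).comap i).index := by
    rw [Subgroup.relIndex_sup_right, MonoidHom.range_eq_map, ← Subgroup.relIndex_comap,
      Subgroup.relIndex_top_right]
  have hle2 : sqs B ≤ (sqs E).comap i := by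
    rintro _ ⟨c, rfl⟩
    exact ⟨i c, by simp⟩
  have e5 := Subgroup.relIndex_mul_index hle2
  rw [e2] at e1
  rw [e4] at e3
  calc _ = ((i.range ⊔ sqs E).index * N.range.index) *
      ((sqs B).relIndex ((sqs E).comap i) * ((sqs E).comap i).index) := by
        rw [← e3]; ring
    _ = _ := by rw [e1, e5, sq]

end HM

open IsDedekindDomain NumberField
namespace HM

section LOC
variable {Λ L : Type*} [CommRing Λ] [Field L] [Algebra Λ L]

/-- The subgroup `1 + dΛ` of `Lˣ`, when `1 + dΛ` consists of units. -/
def oneAdd (L : Type*) [Field L] [Algebra Λ L] (d : Λ) (hu : ∀ l : Λ, IsUnit (1 + d * l)) :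
    Subgroup Lˣ where
  carrier := {u | ∃ l : Λ, (u : L) = algebraMap Λ L (1 + d * l)}
  one_mem' := ⟨0, by simp⟩
  mul_mem' := by
    rintro x y ⟨l, hl⟩ ⟨k, hk⟩
    refine ⟨l + k + d * l * k, ?_⟩
    rw [Units.val_mul, hl, hk, ← map_mul]
    congr 1; ring
  inv_mem' := by
    rintro x ⟨l, hl⟩
    obtain ⟨u, hu⟩ := hu l
    refine ⟨-(l * ((u⁻¹ : Λˣ) : Λ)), ?_⟩
    rw [Units.val_inv_eq_inv_val, inv_eq_iff_eq_inv, ← one_div, eq_div_iff, hl, ← hu, ← map_mul,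
      ← map_one (algebraMap Λ L)]
    · congr 1
      have : (u : Λ) * ((u⁻¹ : Λˣ) : Λ) = 1 := Units.mul_inv u
      linear_combination (-d * l) * this + hu
    · intro h0
      have : (x : L) * algebraMap Λ L ((u⁻¹ : Λˣ) : Λ) = 1 := by
        rw [hl, ← hu, ← map_mul, Units.mul_inv, map_one]
      have h2 : (1 : Λ) + d * -(l * ((u⁻¹ : Λˣ) : Λ)) = ((u⁻¹ : Λˣ) : Λ) := by
        have : (u : Λ) * ((u⁻¹ : Λˣ) : Λ) = 1 := Units.mul_inv u
        linear_combination (-1) * this + ((u⁻¹ : Λˣ) : Λ) * hu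
      rw [h2] at h0
      rw [h0, mul_zero] at this
      exact zero_ne_one this

theorem mem_oneAdd {d : Λ} {hu : ∀ l : Λ, IsUnit (1 + d * l)} {u : Lˣ} :
    u ∈ oneAdd L d hu ↔ ∃ l : Λ, (u : L) = algebraMap Λ L (1 + d * l) := Iff.rfl

theorem LOC (hinj : Function.Injective (algebraMap Λ L)) (h20 : (2 : L) ≠ 0)
    (p : Λ) (hp0 : p ≠ 0)
    (h1 : ∀ l : Λ, ∃ μ : Λ, μ + p * μ ^ 2 = l)
    (h2 : ∀ l : Λ, IsUnit (1 + p * l))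
    (h3 : ¬ IsUnit p)
    (h4 : ∀ d : Λ, d ≠ 0 → Finite (Λ ⧸ Ideal.span {d}))
    (c : Λ) (hc : c ≠ 0)
    (h5 : ∀ x : L, x ≠ 0 → ∃ k : ℤ, (∃ r, algebraMap Λ L r = algebraMap Λ L c * (x * algebraMap Λ L p ^ k)) ∧
      (∃ r, algebraMap Λ L r = algebraMap Λ L c * (x * algebraMap Λ L p ^ k)⁻¹)) :
    (sqs Lˣ).index = 4 * Nat.card (Λ ⧸ Ideal.span {(2 : Λ)}) := by
  classical
  set i := algebraMap Λ L with hi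
  have hip : i p ≠ 0 := fun h => hp0 (hinj (by rw [h, map_zero]))
  have hic : i c ≠ 0 := fun h => hc (hinj (by rw [h, map_zero]))
  have h20' : (2 : Λ) ≠ 0 := by
    intro h
    apply h20
    have := congrArg i h
    rwa [map_zero, map_ofNat] at this
  have hdom : ∀ x y : Λ, x ≠ 0 → y ≠ 0 → x * y ≠ 0 := by
    intro x y hx hy h
    have := congrArg i h
    rw [map_mul, map_zero, mul_eq_zero] at this
    rcases this with h | h
    · exact hx (hinj (by rw [h, map_zero]))
    · exact hy (hinj (by rw [h, map_zero]))
  have hcancel : ∀ x y z : Λ, x ≠ 0 → x * y = x * z → y = z := by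
    intro x y z hx h
    by_contra hne
    exact hdom x (y - z) hx (sub_ne_zero.mpr hne) (by rw [mul_sub, h, sub_self])
  have hu : ∀ l : Λ, IsUnit (1 + (2 * p) * l) := fun l => by
    have := h2 (2 * l)
    convert this using 1; ring
  set W := oneAdd L (2 * p) hu with hW
  set P : Lˣ := Units.mk0 (i p) hip with hP
  set f := (powMonoidHom 2 : Lˣ →* Lˣ) with hf
  -- elements of W are units of Λ
  have hWu : ∀ w ∈ W, ∃ u : Λˣ, (w : L) = i u := by
    rintro w ⟨l, hl⟩
    obtain ⟨u, hu⟩ := hu l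
    exact ⟨u, by rw [hl, ← hu]⟩
  have hpow : ∀ n : ℕ, ∀ u : Λˣ, i p ^ n = i u → n = 0 := by
    intro n u h
    by_contra hn
    rw [← map_pow] at h
    have := hinj h
    apply h3
    have h4 : IsUnit (p ^ n) := this ▸ u.isUnit
    exact (isUnit_pow_iff hn).mp h4
  have hzpow : ∀ k : ℤ, ∀ w ∈ W, P ^ k = w → k = 0 := by
    intro k w hw h
    obtain ⟨n, rfl | rfl⟩ := k.eq_nat_or_neg
    · obtain ⟨u, hu⟩ := hWu w hw
      have h' := congrArg Units.val h
      rw [hu] at h'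
      simp only [zpow_natCast, Units.val_pow_eq_pow_val, hP, Units.val_mk0] at h'
      simp [hpow n u h']
    · obtain ⟨u, hu⟩ := hWu w⁻¹ (inv_mem hw)
      have h' := congrArg Units.val (congrArg (·⁻¹) h)
      rw [hu] at h'
      simp only [zpow_neg, inv_inv, zpow_natCast, Units.val_pow_eq_pow_val, hP, Units.val_mk0] at h'
      simp [hpow n u h']
  -- squares of W
  have hmapW : ∀ w : Lˣ, w ∈ W.map f ↔ ∃ l, (w : L) = i (1 + 4 * p * l) := by
    intro w
    constructor
    · rintro ⟨x, ⟨l, hl⟩, rfl⟩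
      refine ⟨l + p * l ^ 2, ?_⟩
      simp only [hf, powMonoidHom_apply, Units.val_pow_eq_pow_val]
      rw [hl, ← map_pow]
      congr 1; ring
    · rintro ⟨l, hl⟩
      obtain ⟨μ, hμ⟩ := h1 l
      have hne : i (1 + 2 * p * μ) ≠ 0 := by
        obtain ⟨u, hu⟩ := hu μ
        rw [← hu]
        exact (u.isUnit.map i).ne_zero
      refine ⟨Units.mk0 _ hne, ⟨μ, rfl⟩, ?_⟩
      ext
      simp only [hf, powMonoidHom_apply, Units.val_pow_eq_pow_val, Units.val_mk0]
      rw [hl, ← map_pow, ← hμ]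
      congr 1; ring
  -- index of W^2 in W
  have hWW : (W.map f).relIndex W = Nat.card (Λ ⧸ Ideal.span {(2 : Λ)}) := by
    have hne : ∀ l, i (1 + 2 * p * l) ≠ 0 := by
      intro l
      obtain ⟨u, hu⟩ := hu l
      rw [← hu]
      exact (u.isUnit.map i).ne_zero
    let g : Λ → W := fun l => ⟨Units.mk0 _ (hne l), ⟨l, rfl⟩⟩
    have hg : ∀ l k, (g l)⁻¹ * g k ∈ (W.map f).subgroupOf W ↔ k - l ∈ Ideal.span {(2 : Λ)} := by
      intro l k
      rw [Subgroup.mem_subgroupOf, hmapW, Ideal.mem_span_singleton]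
      obtain ⟨u, hu⟩ := hu l
      have hul : ((((g l)⁻¹ * g k : W) : Lˣ) : L) = (i (1 + 2 * p * l))⁻¹ * i (1 + 2 * p * k) := by
        simp [g]
      rw [hul]
      constructor
      · rintro ⟨m, hm⟩
        rw [inv_mul_eq_iff_eq_mul₀ (hne l), ← map_mul] at hm
        have := hinj hm
        refine ⟨m * (1 + 2 * p * l), ?_⟩
        apply hcancel (2 * p) _ _ (hdom _ _ h20' hp0)
        linear_combination this
      · rintro ⟨m, hm⟩
        refine ⟨m * ((u⁻¹ : Λˣ) : Λ), ?_⟩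
        rw [inv_mul_eq_iff_eq_mul₀ (hne l), ← map_mul]
        congr 1
        have hui : (u : Λ) * ((u⁻¹ : Λˣ) : Λ) = 1 := Units.mul_inv u
        rw [← hu]
        linear_combination (-4 * p * m) * hui + 2 * p * hm - hu
    rw [Subgroup.relIndex, Subgroup.index]
    symm
    refine Nat.card_congr (Equiv.ofBijective
      (Quotient.map' (s₁ := Submodule.quotientRel (Ideal.span {(2 : Λ)}))
        (s₂ := QuotientGroup.leftRel ((W.map f).subgroupOf W)) g ?_) ⟨?_, ?_⟩)
    · intro a b hab
      rw [Submodule.quotientRel_def] at hab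
      rw [QuotientGroup.leftRel_apply, hg, ← neg_mem_iff, neg_sub]
      exact hab
    · intro a b
      refine Quotient.inductionOn₂' a b ?_
      intro a b hab
      rw [Quotient.map'_mk'', Quotient.map'_mk'', Quotient.eq''] at hab
      rw [QuotientGroup.leftRel_apply, hg, ← neg_mem_iff, neg_sub] at hab
      rw [Quotient.eq'']
      rw [Submodule.quotientRel_def]
      exact hab
    · intro b
      refine Quotient.inductionOn' b ?_
      rintro ⟨w, l, hl⟩
      refine ⟨Quotient.mk'' l, ?_⟩
      rw [Quotient.map'_mk'']
      congr 1
      apply Subtype.ext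
      ext
      exact hl.symm
  set Z := Subgroup.zpowers P with hZ
  set Z2 := Subgroup.zpowers (P ^ 2) with hZ2
  have hmapZ : Z.map f = Z2 := by
    rw [hZ, MonoidHom.map_zpowers]; rfl
  have hWfW : W.map f ≤ W := by
    rintro _ ⟨x, hx, rfl⟩
    exact W.pow_mem hx 2
  -- chain
  have hZ2Z : Z2 ≤ Z := by
    rw [hZ2, Subgroup.zpowers_le]
    exact Subgroup.pow_mem _ (Subgroup.mem_zpowers P) 2
  have c1 : (Z2 ⊔ W).relIndex (Z ⊔ W) = 2 := by
    have : Z ⊔ W = Z2 ⊔ W ⊔ Z := by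
      apply le_antisymm
      · exact sup_le le_sup_right (le_sup_right.trans le_sup_left)
      · exact sup_le (sup_le (hZ2Z.trans le_sup_left) le_sup_right) le_sup_left
    rw [this, sup_comm _ Z, Subgroup.relIndex_sup_right, Subgroup.relIndex_eq_two_iff]
    have key : ∀ k : ℤ, P ^ k ∈ Z2 ⊔ W ↔ Even k := by
      intro k
      rw [Subgroup.mem_sup]
      constructor
      · rintro ⟨_, ⟨j, rfl⟩, w, hw, h⟩
        have hj : P ^ (k - 2 * j) = w := by
          rw [zpow_sub, ← h, zpow_mul]
          simp only [mul_comm, zpow_ofNat]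
          group
        have := hzpow _ w hw hj
        exact ⟨j, by omega⟩
      · rintro ⟨j, rfl⟩
        refine ⟨_, ⟨j, rfl⟩, 1, one_mem _, ?_⟩
        simp only [mul_one]
        rw [← zpow_natCast, ← zpow_mul]; congr 1; push_cast; ring
    refine ⟨P, Subgroup.mem_zpowers P, ?_⟩
    rintro _ ⟨k, rfl⟩
    simp only
    rw [← zpow_add_one, key, key, Int.even_add_one]
    rcases Int.even_or_odd k with h | h
    · right; exact ⟨h, by simpa using h⟩
    · left; rw [← Int.not_even_iff_odd] at h; exact ⟨h, h⟩
  have c2 : (Z2 ⊔ W.map f).relIndex (Z2 ⊔ W) = (W.map f).relIndex W := by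
    have : Z2 ⊔ W = Z2 ⊔ W.map f ⊔ W := by
      rw [sup_assoc, sup_eq_right.mpr hWfW]
    rw [this, sup_comm _ W, Subgroup.relIndex_sup_right]
    rw [← Subgroup.inf_relIndex_right, ← Subgroup.inf_relIndex_right (W.map f)]
    congr 1
    apply le_antisymm
    · rintro x ⟨hx, hxW⟩
      refine ⟨?_, hxW⟩
      obtain ⟨_, ⟨j, rfl⟩, w, hw, h⟩ := Subgroup.mem_sup.mp hx
      have hj : P ^ (2 * j) = x * w⁻¹ := by
        rw [← h, zpow_mul]; simp
      have hj0 := hzpow _ _ (mul_mem hxW (inv_mem (hWfW hw))) hj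
      have hj0 : j = 0 := by omega
      subst hj0
      simp at h
      rw [← h]; exact hw
    · exact inf_le_inf_right _ le_sup_right
  have hidx : (Z ⊔ W).index ≠ 0 := by
    set M := Λ ⧸ Ideal.span {2 * p * c * c} with hM
    have hMne : 2 * p * c * c ≠ 0 := hdom _ _ (hdom _ _ (hdom _ _ h20' hp0) hc) hc
    have : Finite M := h4 _ hMne
    choose k hk using fun x : Lˣ => h5 x x.ne_zero
    choose r hr using fun x => (hk x).1
    choose s hs using fun x => (hk x).2
    have hmk : ∀ x y : Lˣ, (Ideal.Quotient.mk (Ideal.span {2 * p * c * c}) (r x)) =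
        Ideal.Quotient.mk _ (r y) → y⁻¹ * x ∈ Z ⊔ W := by
      intro x y h
      rw [Ideal.Quotient.eq, Ideal.mem_span_singleton] at h
      obtain ⟨m, hm⟩ := h
      have e : (y * P ^ k y)⁻¹ * (x * P ^ k x) ∈ W := by
        refine ⟨m * s y, ?_⟩
        have hy0 : (y : L) * i p ^ k y ≠ 0 := mul_ne_zero y.ne_zero (zpow_ne_zero _ hip)
        have hm' := congrArg i hm
        rw [map_sub, hr, hr, map_mul] at hm'
        have hv : (((y * P ^ k y)⁻¹ * (x * P ^ k x) : Lˣ) : L) =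
            (y * i p ^ k y)⁻¹ * (x * i p ^ k x) := by
          simp [hP]
        rw [hv, inv_mul_eq_iff_eq_mul₀ hy0]
        apply mul_left_cancel₀ hic
        have hsy := hs y
        have hsy' : i (s y) * (y * i p ^ k y) = i c := by
          rw [hsy, mul_assoc, inv_mul_cancel₀ hy0, mul_one]
        simp only [map_add, map_mul, map_one] at hm' ⊢
        linear_combination hm' - (i c * i 2 * i p * i m) * hsy'
      have e2 : y⁻¹ * x = P ^ (k y - k x) * ((y * P ^ k y)⁻¹ * (x * P ^ k x)) := by
        rw [zpow_sub, mul_inv_rev]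
        calc y⁻¹ * x = (P ^ k y * (P ^ k y)⁻¹) * ((P ^ k x)⁻¹ * P ^ k x) * (y⁻¹ * x) := by simp
          _ = _ := by
            simp only [mul_comm, mul_left_comm, mul_assoc]
      rw [e2]
      exact mul_mem ((le_sup_left : Z ≤ _) ⟨_, rfl⟩) ((le_sup_right : W ≤ Z ⊔ W) e)
    rw [Subgroup.index]
    have : Finite (Lˣ ⧸ (Z ⊔ W)) := by
      refine Finite.of_injective (β := M)
        (fun q => Ideal.Quotient.mk _ (r q.out)) ?_
      intro a b hab
      have := hmk _ _ hab
      rw [← QuotientGroup.eq, QuotientGroup.out_eq', QuotientGroup.out_eq'] at this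
      exact this.symm
    exact Nat.card_pos.ne'
  rw [HQ (Z ⊔ W) hidx]
  have d1 : (Z ⊔ W).relIndex f.ker = 2 := by
    rw [Subgroup.relIndex_eq_two_iff]
    refine ⟨-1, by simp [hf, MonoidHom.mem_ker], ?_⟩
    have hm1 : (-1 : Lˣ) ∉ Z ⊔ W := by
      rw [Subgroup.mem_sup]
      rintro ⟨_, ⟨k, rfl⟩, w, hw, h⟩
      have h' : P ^ (2 * k) = w⁻¹ * w⁻¹ := by
        have h3 : (P ^ k * w) * (P ^ k * w) = 1 := by
          simp only at h
          rw [h]; simp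
        rw [two_mul, zpow_add]
        calc P ^ k * P ^ k = (P ^ k * w * (P ^ k * w)) * (w⁻¹ * w⁻¹) := by
              simp only [mul_comm, mul_left_comm, mul_assoc]; simp
          _ = _ := by rw [h3, one_mul]
      have hk := hzpow _ _ (mul_mem (inv_mem hw) (inv_mem hw)) h'
      have hk : k = 0 := by omega
      subst hk
      simp only [zpow_zero, one_mul] at h
      subst h
      obtain ⟨l, hl⟩ := hw
      have hl2 : i (2 * (1 + p * l)) = 0 := by
        have e : (2 * (1 + p * l) : Λ) = 1 + (1 + 2 * p * l) := by ring
        rw [e, map_add, ← hl]; simp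
      rw [map_mul, map_ofNat, mul_eq_zero] at hl2
      rcases hl2 with h | h
      · exact h20 h
      · exact ((h2 l).map i).ne_zero h
    intro b hb
    have hb' : b = 1 ∨ b = -1 := by
      rw [MonoidHom.mem_ker] at hb
      have : (b : L) ^ 2 = 1 := by
        have := congrArg Units.val hb
        simpa [hf] using this
      rcases mul_self_eq_one_iff.mp ((sq _).symm.trans this) with h | h
      · left; ext; exact h
      · right; ext; simpa using h
    rcases hb' with rfl | rfl
    · right; exact ⟨one_mem _, by simpa using hm1⟩
    · left; exact ⟨by simp, hm1⟩
  have d2 : ((Z ⊔ W).map f).relIndex (Z ⊔ W) = 2 * Nat.card (Λ ⧸ Ideal.span {(2 : Λ)}) := by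
    rw [Subgroup.map_sup, hmapZ, ← Subgroup.relIndex_mul_relIndex _ _ _
      (sup_le_sup_left hWfW _ : Z2 ⊔ W.map f ≤ Z2 ⊔ W) (sup_le_sup_right hZ2Z _), c1, c2, hWW]
    ring
  rw [d1, d2]; ring

end LOC
end HM

open IsDedekindDomain NumberField
namespace HM

/-- Nonarchimedean local fields (of characteristic not two), in terms of the norm. -/
structure LF (F : Type*) [NormedField F] : Prop where
  ultra : ∀ x y : F, ‖x + y‖ ≤ max ‖x‖ ‖y‖
  two : (2 : F) ≠ 0
  unif : ∃ ϖ : F, ϖ ≠ 0 ∧ ‖ϖ‖ < 1 ∧ ∀ x : F, x ≠ 0 → ∃ k : ℤ, ‖x‖ = ‖ϖ‖ ^ k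
  fin : ∀ d : F, d ≠ 0 → ∃ T : Set F, T.Finite ∧ ∀ x : F, ‖x‖ ≤ 1 → ∃ t ∈ T, ‖x - t‖ ≤ ‖d‖

namespace LF
variable {F : Type*} [NormedField F]

theorem sub (h : LF F) (x y : F) : ‖x - y‖ ≤ max ‖x‖ ‖y‖ := by
  rw [sub_eq_add_neg, ← norm_neg y]; exact h.ultra _ _

theorem norm_two (h : LF F) : ‖(2 : F)‖ ≤ 1 := by
  have := h.ultra 1 1
  rw [one_add_one_eq_two] at this
  simpa using this

theorem norm_four (h : LF F) : ‖(4 : F)‖ ≤ 1 := by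
  have := h.norm_two
  have e : (4 : F) = 2 * 2 := by norm_num
  rw [e, norm_mul]
  exact mul_le_one₀ this (norm_nonneg _) this

theorem four (h : LF F) : (4 : F) ≠ 0 := by
  have e : (4 : F) = 2 * 2 := by norm_num
  rw [e]; exact mul_ne_zero h.two h.two

theorem norm_eq_of_sub_lt (h : LF F) {x y : F} (hxy : ‖x - y‖ < ‖x‖) : ‖y‖ = ‖x‖ := by
  apply le_antisymm
  · have := h.sub x (x - y)
    rw [sub_sub_cancel] at this
    exact this.trans (max_le le_rfl hxy.le)
  · have := h.ultra (x - y) y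
    rw [sub_add_cancel] at this
    rcases le_max_iff.mp this with h1 | h1
    · exact absurd h1 (not_le.mpr hxy)
    · exact h1

theorem as [CompleteSpace F] (h : LF F) (c : F) (hc : ‖c‖ < 1) :
    ∃ y : F, ‖y‖ ≤ ‖c‖ ∧ y ^ 2 + y = c := by
  let s : Set F := Metric.closedBall 0 ‖c‖
  let f : F → F := fun y => c - y ^ 2
  have hsf : Set.MapsTo f s s := by
    intro y hy
    simp only [s, Metric.mem_closedBall, dist_zero_right, f] at hy ⊢
    refine (h.sub _ _).trans (max_le le_rfl ?_)
    rw [norm_pow, sq]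
    calc ‖y‖ * ‖y‖ ≤ ‖c‖ * 1 := mul_le_mul hy (hy.trans hc.le) (norm_nonneg _) (norm_nonneg _)
      _ = _ := mul_one _
  have hcon : ContractingWith ‖c‖₊ (hsf.restrict f s s) := by
    refine ⟨by exact_mod_cast hc, LipschitzWith.of_dist_le_mul ?_⟩
    rintro ⟨x, hx⟩ ⟨y, hy⟩
    simp only [s, Metric.mem_closedBall, dist_zero_right] at hx hy
    change dist (c - x ^ 2) (c - y ^ 2) ≤ ‖c‖ * dist x y
    rw [dist_eq_norm, dist_eq_norm]
    have e : c - x ^ 2 - (c - y ^ 2) = - ((x + y) * (x - y)) := by ring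
    rw [e, norm_neg, norm_mul]
    exact mul_le_mul_of_nonneg_right ((h.ultra _ _).trans (max_le hx hy)) (norm_nonneg _)
  obtain ⟨y, hy, hfix, -⟩ := ContractingWith.exists_fixedPoint' (s := s)
    (Metric.isClosed_closedBall.isComplete) hsf hcon (x := 0) (by simp [s]) (edist_ne_top _ _)
  refine ⟨y, by simpa [s] using hy, ?_⟩
  have : c - y ^ 2 = y := hfix
  linear_combination -this

theorem sq_crit [CompleteSpace F] (h : LF F) (x y : F) (hx : x ≠ 0)
    (hxy : ‖x - y ^ 2‖ < ‖4 * x‖) : IsSquare x := by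
  have h1 : ‖x - y ^ 2‖ < ‖x‖ := by
    refine hxy.trans_le ?_
    rw [norm_mul]
    exact mul_le_of_le_one_left (norm_nonneg _) h.norm_four
  have h2 := h.norm_eq_of_sub_lt h1
  have hy : y ^ 2 ≠ 0 := by
    intro h0; rw [h0, norm_zero] at h2
    exact hx (norm_eq_zero.mp h2.symm)
  obtain ⟨z, -, hz⟩ := h.as ((x - y ^ 2) / (4 * y ^ 2)) (by
    rw [norm_div, div_lt_one (norm_pos_iff.mpr (mul_ne_zero h.four hy)), norm_mul, h2, ← norm_mul]
    exact hxy)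
  refine ⟨y * (1 + 2 * z), ?_⟩
  have h4 := h.four
  rw [eq_div_iff (mul_ne_zero h4 hy)] at hz
  linear_combination (-1) * hz

/-- ring of integers -/
def O (h : LF F) : Subring F where
  carrier := {x | ‖x‖ ≤ 1}
  one_mem' := by simp
  zero_mem' := by simp
  mul_mem' := by
    intro x y hx hy
    simp only [Set.mem_ofPred_eq, norm_mul] at *
    exact mul_le_one₀ hx (norm_nonneg _) hy
  add_mem' := by
    intro x y hx hy
    exact (h.ultra _ _).trans (max_le hx hy)
  neg_mem' := by
    intro x hx
    simpa using hx

theorem mem_O (h : LF F) {x : F} : x ∈ h.O ↔ ‖x‖ ≤ 1 := Iff.rfl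

theorem O_dvd (h : LF F) {x d : h.O} (hd : d ≠ 0) (hx : ‖(x : F)‖ ≤ ‖(d : F)‖) : d ∣ x := by
  have hd' : (d : F) ≠ 0 := fun h0 => hd (Subtype.ext h0)
  refine ⟨⟨x / d, ?_⟩, ?_⟩
  · rw [mem_O, norm_div]
    exact div_le_one_of_le₀ hx (norm_nonneg _)
  · apply Subtype.ext
    push_cast
    field_simp

theorem O_isUnit (h : LF F) {x : h.O} (hx : ‖(x : F)‖ = 1) : IsUnit x := by
  have hx0 : (x : F) ≠ 0 := by
    intro h0; rw [h0, norm_zero] at hx; exact zero_ne_one hx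
  refine IsUnit.of_mul_eq_one ⟨(x : F)⁻¹, by rw [mem_O, norm_inv, hx, inv_one]⟩ ?_
  apply Subtype.ext
  push_cast
  exact mul_inv_cancel₀ hx0

theorem O_fin (h : LF F) (d : h.O) (hd : d ≠ 0) : Finite (h.O ⧸ Ideal.span {d}) := by
  have hd' : (d : F) ≠ 0 := fun h0 => hd (Subtype.ext h0)
  obtain ⟨T, hT, hT2⟩ := h.fin d hd'
  choose t ht using fun x : h.O => hT2 x x.2
  have := hT.to_subtype
  refine Finite.of_injective (β := T) (fun q => ⟨t q.out, (ht q.out).1⟩) ?_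
  intro a b hab
  have hab' : t a.out = t b.out := congrArg Subtype.val hab
  have e : Ideal.Quotient.mk (Ideal.span {d}) a.out = Ideal.Quotient.mk (Ideal.span {d}) b.out := by
    rw [Ideal.Quotient.eq, Ideal.mem_span_singleton]
    apply h.O_dvd hd
    have e2 : ((a.out - b.out : h.O) : F) = ((a.out : F) - t a.out) - ((b.out : F) - t b.out) := by
      rw [hab']; push_cast; ring
    rw [e2]
    exact (h.sub _ _).trans (max_le (ht _).2 (ht _).2)
  have e1 : ∀ q : h.O ⧸ Ideal.span {d}, Ideal.Quotient.mk (Ideal.span {d}) q.out = q :=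
    fun q => Quotient.out_eq _
  rw [e1, e1] at e
  exact e

/-- number of classes modulo two -/
noncomputable def q (h : LF F) : ℕ := Nat.card (h.O ⧸ Ideal.span {(2 : h.O)})

theorem O_h1 [CompleteSpace F] (h : LF F) (p : F) (hp0 : p ≠ 0) (hp : ‖p‖ < 1) (l : F)
    (hl : ‖l‖ ≤ 1) : ∃ μ : F, ‖μ‖ ≤ 1 ∧ μ + p * μ ^ 2 = l := by
  obtain ⟨y, hy, hy2⟩ := h.as (p * l) (by
    rw [norm_mul]
    exact (mul_le_of_le_one_right (norm_nonneg _) hl).trans_lt hp)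
  refine ⟨y / p, ?_, ?_⟩
  · rw [norm_div]
    apply div_le_one_of_le₀ _ (norm_nonneg _)
    refine hy.trans ?_
    rw [norm_mul]
    exact mul_le_of_le_one_right (norm_nonneg _) hl
  · field_simp
    linear_combination hy2

theorem two_ne_O (h : LF F) : (2 : h.O) ≠ 0 := by
  intro h0
  have := congrArg h.O.subtype h0
  rw [map_ofNat, map_zero] at this
  exact h.two this

theorem q_pos (h : LF F) : 0 < h.q := by
  have := h.O_fin 2 h.two_ne_O
  exact Nat.card_pos

theorem norm_one_add (h : LF F) {x : F} (hx : ‖x‖ < 1) : ‖1 + x‖ = 1 := by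
  have := h.norm_eq_of_sub_lt (x := 1) (y := 1 + x) (by simpa using hx)
  simpa using this

theorem sq_index [CompleteSpace F] (h : LF F) : (sqs Fˣ).index = 4 * h.q := by
  obtain ⟨ϖ, h0, hlt, hk⟩ := h.unif
  have hpos : 0 < ‖ϖ‖ := norm_pos_iff.mpr h0
  refine LOC (Λ := h.O) (L := F) Subtype.val_injective h.two ⟨ϖ, hlt.le⟩
    (fun e => h0 (congrArg Subtype.val e)) ?_ ?_ ?_ h.O_fin 1 one_ne_zero ?_
  · rintro ⟨l, hl⟩
    obtain ⟨μ, hμ, e⟩ := h.O_h1 ϖ h0 hlt l hl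
    exact ⟨⟨μ, hμ⟩, Subtype.ext e⟩
  · rintro ⟨l, hl⟩
    apply h.O_isUnit
    push_cast
    apply h.norm_one_add
    rw [norm_mul]
    exact (mul_le_of_le_one_right (norm_nonneg _) hl).trans_lt hlt
  · rintro hu
    obtain ⟨y, hy⟩ := hu.exists_right_inv
    have := congrArg Subtype.val hy
    push_cast at this
    have h2 := congrArg norm this
    rw [norm_mul, norm_one] at h2
    have h3 : ‖ϖ‖ * ‖(y : F)‖ ≤ ‖ϖ‖ := mul_le_of_le_one_right (norm_nonneg _) y.2
    linarith
  · intro x hx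
    obtain ⟨k, hk⟩ := hk x hx
    have hn : ‖x * ϖ ^ (-k)‖ = 1 := by
      rw [norm_mul, norm_zpow, hk, zpow_neg, mul_inv_cancel₀ (zpow_ne_zero _ hpos.ne')]
    refine ⟨-k, ⟨⟨x * ϖ ^ (-k), hn.le⟩, ?_⟩, ⟨⟨(x * ϖ ^ (-k))⁻¹, ?_⟩, ?_⟩⟩
    · rw [map_one, one_mul]; rfl
    · rw [mem_O, norm_inv, hn, inv_one]
    · rw [map_one, one_mul]; rfl

end LF
end HM

open IsDedekindDomain NumberField
namespace HM

/-- A quadratic extension `L = F(√a)`, with coordinates. -/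
structure Quad (F L : Type*) [Field F] [Field L] [Algebra F L] (a : F) where
  ofData ::
  s : L
  re : L → F
  im : L → F
  ss : s * s = algebraMap F L a
  eta : ∀ x, x = algebraMap F L (re x) + algebraMap F L (im x) * s
  nsq : ¬ IsSquare a
  two : (2 : F) ≠ 0

namespace Quad
variable {F L : Type*} [Field F] [Field L] [Algebra F L] {a : F} (Q : Quad F L a)

theorem a_ne (Q : Quad F L a) : a ≠ 0 := by
  intro h; exact Q.nsq (h ▸ ⟨0, by simp⟩)

theorem s_ne : Q.s ≠ 0 := by
  intro h
  have := Q.ss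
  rw [h, zero_mul] at this
  exact Q.a_ne ((algebraMap F L).injective (by rw [← this, map_zero]))

theorem indep {p q : F} (h : algebraMap F L p + algebraMap F L q * Q.s = 0) : p = 0 ∧ q = 0 := by
  have hi := (algebraMap F L).injective
  have hq : q = 0 := by
    by_contra hq
    apply Q.nsq
    refine ⟨p / q, ?_⟩
    apply hi
    have e : algebraMap F L q ≠ 0 := by simpa using hq
    have hs := Q.ss
    have : Q.s = - algebraMap F L p / algebraMap F L q := by
      rw [eq_div_iff e]; linear_combination h
    rw [← hs, this, map_mul, map_div₀]
    field_simp
  subst hq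
  simp only [map_zero, zero_mul, add_zero] at h
  exact ⟨hi (by rw [h, map_zero]), rfl⟩

theorem ext' {p q p' q' : F} (h : algebraMap F L p + algebraMap F L q * Q.s =
    algebraMap F L p' + algebraMap F L q' * Q.s) : p = p' ∧ q = q' := by
  have := Q.indep (p := p - p') (q := q - q') (by push_cast [map_sub]; linear_combination h)
  exact ⟨sub_eq_zero.mp this.1, sub_eq_zero.mp this.2⟩

theorem re_eq {x : L} {p q : F} (h : x = algebraMap F L p + algebraMap F L q * Q.s) :
    Q.re x = p := (Q.ext' ((Q.eta x).symm.trans h)).1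
theorem im_eq {x : L} {p q : F} (h : x = algebraMap F L p + algebraMap F L q * Q.s) :
    Q.im x = q := (Q.ext' ((Q.eta x).symm.trans h)).2

/-- element with given coordinates -/
def mk (p q : F) : L := algebraMap F L p + algebraMap F L q * Q.s

@[simp] theorem re_mk (p q : F) : Q.re (Q.mk p q) = p := Q.re_eq rfl
@[simp] theorem im_mk (p q : F) : Q.im (Q.mk p q) = q := Q.im_eq rfl
theorem mk_eta (x : L) : Q.mk (Q.re x) (Q.im x) = x := (Q.eta x).symm

theorem mk_mul (p q p' q' : F) :
    Q.mk p q * Q.mk p' q' = Q.mk (p * p' + a * q * q') (p * q' + q * p') := by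
  simp only [mk, map_add, map_mul]
  linear_combination (algebraMap F L q * algebraMap F L q') * Q.ss
theorem mk_add (p q p' q' : F) : Q.mk p q + Q.mk p' q' = Q.mk (p + p') (q + q') := by
  simp only [mk, map_add]; ring
theorem mk_neg (p q : F) : -Q.mk p q = Q.mk (-p) (-q) := by
  simp only [mk, map_neg]; ring
theorem mk_zero (p : F) : Q.mk p 0 = algebraMap F L p := by simp [mk]
theorem mk_one : Q.mk 1 0 = 1 := by simp [mk]
theorem mk_zz : Q.mk 0 0 = 0 := by simp [mk]
theorem s_eq : Q.mk 0 1 = Q.s := by simp [mk]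

@[simp] theorem re_mul (x y : L) : Q.re (x * y) = Q.re x * Q.re y + a * Q.im x * Q.im y := by
  rw [← Q.mk_eta x, ← Q.mk_eta y, mk_mul]; simp
@[simp] theorem im_mul (x y : L) : Q.im (x * y) = Q.re x * Q.im y + Q.im x * Q.re y := by
  rw [← Q.mk_eta x, ← Q.mk_eta y, mk_mul]; simp
@[simp] theorem re_add (x y : L) : Q.re (x + y) = Q.re x + Q.re y := by
  rw [← Q.mk_eta x, ← Q.mk_eta y, mk_add]; simp
@[simp] theorem im_add (x y : L) : Q.im (x + y) = Q.im x + Q.im y := by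
  rw [← Q.mk_eta x, ← Q.mk_eta y, mk_add]; simp
@[simp] theorem re_neg (x : L) : Q.re (-x) = - Q.re x := by
  rw [← Q.mk_eta x, mk_neg]; simp
@[simp] theorem im_neg (x : L) : Q.im (-x) = - Q.im x := by
  rw [← Q.mk_eta x, mk_neg]; simp
@[simp] theorem re_alg (x : F) : Q.re (algebraMap F L x) = x := by rw [← Q.mk_zero]; simp
@[simp] theorem im_alg (x : F) : Q.im (algebraMap F L x) = 0 := by rw [← Q.mk_zero]; simp
@[simp] theorem re_one : Q.re 1 = 1 := by rw [← Q.mk_one]; simp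
@[simp] theorem im_one : Q.im 1 = 0 := by rw [← Q.mk_one]; simp
@[simp] theorem re_zero : Q.re 0 = 0 := by rw [← Q.mk_zz]; simp
@[simp] theorem im_zero : Q.im 0 = 0 := by rw [← Q.mk_zz]; simp
@[simp] theorem re_s : Q.re Q.s = 0 := by rw [← Q.s_eq]; simp
@[simp] theorem im_s : Q.im Q.s = 1 := by rw [← Q.s_eq]; simp

theorem hext {x y : L} (h1 : Q.re x = Q.re y) (h2 : Q.im x = Q.im y) : x = y := by
  rw [← Q.mk_eta x, ← Q.mk_eta y, h1, h2]

/-- conjugation -/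
def τ : L →+* L where
  toFun x := Q.mk (Q.re x) (-Q.im x)
  map_one' := by apply Q.hext <;> simp
  map_zero' := by apply Q.hext <;> simp
  map_mul' x y := by apply Q.hext <;> simp <;> ring
  map_add' x y := by apply Q.hext <;> simp; ring

@[simp] theorem re_τ (x : L) : Q.re (Q.τ x) = Q.re x := Q.re_mk _ _
@[simp] theorem im_τ (x : L) : Q.im (Q.τ x) = - Q.im x := Q.im_mk _ _
@[simp] theorem τ_alg (x : F) : Q.τ (algebraMap F L x) = algebraMap F L x := by
  apply Q.hext <;> simp
@[simp] theorem τ_τ (x : L) : Q.τ (Q.τ x) = x := by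
  apply Q.hext <;> simp
theorem τ_s : Q.τ Q.s = - Q.s := by
  apply Q.hext <;> simp

/-- norm -/
def N : L →* F where
  toFun x := Q.re x ^ 2 - a * Q.im x ^ 2
  map_one' := by simp
  map_mul' x y := by simp; ring

theorem N_def (x : L) : Q.N x = Q.re x ^ 2 - a * Q.im x ^ 2 := rfl
theorem N_mk (p q : F) : Q.N (Q.mk p q) = p ^ 2 - a * q ^ 2 := by rw [N_def]; simp

theorem alg_N (x : L) : algebraMap F L (Q.N x) = x * Q.τ x := by
  apply Q.hext
  · rw [re_alg, re_mul, re_τ, im_τ, N_def]; ring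
  · rw [im_alg, im_mul, re_τ, im_τ]; ring

theorem N_alg (x : F) : Q.N (algebraMap F L x) = x ^ 2 := by simp [N_def]

theorem N_ne {x : L} (hx : x ≠ 0) : Q.N x ≠ 0 := by
  intro h
  have := Q.alg_N x
  rw [h, map_zero] at this
  have h2 : Q.τ x ≠ 0 := by simpa using hx
  exact mul_ne_zero hx h2 this.symm

theorem h90 {x : L} (hx : Q.N x = 1) : ∃ y : L, y ≠ 0 ∧ x * Q.τ y = y := by
  have h1 := Q.alg_N x
  rw [hx, map_one] at h1
  by_cases h : 1 + x = 0
  · refine ⟨Q.s, Q.s_ne, ?_⟩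
    have : x = -1 := by linear_combination h
    rw [this, τ_s]; ring
  · refine ⟨1 + x, h, ?_⟩
    rw [map_add, map_one]; linear_combination (-1) * h1

theorem sq_of (Q : Quad F L a) {b : F} (h : IsSquare (algebraMap F L b)) : IsSquare b ∨ IsSquare (b * a) := by
  obtain ⟨y, hy⟩ := h
  have h1 : b = Q.re y * Q.re y + a * Q.im y * Q.im y := by
    have := congrArg Q.re hy
    simpa using this
  have h2 : Q.re y * Q.im y + Q.im y * Q.re y = 0 := by
    have := congrArg Q.im hy
    simpa using this.symm
  have h3 : Q.re y * Q.im y = 0 := by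
    have : 2 * (Q.re y * Q.im y) = 0 := by linear_combination h2
    exact (mul_eq_zero.mp this).resolve_left Q.two
  rcases mul_eq_zero.mp h3 with h | h
  · right; exact ⟨a * Q.im y, by rw [h1, h]; ring⟩
  · left; exact ⟨Q.re y, by rw [h1, h]; ring⟩

/-- embedding of unit groups -/
def iU : Fˣ →* Lˣ := Units.map (algebraMap F L).toMonoidHom
/-- norm on unit groups -/
def NU : Lˣ →* Fˣ := Units.map Q.N

theorem NU_iU (b : Fˣ) : Q.NU (iU b) = b ^ 2 := by
  ext; exact Q.N_alg _

end Quad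

universe u in
/-- existence of a quadratic extension -/
theorem exists_quad (F : Type u) [Field F] (h2 : (2 : F) ≠ 0) (a : F) (ha : ¬ IsSquare a) :
    ∃ (L : Type u) (_ : Field L) (_ : Algebra F L) (_ : Module.Finite F L), Nonempty (Quad F L a) := by
  have : Fact (∀ r : F, r ^ 2 ≠ a + 0 * r) := ⟨fun r hr => ha ⟨r, by rw [← sq, hr]; ring⟩⟩
  refine ⟨QuadraticAlgebra F a 0, inferInstance, inferInstance, inferInstance, ⟨?_⟩⟩
  exact
    { s := ⟨0, 1⟩
      re := fun x => x.re
      im := fun x => x.im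
      ss := by ext <;> simp
      eta := fun x => by ext <;> simp
      nsq := ha
      two := h2 }

end HM

open IsDedekindDomain NumberField
namespace HM

theorem mem_sqs_units {F : Type*} [Field F] {x : Fˣ} : x ∈ sqs Fˣ ↔ IsSquare (x : F) := by
  constructor
  · rintro ⟨y, rfl⟩
    exact ⟨y, by simp [sq]⟩
  · rintro ⟨y, hy⟩
    have hy0 : y ≠ 0 := by
      rintro rfl
      exact x.ne_zero (by rw [hy, zero_mul])
    exact ⟨Units.mk0 y hy0, by ext; simp [sq, hy]⟩

namespace Quad
variable {F L : Type*} [Field F] [Field L] [Algebra F L] {a : F} (Q : Quad F L a)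

theorem rel_two (Q : Quad F L a) :
    (sqs Fˣ).relIndex ((sqs Lˣ).comap (iU : Fˣ →* Lˣ)) = 2 := by
  rw [Subgroup.relIndex_eq_two_iff_exists_notMem_and]
  refine ⟨Units.mk0 a Q.a_ne, ?_, ?_, ?_⟩
  · rw [Subgroup.mem_comap, mem_sqs_units]
    exact ⟨Q.s, Q.ss.symm⟩
  · rw [mem_sqs_units]; exact Q.nsq
  · intro b hb
    rw [Subgroup.mem_comap, mem_sqs_units] at hb
    rw [mem_sqs_units, mem_sqs_units]
    exact (Q.sq_of hb).symm

theorem index_eq : Q.NU.range.index * (sqs Lˣ).index * 2 = (sqs Fˣ).index ^ 2 := by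
  have hQI := QI (iU : Fˣ →* Lˣ) Q.NU ?_ ?_ ?_
  · rwa [Q.rel_two] at hQI
  · exact Q.NU_iU
  · intro x hx
    have hx1 : Q.N x = 1 := congrArg Units.val hx
    obtain ⟨y, hy, h⟩ := Q.h90 hx1
    refine ⟨Units.mk0 y hy, (Q.NU (Units.mk0 y hy))⁻¹, ?_⟩
    rw [map_inv, eq_mul_inv_iff_mul_eq]
    ext
    have e := Q.alg_N y
    change (x : L) * algebraMap F L (Q.N y) = y ^ 2
    rw [e, mul_left_comm, h, sq]
  · intro y
    have hτ : Q.τ y ≠ 0 := by simp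
    refine ⟨y * (Units.mk0 _ hτ)⁻¹, Q.NU y, ?_, ?_⟩
    · rw [map_mul, map_inv, mul_inv_eq_one]
      ext
      change Q.N y = Q.N (Q.τ y)
      rw [N_def, N_def, re_τ, im_τ, neg_sq]
    · ext
      have e := Q.alg_N (y : L)
      change (y : L) ^ 2 = y * ((Units.mk0 _ hτ)⁻¹ : Lˣ) * algebraMap F L (Q.N y)
      rw [e, Units.val_inv_eq_inv_val, Units.val_mk0]
      field_simp

end Quad

namespace LF
variable {F : Type*} [NormedField F]

theorem le_one_of_sq {x : ℝ} (h0 : 0 ≤ x) (h : x ^ 2 ≤ 1) : x ≤ 1 := by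
  nlinarith

/-- the order `O + O √a` -/
def Lam (h : LF F) {a : F} (ha : ‖a‖ ≤ 1) {L : Type*} [Field L] [Algebra F L] (Q : Quad F L a) :
    Subring L where
  carrier := {x | Q.re x ∈ h.O ∧ Q.im x ∈ h.O}
  one_mem' := by
    rw [Set.mem_ofPred_eq, Q.re_one, Q.im_one]; exact ⟨h.O.one_mem, h.O.zero_mem⟩
  zero_mem' := by
    rw [Set.mem_ofPred_eq, Q.re_zero, Q.im_zero]; exact ⟨h.O.zero_mem, h.O.zero_mem⟩
  mul_mem' := by
    rintro x y ⟨h1, h2⟩ ⟨h3, h4⟩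
    rw [Set.mem_ofPred_eq, Q.re_mul, Q.im_mul]
    exact ⟨h.O.add_mem (h.O.mul_mem h1 h3) (h.O.mul_mem (h.O.mul_mem ha h2) h4),
      h.O.add_mem (h.O.mul_mem h1 h4) (h.O.mul_mem h2 h3)⟩
  add_mem' := by
    rintro x y ⟨h1, h2⟩ ⟨h3, h4⟩
    rw [Set.mem_ofPred_eq, Q.re_add, Q.im_add]
    exact ⟨h.O.add_mem h1 h3, h.O.add_mem h2 h4⟩
  neg_mem' := by
    rintro x ⟨h1, h2⟩
    rw [Set.mem_ofPred_eq, Q.re_neg, Q.im_neg]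
    exact ⟨h.O.neg_mem h1, h.O.neg_mem h2⟩

section
variable (h : LF F) {a : F} (ha : ‖a‖ ≤ 1) {L : Type*} [Field L] [Algebra F L] (Q : Quad F L a)

theorem mem_Lam {x : L} : x ∈ h.Lam ha Q ↔ ‖Q.re x‖ ≤ 1 ∧ ‖Q.im x‖ ≤ 1 := Iff.rfl

theorem alg_mem {x : F} (hx : ‖x‖ ≤ 1) : algebraMap F L x ∈ h.Lam ha Q := by
  rw [mem_Lam, Q.re_alg, Q.im_alg]; exact ⟨hx, by simp⟩

theorem mul_alg {x : L} {c : F} : Q.re (algebraMap F L c * x) = c * Q.re x ∧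
    Q.im (algebraMap F L c * x) = c * Q.im x := by
  constructor <;> simp

/-- inclusion of integers -/
def toLam : h.O →+* h.Lam ha Q where
  toFun x := ⟨algebraMap F L x, h.alg_mem ha Q x.2⟩
  map_one' := by ext; simp
  map_zero' := by ext; simp
  map_mul' x y := by ext; simp
  map_add' x y := by ext; simp

theorem norm_Lam {x : L} (hx : x ∈ h.Lam ha Q) : ‖Q.N x‖ ≤ 1 := by
  rw [Q.N_def]
  exact h.O.sub_mem (h.O.pow_mem hx.1 2) (h.O.mul_mem ha (h.O.pow_mem hx.2 2))

theorem τ_Lam {x : L} (hx : x ∈ h.Lam ha Q) : Q.τ x ∈ h.Lam ha Q := by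
  rw [mem_Lam, Q.re_τ, Q.im_τ, norm_neg]; exact hx

theorem Lam_surj (n : h.O) (d : h.Lam ha Q) (hd : d ∣ h.toLam ha Q n) :
    ∃ f : (h.O ⧸ Ideal.span {n}) × (h.O ⧸ Ideal.span {n}) → h.Lam ha Q ⧸ Ideal.span {d},
      Function.Surjective f := by
  have key : ∀ x y : h.O, ∃ z : h.Lam ha Q, (z : L) = Q.mk x y := fun x y =>
    ⟨⟨Q.mk x y, by rw [mem_Lam, Q.re_mk, Q.im_mk]; exact ⟨x.2, y.2⟩⟩, rfl⟩
  choose m hm using key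
  refine ⟨fun p => Ideal.Quotient.mk _ (m p.1.out p.2.out), ?_⟩
  intro z
  obtain ⟨z, rfl⟩ := Ideal.Quotient.mk_surjective z
  refine ⟨(Ideal.Quotient.mk _ ⟨Q.re z, z.2.1⟩, Ideal.Quotient.mk _ ⟨Q.im z, z.2.2⟩), ?_⟩
  dsimp only
  rw [Ideal.Quotient.eq, Ideal.mem_span_singleton]
  refine hd.trans ?_
  have e1 : ∀ q : h.O, n ∣ (Ideal.Quotient.mk (Ideal.span {n}) q).out - q := by
    intro q
    rw [← Ideal.mem_span_singleton, ← Ideal.Quotient.eq]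
    exact Quotient.out_eq _
  obtain ⟨c, hc⟩ := e1 ⟨Q.re z, z.2.1⟩
  obtain ⟨e, he⟩ := e1 ⟨Q.im z, z.2.2⟩
  refine ⟨m c e, ?_⟩
  apply Subtype.ext
  have hc' := congrArg Subtype.val hc
  have he' := congrArg Subtype.val he
  push_cast at hc' he' ⊢
  rw [hm, hm]
  change _ = algebraMap F L n * _
  apply Q.hext
  · rw [sub_eq_add_neg, Q.re_add, Q.re_neg, Q.re_mk, (mul_alg Q).1, Q.re_mk]
    linear_combination hc'
  · rw [sub_eq_add_neg, Q.im_add, Q.im_neg, Q.im_mk, (mul_alg Q).2, Q.im_mk]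
    linear_combination he'

theorem Lam_fin (d : h.Lam ha Q) (hd : d ≠ 0) : Finite (h.Lam ha Q ⧸ Ideal.span {d}) := by
  have hd' : (d : L) ≠ 0 := fun e => hd (Subtype.ext e)
  let n : h.O := ⟨Q.N d, h.norm_Lam ha Q d.2⟩
  have hn : n ≠ 0 := fun e => Q.N_ne hd' (congrArg Subtype.val e)
  obtain ⟨f, hf⟩ := h.Lam_surj ha Q n d ⟨⟨Q.τ d, h.τ_Lam ha Q d.2⟩, by
    apply Subtype.ext; exact Q.alg_N d⟩
  have := h.O_fin n hn
  exact Finite.of_surjective f hf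

theorem Lam_card : Nat.card (h.Lam ha Q ⧸ Ideal.span {(2 : h.Lam ha Q)}) ≤ h.q ^ 2 := by
  obtain ⟨f, hf⟩ := h.Lam_surj ha Q 2 2 (by rw [map_ofNat])
  have := h.O_fin 2 h.two_ne_O
  refine (Nat.card_le_card_of_surjective f hf).trans ?_
  rw [Nat.card_prod, sq]; rfl

theorem Lam_unit (x : h.Lam ha Q) (hx : ‖Q.N x‖ = 1) : IsUnit x := by
  have h0 : Q.N (x : L) ≠ 0 := by
    intro e; rw [e, norm_zero] at hx; exact zero_ne_one hx
  refine IsUnit.of_mul_eq_one ⟨algebraMap F L (Q.N x)⁻¹ * Q.τ x,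
    (h.Lam ha Q).mul_mem (h.alg_mem ha Q (by rw [norm_inv, hx, inv_one])) (h.τ_Lam ha Q x.2)⟩ ?_
  apply Subtype.ext
  change (x : L) * (algebraMap F L (Q.N (x : L))⁻¹ * Q.τ x) = 1
  rw [mul_left_comm, ← Q.alg_N, map_inv₀]
  exact inv_mul_cancel₀ (by simpa using h0)

theorem Lam_h1 [CompleteSpace F] (p : F) (hp0 : p ≠ 0) (hp : ‖p‖ < 1) (l : L)
    (hl : l ∈ h.Lam ha Q) : ∃ μ : L, μ ∈ h.Lam ha Q ∧ μ + algebraMap F L p * μ ^ 2 = l := by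
  obtain ⟨hα, hβ⟩ := hl
  set α := Q.re l with hα'
  set β := Q.im l with hβ'
  have hpO : p ∈ h.O := hp.le
  have h2O : (2 : F) ∈ h.O := h.norm_two
  set M := α ^ 2 - a * β ^ 2 with hM
  have hMO : M ∈ h.O := h.O.sub_mem (h.O.pow_mem hα 2) (h.O.mul_mem ha (h.O.pow_mem hβ 2))
  obtain ⟨ν, hν, e1⟩ := h.O_h1 (2 * p) (mul_ne_zero h.two hp0) (by
    rw [norm_mul]; exact (mul_le_of_le_one_left (norm_nonneg _) h.norm_two).trans_lt hp)
    (α + 2 * p * M) (h.O.add_mem hα (h.O.mul_mem (h.O.mul_mem h2O hpO) hMO))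
  obtain ⟨μ, hμ, e2⟩ := h.O_h1 p hp0 hp (α + p * (M - ν ^ 2))
    (h.O.add_mem hα (h.O.mul_mem hpO (h.O.sub_mem hMO (h.O.pow_mem hν 2))))
  set r := 1 + p * (2 * μ) with hr
  have hr1 : ‖r‖ = 1 := by
    apply h.norm_one_add
    rw [norm_mul]
    exact (mul_le_of_le_one_right (norm_nonneg _) (h.O.mul_mem h2O hμ)).trans_lt hp
  have hr0 : r ≠ 0 := by
    intro e; rw [e, norm_zero] at hr1; exact zero_ne_one hr1
  refine ⟨Q.mk μ (β / r), ?_, ?_⟩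
  · rw [mem_Lam, Q.re_mk, Q.im_mk, norm_div, hr1, div_one]
    exact ⟨hμ, hβ⟩
  · have e3 : r ^ 2 * (M - ν ^ 2) + a * β ^ 2 = 0 := by
      have : r ^ 2 = 1 + 2 * p * (α + ν) := by
        rw [hr]; linear_combination 4 * p * e2 - 2 * p * e1
      rw [this]
      have h5 : a * β ^ 2 = α ^ 2 - M := by rw [hM]; ring
      rw [h5]
      linear_combination -(α + ν) * e1
    have e4 : M - ν ^ 2 + a * (β / r) ^ 2 = 0 := by
      field_simp
      linear_combination e3
    apply Q.hext
    · rw [Q.re_add, (mul_alg Q).1, sq, Q.re_mul, Q.re_mk, Q.im_mk, ← hα']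
      linear_combination e2 + p * e4
    · rw [Q.im_add, (mul_alg Q).2, sq, Q.im_mul, Q.re_mk, Q.im_mk, ← hβ']
      field_simp
      rw [hr]; ring

theorem Lam_bound [CompleteSpace F] (z : L) (hz : ‖Q.N z‖ ≤ 1) :
    algebraMap F L (2 * a) * z ∈ h.Lam ha Q := by
  set r := Q.re z
  set t := Q.im z
  have hN : Q.N z = r ^ 2 - a * t ^ 2 := rfl
  have key : ‖4 * (a * t ^ 2)‖ ≤ ‖Q.N z‖ := by
    by_contra hlt
    push Not at hlt
    have ht : a * t ^ 2 ≠ 0 := by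
      intro e; rw [e, mul_zero, norm_zero] at hlt
      exact absurd hlt (not_lt.mpr (norm_nonneg _))
    have ht0 : t ≠ 0 := by
      rintro e; rw [e] at ht; simp at ht
    have := h.sq_crit (a * t ^ 2) r ht (by
      have e : a * t ^ 2 - r ^ 2 = - Q.N z := by rw [hN]; ring
      rw [e, norm_neg]; exact hlt)
    obtain ⟨w, hw⟩ := this
    apply Q.nsq
    refine ⟨w / t, ?_⟩
    field_simp
    linear_combination hw
  have k1 : ‖4 * (a * t ^ 2)‖ ≤ 1 := key.trans hz
  have k2 : ‖4 * r ^ 2‖ ≤ 1 := by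
    have e : 4 * r ^ 2 = 4 * Q.N z + 4 * (a * t ^ 2) := by rw [hN]; ring
    rw [e]
    exact h.O.add_mem (h.O.mul_mem h.norm_four hz) k1
  rw [mem_Lam, (mul_alg Q).1, (mul_alg Q).2]
  constructor
  · apply le_one_of_sq (norm_nonneg _)
    rw [← norm_pow]
    have e : (2 * a * r) ^ 2 = a * a * (4 * r ^ 2) := by ring
    change ‖(2 * a * r) ^ 2‖ ≤ 1
    rw [e]
    exact h.O.mul_mem (h.O.mul_mem ha ha) k2
  · apply le_one_of_sq (norm_nonneg _)
    rw [← norm_pow]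
    have e : (2 * a * t) ^ 2 = a * (4 * (a * t ^ 2)) := by ring
    change ‖(2 * a * t) ^ 2‖ ≤ 1
    rw [e]
    exact h.O.mul_mem ha k1

theorem quad_sq_index [CompleteSpace F] :
    (sqs Lˣ).index = 4 * Nat.card (h.Lam ha Q ⧸ Ideal.span {(2 : h.Lam ha Q)}) := by
  obtain ⟨ϖ, h0, hlt, hk⟩ := h.unif
  have hpos : 0 < ‖ϖ‖ := norm_pos_iff.mpr h0
  have hinj := (algebraMap F L).injective
  have hi0 : ∀ x : F, x ≠ 0 → algebraMap F L x ≠ 0 := fun x hx => by simpa using hx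
  refine LOC (Λ := h.Lam ha Q) (L := L) Subtype.val_injective ?_
    (h.toLam ha Q ⟨ϖ, hlt.le⟩) ?_ ?_ ?_ ?_ (h.Lam_fin ha Q)
    (h.toLam ha Q ⟨2 * a * ϖ, h.O.mul_mem (h.O.mul_mem h.norm_two ha) hlt.le⟩) ?_ ?_
  · have := hi0 2 h.two
    rwa [map_ofNat] at this
  · intro e
    exact hi0 _ h0 (congrArg Subtype.val e)
  · rintro ⟨l, hl⟩
    obtain ⟨μ, hμ, e⟩ := h.Lam_h1 ha Q ϖ h0 hlt l hl
    exact ⟨⟨μ, hμ⟩, Subtype.ext e⟩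
  · rintro ⟨l, hl⟩
    apply h.Lam_unit
    have e : Q.N (((1 + h.toLam ha Q ⟨ϖ, hlt.le⟩ * ⟨l, hl⟩ : h.Lam ha Q)) : L) =
        1 + ϖ * (2 * Q.re l + ϖ * Q.N l) := by
      change Q.N (1 + algebraMap F L ϖ * l) = _
      rw [Q.N_def, Q.re_add, Q.im_add, (mul_alg Q).1, (mul_alg Q).2, Q.re_one, Q.im_one, Q.N_def]
      ring
    rw [e]
    apply h.norm_one_add
    rw [norm_mul]
    exact (mul_le_of_le_one_right (norm_nonneg _) (h.O.add_mem (h.O.mul_mem h.norm_two hl.1)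
      (h.O.mul_mem hlt.le (h.norm_Lam ha Q hl)))).trans_lt hlt
  · rintro hu
    obtain ⟨y, hy⟩ := hu.exists_right_inv
    have e : algebraMap F L ϖ * (y : L) = 1 := congrArg Subtype.val hy
    have e2 := congrArg Q.re e
    rw [(mul_alg Q).1, Q.re_one] at e2
    have h2 := congrArg norm e2
    rw [norm_mul, norm_one] at h2
    have h3 : ‖ϖ‖ * ‖Q.re y‖ ≤ ‖ϖ‖ := mul_le_of_le_one_right (norm_nonneg _) y.2.1
    linarith
  · intro e
    exact hi0 _ (mul_ne_zero (mul_ne_zero h.two Q.a_ne) h0) (congrArg Subtype.val e)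
  · intro x hx
    obtain ⟨k, hk⟩ := hk _ (Q.N_ne hx)
    have hz0 : x * algebraMap F L ϖ ^ (-(k / 2)) ≠ 0 := mul_ne_zero hx (zpow_ne_zero _ (hi0 _ h0))
    set z := x * algebraMap F L ϖ ^ (-(k / 2)) with hz
    have hNz : ‖Q.N z‖ = ‖ϖ‖ ^ (k % 2) := by
      rw [hz, map_mul, ← map_zpow₀, Q.N_alg, norm_mul, norm_pow, norm_zpow, hk, ← zpow_natCast,
        ← zpow_mul, ← zpow_add₀ hpos.ne']
      congr 1
      push_cast
      have := Int.emod_add_mul_ediv k 2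
      linarith
    have hN1 : ‖Q.N z‖ ≤ 1 ∧ ‖ϖ‖ ≤ ‖Q.N z‖ := by
      rcases Int.emod_two_eq_zero_or_one k with e | e <;> rw [hNz, e]
      · rw [zpow_zero]; exact ⟨le_rfl, hlt.le⟩
      · rw [zpow_one]; exact ⟨hlt.le, le_rfl⟩
    have hb := h.Lam_bound ha Q z hN1.1
    refine ⟨-(k / 2), ⟨⟨algebraMap F L (2 * a * ϖ) * z, ?_⟩, rfl⟩,
      ⟨⟨algebraMap F L (2 * a * ϖ) * z⁻¹, ?_⟩, rfl⟩⟩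
    · rw [mul_comm _ ϖ, map_mul, mul_assoc]
      exact (h.Lam ha Q).mul_mem (h.alg_mem ha Q hlt.le) hb
    · have hN0 := Q.N_ne hz0
      have e : algebraMap F L (2 * a * ϖ) * z⁻¹ =
          algebraMap F L (ϖ / Q.N z) * Q.τ (algebraMap F L (2 * a) * z) := by
        rw [map_mul Q.τ, Q.τ_alg, map_div₀, Q.alg_N, map_mul _ (2 * a)]
        have : Q.τ z ≠ 0 := by simpa using hz0
        field_simp
      rw [e]
      refine (h.Lam ha Q).mul_mem (h.alg_mem ha Q ?_) (h.τ_Lam ha Q hb)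
      rw [norm_div]
      exact div_le_one_of_le₀ hN1.2 (norm_nonneg _)

end

/-- The norm group of a quadratic extension of a local field is proper. -/
theorem norm_proper [CompleteSpace F] (h : LF F) (a : F) (ha : ¬ IsSquare a) :
    ∃ b : F, b ≠ 0 ∧ ∀ x y : F, x ^ 2 - a * y ^ 2 ≠ b := by
  -- first scale to an integral element
  obtain ⟨ϖ, h0, hlt, hk⟩ := h.unif
  have hpos : 0 < ‖ϖ‖ := norm_pos_iff.mpr h0
  obtain ⟨n, hn⟩ : ∃ n : ℕ, ‖a * (ϖ ^ n) ^ 2‖ ≤ 1 := by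
    obtain ⟨n, hn⟩ := exists_pow_lt_of_lt_one (y := ‖ϖ‖) (x := (‖a‖ + 1)⁻¹) (by positivity) hlt
    refine ⟨n, ?_⟩
    have h1 : ‖ϖ‖ ^ n ≤ 1 := pow_le_one₀ hpos.le hlt.le
    have h2 : ‖a‖ * ‖ϖ‖ ^ n ≤ 1 := by
      have h3 : ‖a‖ * ‖ϖ‖ ^ n ≤ ‖a‖ * (‖a‖ + 1)⁻¹ := by gcongr
      refine h3.trans ?_
      rw [← div_eq_mul_inv]
      exact div_le_one_of_le₀ (by linarith) (by positivity)
    rw [norm_mul, norm_pow, norm_pow, sq, ← mul_assoc]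
    exact mul_le_one₀ h2 (by positivity) h1
  set a' := a * (ϖ ^ n) ^ 2 with ha'
  have hϖ : ϖ ^ n ≠ 0 := pow_ne_zero _ h0
  have hns : ¬ IsSquare a' := by
    rintro ⟨w, hw⟩
    apply ha
    refine ⟨w / ϖ ^ n, ?_⟩
    field_simp
    rw [ha'] at hw
    linear_combination hw
  obtain ⟨L, _, _, _, ⟨Q⟩⟩ := exists_quad F h.two a' hns
  have e1 := Q.index_eq
  rw [h.quad_sq_index hn Q, h.sq_index] at e1
  have e2 := h.Lam_card hn Q
  have hne : Q.NU.range ≠ ⊤ := by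
    intro e
    rw [e, Subgroup.index_top] at e1
    have := h.q_pos
    nlinarith
  have : ∃ b, b ∉ Q.NU.range := by
    by_contra hcon
    push Not at hcon
    exact hne (Subgroup.eq_top_iff' _ |>.mpr hcon)
  obtain ⟨b, hb⟩ := this
  refine ⟨b, b.ne_zero, fun x y hxy => hb ?_⟩
  have hN : Q.N (Q.mk x (y / ϖ ^ n)) = b := by
    rw [Q.N_mk, ← hxy, ha']
    field_simp
  have hne0 : Q.mk x (y / ϖ ^ n) ≠ 0 := by
    intro e
    rw [e] at hN
    apply b.ne_zero
    rw [← hN, Q.N_def]; simp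
  exact ⟨Units.mk0 _ hne0, by ext; exact hN⟩

end LF
end HM

open IsDedekindDomain NumberField
namespace HM

section
variable {K : Type*} [Field K] [NumberField K] (v : HeightOneSpectrum (𝓞 K))

/-- the normalized absolute value -/
noncomputable abbrev av (K : Type*) [Field K] [NumberField K] (v : HeightOneSpectrum (𝓞 K)) :
    AbsoluteValue K ℝ := NumberField.HeightOneSpectrum.adicAbv K v

/-- embedding in completion -/
noncomputable abbrev ι (v : HeightOneSpectrum (𝓞 K)) : K →+* v.adicCompletion K :=
  algebraMap K (v.adicCompletion K)

theorem norm_ι (x : K) : ‖ι v x‖ = av K v x := FinitePlace.norm_embedding v x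

theorem valued_ι (x : K) : (Valued.v (ι v x) : WithZero (Multiplicative ℤ)) = v.valuation K x :=
  HeightOneSpectrum.valuedAdicCompletion_eq_valuation' (R := 𝓞 K) (K := K) v x

theorem toNN_strict : StrictMono (WithZeroMulInt.toNNReal
    (NumberField.HeightOneSpectrum.absNorm_ne_zero v)) :=
  WithZeroMulInt.toNNReal_strictMono (NumberField.HeightOneSpectrum.one_lt_absNorm_nnreal v)

theorem av_le {x y : K} : av K v x ≤ av K v y ↔ v.valuation K x ≤ v.valuation K y := by
  rw [NumberField.HeightOneSpectrum.adicAbv_def, NumberField.HeightOneSpectrum.adicAbv_def,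
    NNReal.coe_le_coe, (toNN_strict v).le_iff_le]

theorem av_lt {x y : K} : av K v x < av K v y ↔ v.valuation K x < v.valuation K y := by
  rw [NumberField.HeightOneSpectrum.adicAbv_def, NumberField.HeightOneSpectrum.adicAbv_def,
    NNReal.coe_lt_coe, (toNN_strict v).lt_iff_lt]

theorem av_eq {x y : K} : av K v x = av K v y ↔ v.valuation K x = v.valuation K y := by
  rw [le_antisymm_iff, le_antisymm_iff, av_le, av_le]

theorem av_le_one {x : K} : av K v x ≤ 1 ↔ v.valuation K x ≤ 1 := by
  rw [← map_one (av K v), av_le, map_one]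
theorem av_lt_one {x : K} : av K v x < 1 ↔ v.valuation K x < 1 := by
  rw [← map_one (av K v), av_lt, map_one]
theorem av_eq_one {x : K} : av K v x = 1 ↔ v.valuation K x = 1 := by
  rw [← map_one (av K v), av_eq, map_one]

theorem nle {x y : v.adicCompletion K} : ‖x‖ ≤ ‖y‖ ↔
    (Valued.v x : WithZero (Multiplicative ℤ)) ≤ Valued.v y := by
  rw [FinitePlace.norm_def, FinitePlace.norm_def, NNReal.coe_le_coe, (toNN_strict v).le_iff_le]

theorem dense (z : v.adicCompletion K) {ε : ℝ} (hε : 0 < ε) : ∃ x : K, ‖z - ι v x‖ < ε := by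
  obtain ⟨x, hx⟩ := Metric.denseRange_iff.mp
    (HeightOneSpectrum.denseRange_algebraMap (R := 𝓞 K) (K := K) v) z ε hε
  exact ⟨x, by rwa [dist_eq_norm] at hx⟩

theorem av_int (x : 𝓞 K) (n : ℕ) :
    v.valuation K (algebraMap (𝓞 K) K x) ≤ WithZero.exp (-(n : ℤ)) ↔ x ∈ v.asIdeal ^ n := by
  rw [v.valuation_of_algebraMap, v.intValuation_le_pow_iff_mem]

theorem ultra_v (x y : v.adicCompletion K) : ‖x + y‖ ≤ max ‖x‖ ‖y‖ := by
  rcases le_total ‖x‖ ‖y‖ with h | h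
  · rw [max_eq_right h]
    rw [nle] at h ⊢
    exact (Valuation.map_add _ _ _).trans (max_le h le_rfl)
  · rw [max_eq_left h]
    rw [nle] at h ⊢
    exact (Valuation.map_add _ _ _).trans (max_le le_rfl h)

theorem approx_int (z : v.adicCompletion K) (hz : ‖z‖ ≤ 1) (d : v.adicCompletion K) (hd : d ≠ 0) :
    ∃ x : 𝓞 K, ‖z - ι v (algebraMap (𝓞 K) K x)‖ ≤ ‖d‖ := by
  obtain ⟨y, hy⟩ := dense v z (ε := min ‖d‖ 1) (lt_min (norm_pos_iff.mpr hd) one_pos)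
  have hy1 : ‖ι v y‖ ≤ 1 := by
    have := ultra_v v (z) (-(z - ι v y))
    rw [norm_neg] at this
    have e : z + -(z - ι v y) = ι v y := by ring
    rw [e] at this
    exact this.trans (max_le hz (hy.le.trans (min_le_right _ _)))
  rw [norm_ι, av_le_one] at hy1
  have hvd : (Valued.v d : WithZero (Multiplicative ℤ)) ≠ 0 := by simpa using hd
  obtain ⟨x, hx⟩ := v.exists_valuation_sub_lt_of_integer hy1 (Units.mk0 _ hvd)
  refine ⟨x, ?_⟩
  have e : z - ι v (algebraMap (𝓞 K) K x) =
      (z - ι v y) + (-(ι v (algebraMap (𝓞 K) K x - y))) := by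
    rw [map_sub]; ring
  rw [e]
  refine (ultra_v v _ _).trans (max_le (hy.le.trans (min_le_left _ _)) ?_)
  rw [norm_neg, nle, valued_ι]
  exact hx.le

theorem fin_ideal (n : ℕ) : Finite (𝓞 K ⧸ v.asIdeal ^ n) :=
  Ideal.finiteQuotientOfFreeOfNeBot _ (pow_ne_zero _ v.ne_bot)

theorem lf : LF (v.adicCompletion K) where
  ultra := ultra_v v
  two := by
    have : ι v 2 ≠ 0 := by
      rw [Ne, map_eq_zero]; exact two_ne_zero
    rwa [map_ofNat] at this
  unif := by
    obtain ⟨π, hπ⟩ := v.valuation_exists_uniformizer K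
    have hπ' : (Valued.v (ι v π) : WithZero (Multiplicative ℤ)) = WithZero.exp (-1) := by
      rw [valued_ι, hπ]
    refine ⟨ι v π, ?_, ?_, ?_⟩
    · rw [Ne, map_eq_zero]
      rintro rfl
      rw [map_zero] at hπ
      exact WithZero.exp_ne_zero hπ.symm
    · rw [norm_ι, av_lt_one, hπ, ← WithZero.exp_zero, WithZero.exp_lt_exp]
      norm_num
    · intro x hx
      have hvx : (Valued.v x : WithZero (Multiplicative ℤ)) ≠ 0 := by simpa using hx
      refine ⟨-WithZero.log (Valued.v x), ?_⟩
      rw [FinitePlace.norm_def, FinitePlace.norm_def, hπ', ← NNReal.coe_zpow, ← map_zpow₀,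
        ← WithZero.exp_zsmul]
      congr 2
      rw [smul_eq_mul, mul_neg_one, neg_neg, WithZero.exp_log hvx]
  fin := by
    intro d hd
    have hvd : (Valued.v d : WithZero (Multiplicative ℤ)) ≠ 0 := by simpa using hd
    obtain ⟨n, hn⟩ : ∃ n : ℕ, WithZero.exp (-(n : ℤ)) ≤ (Valued.v d : WithZero (Multiplicative ℤ)) := by
      refine ⟨(-WithZero.log (Valued.v d)).toNat, ?_⟩
      rw [← WithZero.exp_log hvd, WithZero.exp_le_exp, WithZero.log_exp]
      have := Int.self_le_toNat (-WithZero.log (Valued.v d))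
      linarith
    have := fin_ideal v n
    refine ⟨Set.range fun q : 𝓞 K ⧸ v.asIdeal ^ n => ι v (algebraMap (𝓞 K) K q.out),
      Set.finite_range _, ?_⟩
    intro x hx
    obtain ⟨y, hy⟩ := approx_int v x hx d hd
    refine ⟨_, ⟨Ideal.Quotient.mk _ y, rfl⟩, ?_⟩
    set r := (Ideal.Quotient.mk (v.asIdeal ^ n) y).out with hr
    have hyr : y - r ∈ v.asIdeal ^ n := by
      rw [← Ideal.Quotient.eq]; exact (Quotient.out_eq _).symm
    have e : x - ι v (algebraMap (𝓞 K) K r) = (x - ι v (algebraMap (𝓞 K) K y)) +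
        ι v (algebraMap (𝓞 K) K (y - r)) := by
      rw [map_sub, map_sub]; ring
    change ‖x - ι v (algebraMap (𝓞 K) K r)‖ ≤ _
    rw [e]
    refine (ultra_v v _ _).trans (max_le hy ?_)
    rw [nle, valued_ι]
    exact ((av_int v _ _).mpr hyr).trans hn

theorem q_eq : ∃ e : ℕ, v.valuation K 2 = WithZero.exp (-(e : ℤ)) ∧
    (lf v).q = (Ideal.absNorm v.asIdeal) ^ e := by
  have h2 : v.valuation K 2 ≠ 0 := by rw [Valuation.ne_zero_iff]; exact two_ne_zero
  have h2l : v.valuation K 2 ≤ 1 := by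
    rw [← map_ofNat (algebraMap (𝓞 K) K) 2]
    exact v.valuation_le_one 2
  have hlog : WithZero.log (v.valuation K 2) ≤ 0 := by
    rw [← WithZero.exp_log h2, ← WithZero.exp_zero, WithZero.exp_le_exp] at h2l
    exact h2l
  obtain ⟨e, he⟩ := Int.eq_ofNat_of_zero_le (neg_nonneg.mpr hlog)
  have hve : v.valuation K 2 = WithZero.exp (-(e : ℤ)) := by
    rw [← he, neg_neg, WithZero.exp_log h2]
  refine ⟨e, hve, ?_⟩
  rw [← map_pow, Ideal.absNorm_apply, Submodule.cardQuot_apply]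
  let f : 𝓞 K →+* (lf v).O :=
    ((ι v).comp (algebraMap (𝓞 K) K)).codRestrict (lf v).O (by
      intro x
      change ‖ι v (algebraMap (𝓞 K) K x)‖ ≤ 1
      rw [norm_ι, av_le_one]
      exact v.valuation_le_one x)
  let g := (Ideal.Quotient.mk (Ideal.span {(2 : (lf v).O)})).comp f
  have hdvd : ∀ x : (lf v).O, x ∈ Ideal.span {(2 : (lf v).O)} ↔ ‖(x : v.adicCompletion K)‖ ≤
      ‖(2 : v.adicCompletion K)‖ := by
    intro x
    rw [Ideal.mem_span_singleton]
    constructor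
    · rintro ⟨y, rfl⟩
      change ‖(2 : v.adicCompletion K) * y‖ ≤ _
      rw [norm_mul]
      exact mul_le_of_le_one_right (norm_nonneg _) y.2
    · intro h
      exact (lf v).O_dvd (lf v).two_ne_O h
  have hg : Function.Surjective g := by
    intro z
    obtain ⟨z, rfl⟩ := Ideal.Quotient.mk_surjective z
    obtain ⟨x, hx⟩ := approx_int v z z.2 2 (lf v).two
    refine ⟨x, ?_⟩
    change Ideal.Quotient.mk _ (f x) = _
    symm
    rw [Ideal.Quotient.eq, hdvd]
    exact hx
  have hk : RingHom.ker g = v.asIdeal ^ e := by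
    ext x
    rw [RingHom.mem_ker, ← av_int, ← hve, ← av_le]
    change Ideal.Quotient.mk _ (f x) = 0 ↔ _
    rw [Ideal.Quotient.eq_zero_iff_mem, hdvd]
    change ‖ι v (algebraMap (𝓞 K) K x)‖ ≤ _ ↔ _
    rw [← map_ofNat (ι v), norm_ι, norm_ι]
  have := Nat.card_congr (RingHom.quotientKerEquivOfSurjective hg).toEquiv
  rw [hk] at this
  exact this.symm

end
end HM

open IsDedekindDomain NumberField
namespace HM

/-- finite or real places -/
abbrev Pl (K : Type*) [Field K] [NumberField K] := HeightOneSpectrum (𝓞 K) ⊕ (K →+* ℝ)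

section
variable {K : Type*} [Field K] [NumberField K]

/-- locally a square -/
def LSq : Pl K → K → Prop
  | .inl v, x => IsSquare (ι v x)
  | .inr σ, x => IsSquare (σ x)

/-- absolute value of a place -/
noncomputable def abv : Pl K → AbsoluteValue K ℝ
  | .inl v => av K v
  | .inr σ => AbsoluteValue.comp (AbsoluteValue.abs (S := ℝ)) σ.injective

theorem abv_inl (v : HeightOneSpectrum (𝓞 K)) : abv (.inl v : Pl K) = av K v := rfl
theorem abv_inr (σ : K →+* ℝ) (x : K) : abv (.inr σ : Pl K) x = |σ x| := rfl

theorem LSq_mul (p : Pl K) {x y : K} (hx : LSq p x) (hy : LSq p y) : LSq p (x * y) := by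
  cases p <;> simp only [LSq, map_mul] at * <;> exact hx.mul hy

theorem LSq_self (p : Pl K) (x : K) : LSq p (x * x) := by
  cases p <;> simp only [LSq, map_mul] <;> exact ⟨_, rfl⟩
theorem LSq_sq (p : Pl K) (x : K) : LSq p (x ^ 2) := by rw [pow_two]; exact LSq_self p x
theorem LSq_one (p : Pl K) : LSq p 1 := by simpa using LSq_self p (1 : K)
theorem LSq_zero (p : Pl K) : LSq p 0 := by simpa using LSq_self p (0 : K)

theorem LSq_of_mul_sq (p : Pl K) {x y : K} (hy : y ≠ 0) (h : LSq p (x * y ^ 2)) : LSq p x := by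
  have := LSq_mul p h (LSq_sq p y⁻¹)
  have e : x * y ^ 2 * y⁻¹ ^ 2 = x := by field_simp
  rwa [e] at this

theorem LSq_inv (p : Pl K) {x : K} (h : LSq p x) : LSq p x⁻¹ := by
  cases p <;> simp only [LSq, map_inv₀] at * <;> exact h.inv

theorem LSq_div (p : Pl K) {x y : K} (hxy : LSq p (x * y)) (h : LSq p y) (hy : y ≠ 0) : LSq p x := by
  have := LSq_mul p hxy (LSq_inv p h)
  rwa [mul_inv_cancel_right₀ hy] at this

theorem LSq_of_isSquare (p : Pl K) {x : K} (h : IsSquare x) : LSq p x := by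
  obtain ⟨y, rfl⟩ := h; exact LSq_self p y

/-- local squares -/
def Sq (p : Pl K) : Subgroup Kˣ where
  carrier := {x | LSq p (x : K)}
  mul_mem' := fun hx hy => by
    simp only [Set.mem_ofPred_eq, Units.val_mul] at *; exact LSq_mul p hx hy
  one_mem' := LSq_one p
  inv_mem' := fun hx => by
    simp only [Set.mem_ofPred_eq, Units.val_inv_eq_inv_val] at *; exact LSq_inv p hx

theorem mem_Sq (p : Pl K) {x : Kˣ} : x ∈ Sq p ↔ LSq p (x : K) := Iff.rfl

theorem sqs_le_Sq (p : Pl K) : sqs Kˣ ≤ Sq p := by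
  intro x hx
  exact LSq_of_isSquare p (mem_sqs_units.mp hx)

/-- squares are open -/
theorem open_sq (p : Pl K) (x : K) (hx : x ≠ 0) :
    ∃ ε > 0, ∀ y, abv p (y - x) < ε → y ≠ 0 ∧ LSq p (y * x) := by
  cases p with
  | inl v =>
    have h4 : (4 : K) ≠ 0 := by norm_num
    refine ⟨av K v (4 * x), (av K v).pos (mul_ne_zero h4 hx), fun y hy => ?_⟩
    rw [abv_inl] at hy
    have h41 : av K v 4 ≤ 1 := by
      rw [← norm_ι, map_ofNat]; exact (lf v).norm_four
    have hy0 : y ≠ 0 := by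
      rintro rfl
      rw [zero_sub, (av K v).map_neg, map_mul] at hy
      have := (av K v).nonneg x
      nlinarith
    refine ⟨hy0, ?_⟩
    have hne : ‖ι v (y * x)‖ = ‖ι v x‖ * ‖ι v x‖ := by
      rw [map_mul, norm_mul]
      congr 1
      apply (lf v).norm_eq_of_sub_lt
      rw [← map_sub, norm_ι, norm_ι, (av K v).map_sub]
      refine hy.trans_le ?_
      rw [map_mul]
      have := (av K v).nonneg x
      nlinarith
    apply (lf v).sq_crit _ (ι v x) (by simpa using mul_ne_zero hy0 hx)
    rw [norm_mul, hne, ← map_pow, ← map_sub, norm_ι, norm_ι]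
    have e : y * x - x ^ 2 = (y - x) * x := by ring
    have e4 : ‖(4 : v.adicCompletion K)‖ = av K v 4 := by rw [← norm_ι, map_ofNat]
    rw [e, map_mul, e4, ← mul_assoc]
    rw [map_mul] at hy
    exact mul_lt_mul_of_pos_right hy ((av K v).pos hx)
  | inr σ =>
    have hs : σ x ≠ 0 := by simpa using hx
    refine ⟨|σ x|, abs_pos.mpr hs, fun y hy => ?_⟩
    rw [abv_inr, map_sub] at hy
    have key : 0 < σ y * σ x := by
      rcases lt_or_gt_of_ne hs with h | h
      · rw [abs_of_neg h, abs_lt] at hy; nlinarith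
      · rw [abs_of_pos h, abs_lt] at hy; nlinarith
    refine ⟨?_, ?_⟩
    · rintro rfl; simp at key
    · change IsSquare (σ (y * x))
      rw [map_mul, Real.isSquare_iff]; exact key.le

theorem abv_nontrivial (p : Pl K) : (abv p).IsNontrivial := by
  cases p with
  | inl v =>
    obtain ⟨x, hx⟩ := v.valuation_exists_uniformizer K
    refine ⟨x, ?_, ?_⟩
    · rintro rfl; rw [map_zero] at hx; exact WithZero.exp_ne_zero hx.symm
    · rw [abv_inl]
      intro h
      rw [av_eq_one, hx] at h
      have : WithZero.exp (-1 : ℤ) = WithZero.exp 0 := h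
      simp at this
  | inr σ =>
    refine ⟨2, by norm_num, ?_⟩
    rw [abv_inr, map_ofNat]; norm_num

theorem abv_ineq {p q : Pl K} (hpq : p ≠ q) : ¬ (abv p).IsEquiv (abv q) := by
  have fr : ∀ (v : HeightOneSpectrum (𝓞 K)) (σ : K →+* ℝ),
      ¬ (abv (.inl v : Pl K)).IsEquiv (abv (.inr σ)) := by
    intro v σ h
    have h1 : abv (.inl v : Pl K) 2 ≤ abv (.inl v : Pl K) 1 := by
      rw [map_one, abv_inl, ← norm_ι, map_ofNat]; exact (lf v).norm_two
    have := (h 2 1).mp h1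
    rw [abv_inr, abv_inr, map_ofNat, map_one] at this
    norm_num at this
  rcases p with v | σ <;> rcases q with w | σ'
  · intro h
    apply hpq
    congr 1
    apply HeightOneSpectrum.eq_of_valuation_isEquiv_valuation (K := K)
    intro x y
    rw [← av_le, ← av_le]
    exact h x y
  · exact fr v σ'
  · exact fun h => fr w σ h.symm
  · intro h
    apply hpq
    congr 1
    ext x
    by_contra hne
    have key : ∀ σ σ' : K →+* ℝ, (abv (.inr σ : Pl K)).IsEquiv (abv (.inr σ')) →
        ∀ x, ¬ (σ x < σ' x) := by
      intro σ σ' h x hlt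
      obtain ⟨M, hM⟩ := exists_nat_gt (-σ x)
      obtain ⟨r, hr1, hr2⟩ := exists_rat_btwn (show σ x + M < σ' x + M by linarith)
      have h1 : abv (.inr σ : Pl K) (x + M) ≤ abv (.inr σ : Pl K) (r : K) := by
        rw [abv_inr, abv_inr, map_add, map_natCast, map_ratCast, abs_of_pos (by linarith)]
        exact hr1.le.trans (le_abs_self _)
      have h2 := (h _ _).mp h1
      rw [abv_inr, abv_inr, map_add, map_natCast, map_ratCast, abs_of_pos (by linarith),
        abs_of_pos (by linarith)] at h2
      linarith
    rcases lt_or_gt_of_ne hne with h1 | h1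
    · exact key _ _ h x h1
    · exact key _ _ h.symm x h1

theorem weak_approx (S : Finset (Pl K)) (z : Pl K → K) (ε : Pl K → ℝ) (hε : ∀ p ∈ S, 0 < ε p) :
    ∃ x, ∀ p ∈ S, abv p (x - z p) < ε p := by
  classical
  have hd := AbsoluteValue.denseRange_algebraMap_pi (F := K) (v := fun i : S => abv i.1)
    (fun i => abv_nontrivial _)
    (fun i j hij => abv_ineq (fun h => hij (Subtype.ext h)))
  have hopen : IsOpen (Set.pi Set.univ fun i : S =>
    Metric.ball (WithAbs.toAbs (abv i.1) (z i.1)) (ε i.1)) :=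
    isOpen_set_pi Set.finite_univ (fun i _ => Metric.isOpen_ball)
  obtain ⟨x, hx⟩ := hd.exists_mem_open hopen ⟨fun i => WithAbs.toAbs (abv i.1) (z i.1), fun i _ =>
    Metric.mem_ball_self (hε _ i.2)⟩
  refine ⟨x, fun p hp => ?_⟩
  have := hx ⟨p, hp⟩ (Set.mem_univ _)
  rw [Metric.mem_ball, dist_eq_norm, WithAbs.norm_eq_apply_ofAbs] at this
  exact this

/-- weak approximation modulo squares -/
theorem weak_sq (S : Finset (Pl K)) (z : Pl K → K) (hz : ∀ p ∈ S, z p ≠ 0) :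
    ∃ x : Kˣ, ∀ p ∈ S, LSq p (x * z p) := by
  classical
  by_cases hS : S.Nonempty
  · have : ∀ p, ∃ ε > 0, p ∈ S → ∀ y, abv p (y - z p) < ε → y ≠ 0 ∧ LSq p (y * z p) := by
      intro p
      by_cases hp : p ∈ S
      · obtain ⟨ε, h0, h⟩ := open_sq p _ (hz p hp)
        exact ⟨ε, h0, fun _ => h⟩
      · exact ⟨1, one_pos, fun h => absurd h hp⟩
    choose ε h0 h using this
    obtain ⟨x, hx⟩ := weak_approx S z ε (fun p _ => h0 p)
    obtain ⟨p, hp⟩ := hS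
    exact ⟨Units.mk0 x (h p hp x (hx p hp)).1, fun p hp => (h p hp x (hx p hp)).2⟩
  · exact ⟨1, fun p hp => absurd ⟨p, hp⟩ hS⟩

end
end HM

open IsDedekindDomain NumberField
namespace HM
section
variable {K : Type*} [Field K] [NumberField K]

theorem near_sq {F : Type*} [NormedField F] {z c : F} {ε : ℝ} (hε : 0 < ε)
    (h : ‖z - c‖ < min 1 (ε / (1 + 2 * ‖z‖))) : ‖c ^ 2 - z ^ 2‖ < ε := by
  have hz := norm_nonneg z
  have h1 := h.trans_le (min_le_left _ _)
  have h2 := h.trans_le (min_le_right _ _)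
  rw [lt_div_iff₀ (by positivity)] at h2
  have e : c ^ 2 - z ^ 2 = (z - c) * ((z - c) - 2 * z) := by ring
  rw [e, norm_mul]
  have h3 : ‖(z - c) - 2 * z‖ ≤ 1 + 2 * ‖z‖ := by
    refine (norm_sub_le _ _).trans ?_
    have : ‖2 * z‖ ≤ 2 * ‖z‖ := by rw [two_mul, two_mul]; exact norm_add_le _ _
    linarith
  exact (mul_le_mul_of_nonneg_left h3 (norm_nonneg _)).trans_lt h2

theorem approx_sqrt (p : Pl K) {a : K} (ha : LSq p a) {ε : ℝ} (hε : 0 < ε) :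
    ∃ c : K, abv p (c ^ 2 - a) < ε := by
  cases p with
  | inl v =>
    obtain ⟨z, hz⟩ := ha
    obtain ⟨c, hc⟩ := dense v z (ε := min 1 (ε / (1 + 2 * ‖z‖)))
      (lt_min one_pos (div_pos hε (by positivity)))
    refine ⟨c, ?_⟩
    rw [abv_inl, ← norm_ι, map_sub, map_pow, hz, ← pow_two]
    exact near_sq hε hc
  | inr σ =>
    obtain ⟨z, hz⟩ := ha
    have hδ : 0 < min 1 (ε / (1 + 2 * ‖z‖)) := lt_min one_pos (div_pos hε (by positivity))
    obtain ⟨r, hr1, hr2⟩ := exists_rat_btwn (show z < z + min 1 (ε / (1 + 2 * ‖z‖)) by linarith)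
    refine ⟨r, ?_⟩
    rw [abv_inr, map_sub, map_pow, hz, ← pow_two, map_ratCast, ← Real.norm_eq_abs]
    apply near_sq hε
    rw [Real.norm_eq_abs, abs_lt]
    constructor <;> linarith

theorem Sq_index_fin (v : HeightOneSpectrum (𝓞 K)) :
    (Sq (.inl v : Pl K)).index = 4 * (lf v).q := by
  set f : Kˣ →* (v.adicCompletion K)ˣ := Units.map (ι v).toMonoidHom with hf
  have h1 : Sq (.inl v : Pl K) = (sqs (v.adicCompletion K)ˣ).comap f := by
    ext x
    rw [mem_Sq, Subgroup.mem_comap, mem_sqs_units]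
    rfl
  have h2 : f.range ⊔ sqs (v.adicCompletion K)ˣ = ⊤ := by
    rw [eq_top_iff]
    intro z _
    have hz := z.ne_zero
    have h4z : (4 : v.adicCompletion K) * z ≠ 0 := mul_ne_zero (lf v).four hz
    have hle : ‖(4 : v.adicCompletion K) * z‖ ≤ ‖(z : v.adicCompletion K)‖ := by
      rw [norm_mul]
      exact mul_le_of_le_one_left (norm_nonneg _) (lf v).norm_four
    obtain ⟨x, hx⟩ := dense v (z : v.adicCompletion K) (norm_pos_iff.mpr h4z)
    have hxz := (lf v).norm_eq_of_sub_lt (hx.trans_le hle)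
    have hx0 : ι v x ≠ 0 := by
      rw [← norm_pos_iff, hxz, norm_pos_iff]; exact hz
    have hx0' : x ≠ 0 := by rintro rfl; simp at hx0
    have hs : IsSquare ((ι v x) * z) := by
      apply (lf v).sq_crit _ (z : v.adicCompletion K) (mul_ne_zero hx0 hz)
      have e : ι v x * z - (z : v.adicCompletion K) ^ 2 = - (((z : v.adicCompletion K) - ι v x) * z) := by ring
      rw [e, norm_neg, norm_mul, norm_mul, norm_mul, hxz, ← mul_assoc, ← norm_mul (4 : v.adicCompletion K)]
      exact mul_lt_mul_of_pos_right hx (norm_pos_iff.mpr hz)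
    have e : z = f (Units.mk0 x hx0')⁻¹ * (f (Units.mk0 x hx0') * z) := by
      rw [map_inv, inv_mul_cancel_left]
    rw [e]
    apply Subgroup.mul_mem_sup
    · exact ⟨_, rfl⟩
    · rw [mem_sqs_units]; exact hs
  rw [h1, Subgroup.index_comap, ← (lf v).sq_index, ← Subgroup.relIndex_top_right, ← h2,
    sup_comm, Subgroup.relIndex_sup_left]

theorem Sq_index_real (σ : K →+* ℝ) : (Sq (.inr σ : Pl K)).index = 2 := by
  rw [Subgroup.index_eq_two_iff]
  refine ⟨-1, fun b => ?_⟩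
  rw [mem_Sq, mem_Sq]
  have hb : σ (b : K) ≠ 0 := by simp
  simp only [LSq, Real.isSquare_iff, Units.val_mul, Units.val_neg, Units.val_one, mul_neg, mul_one,
    map_neg]
  rcases lt_or_gt_of_ne hb with h | h
  · left; constructor <;> linarith
  · right; constructor <;> linarith

theorem Sq_index_ne (p : Pl K) : (Sq p).index ≠ 0 := by
  cases p with
  | inl v => rw [Sq_index_fin]; have := (lf v).q_pos; positivity
  | inr σ => rw [Sq_index_real]; norm_num

/-- local norms from the algebra of square roots of `a` -/
def Nm (a : K) (p : Pl K) : Subgroup Kˣ where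
  carrier := {b | ∃ x y : K, x ^ 2 - a * y ^ 2 ≠ 0 ∧ LSq p (b * (x ^ 2 - a * y ^ 2))}
  mul_mem' := by
    rintro b b' ⟨x, y, h0, h⟩ ⟨x', y', h0', h'⟩
    refine ⟨x * x' + a * y * y', x * y' + x' * y, ?_⟩
    have e : (x * x' + a * y * y') ^ 2 - a * (x * y' + x' * y) ^ 2 =
      (x ^ 2 - a * y ^ 2) * (x' ^ 2 - a * y' ^ 2) := by ring
    rw [e]
    refine ⟨mul_ne_zero h0 h0', ?_⟩
    have := LSq_mul p h h'
    rw [Units.val_mul, mul_mul_mul_comm]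
    exact this
  one_mem' := ⟨1, 0, by simp, by simpa using LSq_one p⟩
  inv_mem' := by
    rintro b ⟨x, y, h0, h⟩
    refine ⟨x, y, h0, ?_⟩
    have := LSq_mul p h (LSq_sq p ((b⁻¹ : Kˣ) : K))
    have e : (b : K) * (x ^ 2 - a * y ^ 2) * ((b⁻¹ : Kˣ) : K) ^ 2 =
      ((b⁻¹ : Kˣ) : K) * (x ^ 2 - a * y ^ 2) := by
      have : (b : K) ≠ 0 := b.ne_zero
      rw [Units.val_inv_eq_inv_val]; field_simp
    rwa [e] at this

theorem mem_Nm {a : K} {p : Pl K} {b : Kˣ} : b ∈ Nm a p ↔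
    ∃ x y : K, x ^ 2 - a * y ^ 2 ≠ 0 ∧ LSq p (b * (x ^ 2 - a * y ^ 2)) := Iff.rfl

theorem Sq_le_Nm (a : K) (p : Pl K) : Sq p ≤ Nm a p := fun b hb =>
  ⟨1, 0, by simp, by simpa using (mem_Sq p).mp hb⟩

theorem Nm_ne_top {a : K} {p : Pl K} (ha : ¬ LSq p a) : Nm a p ≠ ⊤ := by
  suffices h : ∃ b, b ∉ Nm a p by
    obtain ⟨b, hb⟩ := h
    intro h; rw [h] at hb; exact hb trivial
  cases p with
  | inl v =>
    obtain ⟨β, hβ, hn⟩ := (lf v).norm_proper (ι v a) ha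
    have h4z : (4 : v.adicCompletion K) * β ≠ 0 := mul_ne_zero (lf v).four hβ
    have hle : ‖(4 : v.adicCompletion K) * β‖ ≤ ‖β‖ := by
      rw [norm_mul]
      exact mul_le_of_le_one_left (norm_nonneg _) (lf v).norm_four
    obtain ⟨x, hx⟩ := dense v β (norm_pos_iff.mpr h4z)
    have hxz := (lf v).norm_eq_of_sub_lt (hx.trans_le hle)
    have hx0 : ι v x ≠ 0 := by
      rw [← norm_pos_iff, hxz, norm_pos_iff]; exact hβ
    have hx0' : x ≠ 0 := by rintro rfl; simp at hx0
    have hs : IsSquare ((ι v x) * β) := by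
      apply (lf v).sq_crit _ β (mul_ne_zero hx0 hβ)
      have e : ι v x * β - β ^ 2 = - ((β - ι v x) * β) := by ring
      rw [e, norm_neg, norm_mul, norm_mul, norm_mul, hxz, ← mul_assoc, ← norm_mul (4 : v.adicCompletion K)]
      exact mul_lt_mul_of_pos_right hx (norm_pos_iff.mpr hβ)
    refine ⟨Units.mk0 x hx0', ?_⟩
    rintro ⟨r, s, h0, h⟩
    obtain ⟨w, hw⟩ := hs
    obtain ⟨z, hz⟩ := h
    rw [Units.val_mk0, map_mul] at hz
    have hN : ι v (r ^ 2 - a * s ^ 2) ≠ 0 := (map_ne_zero _).mpr h0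
    set n := ι v (r ^ 2 - a * s ^ 2) with hn'
    have hn2 : n = (ι v r) ^ 2 - ι v a * (ι v s) ^ 2 := by rw [hn']; simp
    apply hn (ι v r * (w * z / (ι v x * n))) (ι v s * (w * z / (ι v x * n)))
    have e : (ι v r * (w * z / (ι v x * n))) ^ 2 - ι v a * (ι v s * (w * z / (ι v x * n))) ^ 2 =
      ((ι v r) ^ 2 - ι v a * (ι v s) ^ 2) * (w * w * (z * z) / (ι v x * n) ^ 2) := by ring
    rw [← hn2] at e
    rw [e, ← hw, ← hz]
    field_simp
  | inr σ =>
    refine ⟨-1, ?_⟩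
    rintro ⟨x, y, h0, h⟩
    have h0' : σ (x ^ 2 - a * y ^ 2) ≠ 0 := (map_ne_zero _).mpr h0
    simp only [LSq, Real.isSquare_iff, not_le] at ha h
    apply h0'
    simp only [Units.val_neg, Units.val_one, map_mul, map_neg, map_one, map_sub, map_pow] at h ⊢
    nlinarith [sq_nonneg (σ x), mul_nonneg (neg_nonneg.mpr ha.le) (sq_nonneg (σ y))]

theorem Nm_eq_top {a : K} {p : Pl K} (ha : LSq p a) (ha0 : a ≠ 0) : Nm a p = ⊤ := by
  rw [eq_top_iff]
  intro b _
  have hb := b.ne_zero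
  obtain ⟨ε, hε, h⟩ := open_sq p (a * b) (mul_ne_zero ha0 hb)
  have hd : 0 ≤ abv p ((((b : K) + 1) / 2) ^ 2) := (abv p).nonneg _
  obtain ⟨c, hc⟩ := approx_sqrt p ha (ε := ε / (abv p ((((b : K) + 1) / 2) ^ 2) + 1))
    (div_pos hε (by linarith))
  have := h ((c * ((b + 1) / 2)) ^ 2 - a * ((b - 1) / 2) ^ 2) (by
    have e : ((c * ((b + 1) / 2)) ^ 2 - a * ((b - 1) / 2) ^ 2) - a * b =
      (c ^ 2 - a) * ((((b : K) + 1) / 2) ^ 2) := by ring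
    rw [e, map_mul]
    rw [lt_div_iff₀ (by linarith)] at hc
    have := (abv p).nonneg (c ^ 2 - a)
    linarith)
  refine ⟨_, _, this.1, ?_⟩
  have h2 := this.2
  apply LSq_div p (y := a) _ ha ha0
  convert h2 using 1
  ring

theorem Nm_index_ne (a : K) (p : Pl K) : (Nm a p).index ≠ 0 := fun h => by
  have := Subgroup.index_dvd_of_le (Sq_le_Nm a p)
  rw [h, zero_dvd_iff] at this
  exact absurd this (Sq_index_ne p)

end
end HM

open IsDedekindDomain NumberField
namespace HM
section

theorem sqs_congr {A B : Type*} [CommGroup A] [CommGroup B] (e : A ≃* B) :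
    (sqs A).index = (sqs B).index := by
  have : sqs A = (sqs B).comap e.toMonoidHom := by
    ext x
    rw [Subgroup.mem_comap, mem_sqs, mem_sqs]
    constructor
    · rintro ⟨y, rfl⟩; exact ⟨e y, by simp⟩
    · rintro ⟨y, hy⟩; exact ⟨e.symm y, by
        apply e.injective
        simpa using hy⟩
  rw [this]
  exact Subgroup.index_comap_of_surjective _ e.surjective

/-- squares in an extension by a group without 2-torsion -/
theorem sqs_ext {A C : Type*} [CommGroup A] [CommGroup C] (f : A →* C)
    (hf : Function.Surjective f) (hC : ∀ c : C, c ^ 2 = 1 → c = 1) :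
    (sqs A).index = (sqs f.ker).index * (sqs C).index := by
  have h1 : f.ker ⊔ sqs A = (sqs C).comap f := by
    apply le_antisymm
    · refine sup_le ?_ ?_
      · intro x hx
        rw [Subgroup.mem_comap, MonoidHom.mem_ker.mp hx]; exact one_mem _
      · rintro _ ⟨y, rfl⟩
        exact ⟨f y, by simp⟩
    · intro x hx
      obtain ⟨c, hc⟩ := mem_sqs.mp (Subgroup.mem_comap.mp hx)
      obtain ⟨y, rfl⟩ := hf c
      have : x = (x * (y ^ 2)⁻¹) * y ^ 2 := by simp
      rw [this]
      apply Subgroup.mul_mem_sup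
      · rw [MonoidHom.mem_ker]; simp [hc]
      · exact ⟨y, rfl⟩
  have h2 : (sqs A).relIndex f.ker = (sqs f.ker).index := by
    rw [Subgroup.relIndex]
    congr 1
    ext x
    rw [Subgroup.mem_subgroupOf, mem_sqs, mem_sqs]
    constructor
    · rintro ⟨y, hy⟩
      have : y ∈ f.ker := by
        rw [MonoidHom.mem_ker]
        apply hC
        rw [← map_pow, hy]; exact x.2
      exact ⟨⟨y, this⟩, Subtype.ext hy⟩
    · rintro ⟨y, hy⟩
      exact ⟨y, by rw [← hy]; rfl⟩
  have h3 := Subgroup.relIndex_mul_index (le_sup_right : sqs A ≤ f.ker ⊔ sqs A)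
  have h4 : ((sqs C).comap f).index = (sqs C).index :=
    Subgroup.index_comap_of_surjective _ hf
  have h5 : (sqs A).relIndex (f.ker ⊔ sqs A) = (sqs A).relIndex f.ker := by
    rw [sup_comm, Subgroup.relIndex_sup_left]
  rw [h5, h2, h1, h4] at h3
  exact h3.symm

theorem sqs_cyc (C : Subgroup (Multiplicative ℤ)) (hC : C ≠ ⊥) : (sqs C).index = 2 := by
  obtain ⟨g, hg⟩ := (inferInstance : IsCyclic C).exists_generator
  have hg1 : g ≠ 1 := by
    rintro rfl
    apply hC
    rw [eq_bot_iff]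
    intro x hx
    obtain ⟨n, hn⟩ := hg ⟨x, hx⟩
    simp only [one_zpow] at hn
    exact Subgroup.mem_bot.mpr (congrArg Subtype.val hn.symm)
  have inj : ∀ n m : ℤ, g ^ n = g ^ m → n = m := by
    intro n m h
    have h1 := congrArg (fun x : C => Multiplicative.toAdd (x : Multiplicative ℤ)) h
    simp only [Subgroup.coe_zpow, toAdd_zpow, smul_eq_mul] at h1
    refine mul_right_cancel₀ (fun h0 => hg1 ?_) h1
    apply Subtype.ext
    exact Multiplicative.toAdd.injective h0
  have key : ∀ n : ℤ, g ^ n ∈ sqs C ↔ Even n := by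
    intro n
    rw [mem_sqs]
    constructor
    · rintro ⟨y, hy⟩
      obtain ⟨k, rfl⟩ := hg y
      refine ⟨k, inj _ _ ?_⟩
      rw [← hy, pow_two, zpow_add]
    · rintro ⟨k, rfl⟩
      exact ⟨g ^ k, by rw [pow_two, zpow_add]⟩
  rw [Subgroup.index_eq_two_iff]
  refine ⟨g, fun b => ?_⟩
  obtain ⟨n, rfl⟩ := hg b
  change Xor (g ^ n * g ∈ _) (g ^ n ∈ _)
  rw [← zpow_add_one, key, key, Int.even_add_one]
  by_cases h : Even n
  · right; exact ⟨h, fun h' => h' h⟩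
  · left; exact ⟨h, h⟩

variable {K : Type*} [Field K] [NumberField K]

/-- S-units -/
def SU (S : Finset (HeightOneSpectrum (𝓞 K))) : Subgroup Kˣ where
  carrier := {x | ∀ v ∉ S, v.valuation K (x : K) = 1}
  mul_mem' := fun hx hy v hv => by rw [Units.val_mul, map_mul, hx v hv, hy v hv, one_mul]
  one_mem' := fun v _ => by simp
  inv_mem' := fun hx v hv => by rw [Units.val_inv_eq_inv_val, map_inv₀, hx v hv, inv_one]

theorem mem_SU {S : Finset (HeightOneSpectrum (𝓞 K))} {x : Kˣ} :
    x ∈ SU S ↔ ∀ v ∉ S, v.valuation K (x : K) = 1 := Iff.rfl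

theorem SU_mono {S T : Finset (HeightOneSpectrum (𝓞 K))} (h : S ⊆ T) : SU S ≤ SU T :=
  fun _ hx v hv => hx v (fun h' => hv (h h'))

theorem exists_pow (v : HeightOneSpectrum (𝓞 K)) :
    ∃ x : Kˣ, v.valuation K (x : K) < 1 ∧ ∀ w, w ≠ v → w.valuation K (x : K) = 1 := by
  have hv0 : v.asIdeal ∈ nonZeroDivisors (Ideal (𝓞 K)) := mem_nonZeroDivisors_of_ne_zero v.ne_bot
  set h := Nat.card (ClassGroup (𝓞 K)) with hh
  have hpos : 0 < h := Nat.card_pos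
  have h1 : ClassGroup.mk0 (⟨v.asIdeal, hv0⟩ ^ h) = 1 := by
    rw [map_pow, hh, pow_card_eq_one']
  rw [ClassGroup.mk0_eq_one_iff] at h1
  obtain ⟨x, hx⟩ := h1.principal
  have hx' : v.asIdeal ^ h = Ideal.span {x} := hx
  have hx0 : x ≠ 0 := by
    rintro rfl
    have : v.asIdeal ^ h = ⊥ := by rw [hx']; simp
    exact v.ne_bot (pow_eq_zero_iff hpos.ne' |>.mp this)
  have hK : algebraMap (𝓞 K) K x ≠ 0 := by simpa using hx0
  refine ⟨Units.mk0 _ hK, ?_, fun w hw => ?_⟩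
  · rw [Units.val_mk0, HeightOneSpectrum.valuation_lt_one_iff_mem]
    have : x ∈ v.asIdeal ^ h := by rw [hx']; exact Ideal.mem_span_singleton_self x
    exact Ideal.pow_le_self hpos.ne' this
  · rw [Units.val_mk0, HeightOneSpectrum.valuation_eq_one_iff_notMem]
    intro hxw
    have : v.asIdeal ^ h ≤ w.asIdeal := by
      rw [hx', Ideal.span_singleton_le_iff_mem]; exact hxw
    have := Ideal.IsPrime.le_of_pow_le this
    apply hw
    ext1
    exact (v.isMaximal.eq_of_le w.isPrime.ne_top this).symm

theorem sqs_SU_insert [DecidableEq (HeightOneSpectrum (𝓞 K))]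
    (S : Finset (HeightOneSpectrum (𝓞 K))) (v) (hv : v ∉ S) :
    (sqs (SU (insert v S))).index = (sqs (SU S)).index * 2 := by
  set f : SU (insert v S) →* Multiplicative ℤ :=
    (v.valuationOfNeZero (K := K)).comp (SU (insert v S)).subtype with hf
  have hval : ∀ x : Kˣ, v.valuationOfNeZero x = 1 ↔ v.valuation K (x : K) = 1 := by
    intro x
    rw [← HeightOneSpectrum.valuationOfNeZero_eq]
    exact ⟨fun h => by rw [h]; rfl, fun h => WithZero.coe_injective h⟩
  have hker : ∀ x : SU (insert v S), x ∈ f.rangeRestrict.ker ↔ (x : Kˣ) ∈ SU S := by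
    intro x
    rw [MonoidHom.ker_rangeRestrict, MonoidHom.mem_ker]
    change v.valuationOfNeZero (x : Kˣ) = 1 ↔ _
    rw [hval]
    constructor
    · intro h w hw
      by_cases hwv : w = v
      · rw [hwv, h]
      · exact x.2 w (by simp [hwv, hw])
    · intro h; exact h v hv
  have h1 := sqs_ext f.rangeRestrict f.rangeRestrict_surjective (by
    intro c hc
    have := congrArg (fun x : f.range => Multiplicative.toAdd (x : Multiplicative ℤ)) hc
    simp at this
    exact this)
  rw [sqs_cyc] at h1
  · rw [h1]
    congr 1
    apply sqs_congr
    refine MulEquiv.mk ⟨fun x => ⟨x.1.1, (hker _).mp x.2⟩, fun y =>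
      ⟨⟨y.1, SU_mono (Finset.subset_insert v S) y.2⟩, (hker _).mpr y.2⟩, fun x => rfl, fun x => rfl⟩ 
      (fun x y => rfl)
  · intro hbot
    obtain ⟨x, hx, hx'⟩ := exists_pow v
    have hxm : x ∈ SU (insert v S) := fun w hw => hx' w (by
      rintro rfl; simp at hw)
    have : f ⟨x, hxm⟩ ∈ f.range := ⟨_, rfl⟩
    rw [hbot, Subgroup.mem_bot] at this
    exact hx.ne ((hval x).mp this)

theorem sqs_units : (sqs (𝓞 K)ˣ).index = 2 ^ Fintype.card (InfinitePlace K) := by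
  have hex := Units.exist_unique_eq_mul_prod K
  choose g hg hu using hex
  simp only at hg hu
  have hu' : ∀ x (ζ : Units.torsion K) (e : Fin (Units.rank K) → ℤ),
      x = (ζ : (𝓞 K)ˣ) * ∏ i, Units.fundSystem K i ^ e i → (g x).2 = e := by
    intro x ζ e h
    rw [← hu x (ζ, e) h]
  set f : (𝓞 K)ˣ →* Multiplicative (Fin (Units.rank K) → ℤ) := MonoidHom.mk'
    (fun x => Multiplicative.ofAdd (g x).2) (by
      intro x y
      rw [← ofAdd_add]
      congr 1
      apply hu' _ ((g x).1 * (g y).1)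
      simp only [Pi.add_apply, zpow_add, Finset.prod_mul_distrib, Subgroup.coe_mul]
      rw [mul_mul_mul_comm, ← hg, ← hg]) with hf
  have h1 := sqs_ext f (by
    intro e
    refine ⟨∏ i, Units.fundSystem K i ^ (Multiplicative.toAdd e) i, ?_⟩
    apply Multiplicative.toAdd.injective
    exact hu' _ 1 _ (by simp)) (by
    intro c hc
    have := congrArg Multiplicative.toAdd hc
    apply Multiplicative.toAdd.injective
    funext i
    have h2 := congrFun this i
    simp only [toAdd_pow, Pi.smul_apply, toAdd_one, Pi.zero_apply, nsmul_eq_mul, Nat.cast_ofNat] at h2 ⊢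
    omega)
  have hk : f.ker = Units.torsion K := by
    ext x
    rw [MonoidHom.mem_ker]
    constructor
    · intro h
      have h0 : (g x).2 = 0 := congrArg Multiplicative.toAdd h
      have := hg x
      rw [h0] at this
      simp at this
      rw [this]; exact (g x).1.2
    · intro h
      apply Multiplicative.toAdd.injective
      exact hu' x ⟨x, h⟩ 0 (by simp)
  have h2 : (sqs (Units.torsion K)).index = 2 := by
    rw [sqs, IsCyclic.index_powMonoidHom_range]
    exact Nat.gcd_eq_right (even_iff_two_dvd.mp (Units.even_torsionOrder K))
  have h3 : (sqs (Multiplicative (Fin (Units.rank K) → ℤ))).index = 2 ^ Units.rank K := by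
    have hb := AddSubgroup.index_range_nsmul (Fin (Units.rank K) → ℤ) 2
    rw [Module.finrank_fin_fun] at hb
    rw [← hb]
    rfl
  rw [h1, hk, h2, h3, ← pow_succ', Units.rank]
  congr 1
  have : 0 < Fintype.card (InfinitePlace K) := Fintype.card_pos
  omega

theorem sqs_SU (S : Finset (HeightOneSpectrum (𝓞 K))) :
    (sqs (SU S)).index = 2 ^ (S.card + Fintype.card (InfinitePlace K)) := by
  classical
  induction S using Finset.induction_on with
  | empty =>
    rw [Finset.card_empty, zero_add, ← sqs_units]
    symm
    set g : (𝓞 K)ˣ →* Kˣ := Units.map (algebraMap (𝓞 K) K).toMonoidHom with hg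
    have hinj : Function.Injective g := Units.map_injective (by
      exact FaithfulSMul.algebraMap_injective (𝓞 K) K)
    have hr : g.range = SU ∅ := by
      ext x
      constructor
      · rintro ⟨y, rfl⟩ v _
        change v.valuation K (algebraMap (𝓞 K) K y) = 1
        rw [HeightOneSpectrum.valuation_eq_one_iff_notMem]
        intro h
        exact v.isPrime.ne_top (Ideal.eq_top_of_isUnit_mem _ h y.isUnit)
      · intro hx
        obtain ⟨y, hy⟩ := HeightOneSpectrum.mem_integers_of_valuation_le_one (R := 𝓞 K) K (x : K)
          (fun v => (hx v (by simp)).le)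
        obtain ⟨z, hz⟩ := HeightOneSpectrum.mem_integers_of_valuation_le_one (R := 𝓞 K) K 
          ((x⁻¹ : Kˣ) : K)
          (fun v => ((SU ∅).inv_mem hx v (by simp)).le)
        have hyz : y * z = 1 := by
          apply FaithfulSMul.algebraMap_injective (𝓞 K) K
          rw [map_mul, hy, hz, map_one, Units.mul_inv]
        exact ⟨⟨y, z, hyz, by rw [mul_comm, hyz]⟩, Units.ext hy⟩
    rw [← hr]
    exact sqs_congr (MonoidHom.ofInjective hinj)
  | insert v S hv ih =>
    rw [sqs_SU_insert S v hv, ih, Finset.card_insert_of_notMem hv]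
    ring
end
end HM

open IsDedekindDomain NumberField
namespace HM
section
variable {K : Type*} [Field K] [NumberField K]

/-- S-class number one -/
def Cl1 (S : Finset (HeightOneSpectrum (𝓞 K))) : Prop :=
  ∀ v ∉ S, ∃ x : Kˣ, v.valuation K (x : K) = WithZero.exp (-1 : ℤ) ∧
    ∀ w ∉ S, w ≠ v → w.valuation K (x : K) = 1

theorem Cl1.mono {S T : Finset (HeightOneSpectrum (𝓞 K))} (h : Cl1 S) (hST : S ⊆ T) : Cl1 T := by
  intro v hv
  obtain ⟨x, h1, h2⟩ := h v (fun h => hv (hST h))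
  exact ⟨x, h1, fun w hw => h2 w (fun h => hw (hST h))⟩

variable (K) in
theorem exists_Cl1 : ∃ S : Finset (HeightOneSpectrum (𝓞 K)), Cl1 S := by
  classical
  have hsurj := ClassGroup.mk0_surjective (R := 𝓞 K)
  choose I hI using hsurj
  have hne : ∀ c, (I c : Ideal (𝓞 K)) ≠ 0 := fun c => nonZeroDivisors.ne_zero (I c).2
  have hfin : (⋃ c, {v : HeightOneSpectrum (𝓞 K) | v.asIdeal ∣ (I c : Ideal (𝓞 K))}).Finite :=
    Set.finite_iUnion (fun c => Ideal.finite_factors (hne c))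
  refine ⟨hfin.toFinset, fun v hv => ?_⟩
  have hmem : ∀ w ∉ hfin.toFinset, ∀ c, ¬ w.asIdeal ∣ (I c : Ideal (𝓞 K)) := by
    intro w hw c h
    apply hw
    rw [Set.Finite.mem_toFinset, Set.mem_iUnion]
    exact ⟨c, h⟩
  have hv0 : v.asIdeal ∈ nonZeroDivisors (Ideal (𝓞 K)) := mem_nonZeroDivisors_of_ne_zero v.ne_bot
  set c := (ClassGroup.mk0 ⟨v.asIdeal, hv0⟩)⁻¹ with hc
  have h1 : ClassGroup.mk0 (⟨v.asIdeal, hv0⟩ * I c) = 1 := by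
    rw [map_mul, hI, hc, mul_inv_cancel]
  rw [ClassGroup.mk0_eq_one_iff] at h1
  obtain ⟨x, hx⟩ := h1.principal
  have hx' : v.asIdeal * I c = Ideal.span {x} := hx
  have hx0 : x ≠ 0 := by
    rintro rfl
    have : v.asIdeal * I c = 0 := by rw [hx']; simp
    exact (mul_ne_zero v.ne_bot (hne c)) this
  have hK : algebraMap (𝓞 K) K x ≠ 0 := by simpa using hx0
  refine ⟨Units.mk0 _ hK, ?_, fun w hw hwv => ?_⟩
  · rw [Units.val_mk0]
    apply le_antisymm
    · have := (av_int v x 1).mpr (by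
        rw [pow_one]
        have hxm : x ∈ v.asIdeal * (I c : Ideal (𝓞 K)) := by
          rw [hx']; exact Ideal.mem_span_singleton_self x
        exact Ideal.mul_le_left hxm)
      simpa using this
    · by_contra hlt
      rw [not_le] at hlt
      have h2 : v.valuation K (algebraMap (𝓞 K) K x) ≤ WithZero.exp (-((2 : ℕ) : ℤ)) := by
        have hne' : v.valuation K (algebraMap (𝓞 K) K x) ≠ 0 := by simpa using hx0
        rw [← WithZero.exp_log hne', WithZero.exp_lt_exp] at hlt
        rw [← WithZero.exp_log hne', WithZero.exp_le_exp]
        push_cast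
        omega
      rw [av_int] at h2
      have h3 : v.asIdeal ^ 2 ∣ v.asIdeal * I c := by
        rw [hx', Ideal.dvd_span_singleton]; exact h2
      rw [pow_two] at h3
      exact hmem v hv c ((mul_dvd_mul_iff_left v.ne_bot).mp h3)
  · rw [Units.val_mk0, HeightOneSpectrum.valuation_eq_one_iff_notMem]
    intro hxw
    have h3 : w.asIdeal ∣ v.asIdeal * I c := by
      rw [hx', Ideal.dvd_span_singleton]; exact hxw
    rcases w.prime.dvd_or_dvd h3 with h | h
    · apply hwv
      ext1
      exact (v.isMaximal.eq_of_le w.isPrime.ne_top (Ideal.dvd_iff_le.mp h)).symm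
    · exact hmem w hw c h

theorem fin_supp (x : K) (hx : x ≠ 0) : {v : HeightOneSpectrum (𝓞 K) | v.valuation K x ≠ 1}.Finite := by
  have h : {v : HeightOneSpectrum (𝓞 K) | v.valuation K x ≠ 1} ⊆
      HeightOneSpectrum.Support (𝓞 K) x ∪ HeightOneSpectrum.Support (𝓞 K) x⁻¹ := by
    intro v hv
    rcases lt_or_gt_of_ne hv with h | h
    · right
      change 1 < v.valuation K x⁻¹
      rw [map_inv₀]
      exact (one_lt_inv₀ (by simpa [zero_lt_iff] using hx)).mpr h
    · left; exact h
  exact ((HeightOneSpectrum.Support.finite _ _).union (HeightOneSpectrum.Support.finite _ _)).subset h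

theorem Cl1.gcd {S : Finset (HeightOneSpectrum (𝓞 K))} (hS : Cl1 S) (p q : K) (hpq : p ≠ 0 ∨ q ≠ 0) :
    ∃ c : Kˣ, ∀ v ∉ S, v.valuation K (c : K) = max (v.valuation K p) (v.valuation K q) := by
  classical
  set m : HeightOneSpectrum (𝓞 K) → WithZero (Multiplicative ℤ) :=
    fun v => max (v.valuation K p) (v.valuation K q) with hm
  have hm0 : ∀ v, m v ≠ 0 := by
    intro v
    rw [← zero_lt_iff]
    simp only [hm, lt_max_iff]
    rcases hpq with h | h
    · left; simpa [zero_lt_iff] using h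
    · right; simpa [zero_lt_iff] using h
  have hfin : {v | m v ≠ 1}.Finite := by
    by_cases hp : p = 0
    · have hq : q ≠ 0 := by tauto
      apply (fin_supp q hq).subset
      intro v hv
      simpa [hm, hp] using hv
    by_cases hq : q = 0
    · apply (fin_supp p hp).subset
      intro v hv
      simpa [hm, hq] using hv
    · apply ((fin_supp p hp).union (fin_supp q hq)).subset
      intro v hv
      by_contra hc
      simp only [Set.mem_union, Set.mem_ofPred_eq, not_or, not_not] at hc
      apply hv
      simp [hm, hc.1, hc.2]
  set T := hfin.toFinset \ S with hT
  have : ∀ v, ∃ x : Kˣ, v ∉ S → v.valuation K (x : K) = WithZero.exp (-1 : ℤ) ∧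
    ∀ w ∉ S, w ≠ v → w.valuation K (x : K) = 1 := by
    intro v
    by_cases hv : v ∈ S
    · exact ⟨1, fun h => absurd hv h⟩
    · obtain ⟨x, hx⟩ := hS v hv
      exact ⟨x, fun _ => hx⟩
  choose π hπ using this
  refine ⟨∏ v ∈ T, (π v) ^ (- WithZero.log (m v)), fun v hv => ?_⟩
  change _ = m v
  rw [Units.coe_prod, map_prod]
  by_cases hvT : v ∈ T
  · rw [Finset.prod_eq_single_of_mem v hvT]
    · rw [Units.val_zpow_eq_zpow_val, map_zpow₀, (hπ v hv).1, ← WithZero.exp_zsmul]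
      simp [WithZero.exp_log (hm0 v)]
    · intro w hw hwv
      rw [Units.val_zpow_eq_zpow_val, map_zpow₀, (hπ w (Finset.mem_sdiff.mp hw).2).2 v hv hwv.symm,
        one_zpow]
  · rw [Finset.prod_eq_one]
    · by_contra hne
      exact hvT (Finset.mem_sdiff.mpr ⟨by simpa using Ne.symm hne, hv⟩)
    · intro w hw
      rw [Units.val_zpow_eq_zpow_val, map_zpow₀, (hπ w (Finset.mem_sdiff.mp hw).2).2 v hv
        (by rintro rfl; exact hvT hw), one_zpow]

end
end HM

open IsDedekindDomain NumberField
namespace HM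
section
variable {K : Type*} [Field K] [NumberField K]

theorem LSq_fin_iff (v : HeightOneSpectrum (𝓞 K)) {x : K} (hx : x ≠ 0) :
    LSq (.inl v) x ↔ ∃ y : K, v.valuation K (x - y ^ 2) < v.valuation K (4 * x) := by
  have h4 : (4 * x : K) ≠ 0 := mul_ne_zero (by norm_num) hx
  constructor
  · intro h
    obtain ⟨c, hc⟩ := approx_sqrt (.inl v) h (ε := abv (.inl v : Pl K) (4 * x))
      ((abv _).pos h4)
    refine ⟨c, ?_⟩
    rw [abv_inl, av_lt] at hc
    rwa [Valuation.map_sub_swap]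
  · rintro ⟨y, hy⟩
    rw [← av_lt, ← norm_ι, ← norm_ι, map_sub, map_mul, map_pow, map_ofNat] at hy
    exact (lf v).sq_crit (ι v x) (ι v y) (by simpa using hx) hy

variable {L : Type*} [Field L] [NumberField L] [Algebra K L]

variable (K) in
noncomputable def un (w : HeightOneSpectrum (𝓞 L)) : HeightOneSpectrum (𝓞 K) :=
  w.under (𝓞 K)

theorem val_un (w : HeightOneSpectrum (𝓞 L)) : ∃ e : ℕ, e ≠ 0 ∧ ∀ x : K,
    (un K w).valuation K x ^ e = w.valuation L (algebraMap K L x) := by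
  have : w.asIdeal.LiesOver (un K w).asIdeal := ⟨rfl⟩
  exact ⟨_, Ideal.IsDedekindDomain.ramificationIdx'_ne_zero_of_liesOver w.asIdeal (un K w).ne_bot,
    fun x => HeightOneSpectrum.valuation_liesOver L (un K w) w x⟩

theorem val_un_lt (w : HeightOneSpectrum (𝓞 L)) (x y : K) :
    w.valuation L (algebraMap K L x) < w.valuation L (algebraMap K L y) ↔
      (un K w).valuation K x < (un K w).valuation K y := by
  obtain ⟨e, he, h⟩ := val_un (K := K) w
  rw [← h, ← h, pow_lt_pow_iff_left₀ zero_le' zero_le' he]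

theorem val_un_le (w : HeightOneSpectrum (𝓞 L)) (x y : K) :
    w.valuation L (algebraMap K L x) ≤ w.valuation L (algebraMap K L y) ↔
      (un K w).valuation K x ≤ (un K w).valuation K y := by
  rw [← not_lt, val_un_lt, not_lt]

theorem val_un_eq (w : HeightOneSpectrum (𝓞 L)) (x y : K) :
    w.valuation L (algebraMap K L x) = w.valuation L (algebraMap K L y) ↔
      (un K w).valuation K x = (un K w).valuation K y := by
  rw [le_antisymm_iff, le_antisymm_iff, val_un_le, val_un_le]

theorem val_un_eq_one (w : HeightOneSpectrum (𝓞 L)) (x : K) :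
    w.valuation L (algebraMap K L x) = 1 ↔ (un K w).valuation K x = 1 := by
  simpa using val_un_eq w x 1

theorem exists_above (v : HeightOneSpectrum (𝓞 K)) : ∃ w : HeightOneSpectrum (𝓞 L), un K w = v := by
  obtain ⟨P, hP1, hP2⟩ := Ideal.exists_ideal_over_prime_of_isIntegral_of_isDomain (S := 𝓞 L) v.asIdeal
    (by
      rw [(RingHom.injective_iff_ker_eq_bot _).mp (FaithfulSMul.algebraMap_injective (𝓞 K) (𝓞 L))]
      exact bot_le)
  refine ⟨⟨P, hP1, ?_⟩, ?_⟩
  · rintro rfl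
    apply v.ne_bot
    rw [← hP2]
    exact Ideal.comap_bot_of_injective _ (FaithfulSMul.algebraMap_injective (𝓞 K) (𝓞 L))
  · ext1
    exact hP2

variable (L) in
theorem above_finite (v : HeightOneSpectrum (𝓞 K)) :
    {w : HeightOneSpectrum (𝓞 L) | un K w = v}.Finite := by
  obtain ⟨x, hx, -⟩ := exists_pow v
  apply (fin_supp (algebraMap K L x) (by simp)).subset
  rintro w rfl
  simp only [Set.mem_ofPred_eq]
  rw [Ne, val_un_eq_one]
  exact hx.ne

theorem LSq_above (w : HeightOneSpectrum (𝓞 L)) {x : K} (h : LSq (.inl (un K w)) x) :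
    LSq (.inl w : Pl L) (algebraMap K L x) := by
  by_cases hx : x = 0
  · subst hx; rw [map_zero]; exact LSq_zero _
  obtain ⟨y, hy⟩ := (LSq_fin_iff _ hx).mp h
  rw [LSq_fin_iff _ (by simpa using hx)]
  refine ⟨algebraMap K L y, ?_⟩
  have := (val_un_lt w _ _).mpr hy
  rwa [map_sub, map_pow, map_mul, map_ofNat] at this

variable {a : K} (Q : Quad K L a)

noncomputable def Quad.τe : L ≃+* L := RingEquiv.ofRingHom Q.τ Q.τ (by ext; simp) (by ext; simp)

theorem Quad.exists_conj (w : HeightOneSpectrum (𝓞 L)) : ∃ w' : HeightOneSpectrum (𝓞 L),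
    ∀ x : L, w'.valuation L x = w.valuation L (Q.τ x) := by
  let e : 𝓞 L ≃+* 𝓞 L := RingOfIntegers.mapRingEquiv Q.τe
  have he : ∀ x : 𝓞 L, algebraMap (𝓞 L) L (e x) = Q.τ (algebraMap (𝓞 L) L x) := fun x => rfl
  have hn : w.asIdeal.comap (e : 𝓞 L →+* 𝓞 L) ≠ ⊥ := by
    intro h
    apply w.ne_bot
    rw [Ideal.comap_coe, ← Ideal.map_symm, Ideal.map_eq_bot_iff_of_injective e.symm.injective] at h
    exact h
  refine ⟨⟨w.asIdeal.comap (e : 𝓞 L →+* 𝓞 L), Ideal.comap_isPrime _ _, hn⟩, ?_⟩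
  set w' : HeightOneSpectrum (𝓞 L) := ⟨w.asIdeal.comap (e : 𝓞 L →+* 𝓞 L), Ideal.comap_isPrime _ _, hn⟩
  have hw' : ∀ n, w'.asIdeal ^ n = (w.asIdeal ^ n).comap (e : 𝓞 L →+* 𝓞 L) := by
    intro n
    change (w.asIdeal.comap (e : 𝓞 L →+* 𝓞 L)) ^ n = _
    rw [Ideal.comap_coe, Ideal.comap_coe, ← Ideal.map_symm, ← Ideal.map_symm, Ideal.map_pow]
  have key : ∀ x : 𝓞 L, w'.valuation L (algebraMap (𝓞 L) L x) = w.valuation L (Q.τ (algebraMap (𝓞 L) L x)) := by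
    intro x
    by_cases hx : x = 0
    · subst hx; simp
    have hle : ∀ n : ℕ, w'.valuation L (algebraMap (𝓞 L) L x) ≤ WithZero.exp (-(n : ℤ)) ↔
        w.valuation L (Q.τ (algebraMap (𝓞 L) L x)) ≤ WithZero.exp (-(n : ℤ)) := by
      intro n
      rw [← he, av_int, av_int, hw']
      rfl
    have h1 : w'.valuation L (algebraMap (𝓞 L) L x) ≤ 1 := w'.valuation_le_one (K := L) x
    have h2 : w.valuation L (Q.τ (algebraMap (𝓞 L) L x)) ≤ 1 := w.valuation_le_one (K := L) (e x)
    have n1 : w'.valuation L (algebraMap (𝓞 L) L x) ≠ 0 := by simpa using hx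
    have n2 : w.valuation L (Q.τ (algebraMap (𝓞 L) L x)) ≠ 0 := by simpa using hx
    revert hle h1 h2
    rw [← WithZero.exp_log n1, ← WithZero.exp_log n2]
    generalize WithZero.log (w'.valuation L (algebraMap (𝓞 L) L x)) = i
    generalize WithZero.log (w.valuation L (Q.τ (algebraMap (𝓞 L) L x))) = j
    intro hle h1 h2
    simp only [WithZero.exp_le_exp] at hle
    rw [← WithZero.exp_zero, WithZero.exp_le_exp] at h1 h2
    congr 1
    have a1 := hle i.natAbs
    have a2 := hle j.natAbs
    omega
  intro x
  obtain ⟨r, s, hs, rfl⟩ := IsFractionRing.div_surjective (A := 𝓞 L) x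
  rw [map_div₀, map_div₀, map_div₀, key, key]

theorem Quad.un_conj {w w' : HeightOneSpectrum (𝓞 L)}
    (h : ∀ x : L, w'.valuation L x = w.valuation L (Q.τ x)) : un K w' = un K w := by
  by_contra hne
  obtain ⟨x, hx, hx'⟩ := exists_pow (un K w')
  have h1 := hx' (un K w) (Ne.symm hne)
  rw [← val_un_eq_one] at h1
  have h2 := h (algebraMap K L x)
  rw [Q.τ_alg, h1, val_un_eq_one] at h2
  exact hx.ne h2

theorem Quad.conj_ne {w w' : HeightOneSpectrum (𝓞 L)}
    (h : ∀ x : L, w'.valuation L x = w.valuation L (Q.τ x)) (hs : LSq (.inl (un K w)) a) : w' ≠ w := by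
  rintro rfl
  obtain ⟨c, hc⟩ := (LSq_fin_iff _ Q.a_ne).mp hs
  have hc' := (val_un_lt w' _ _).mpr hc
  have e1 : algebraMap K L (a - c ^ 2) = (Q.s - algebraMap K L c) * (Q.s + algebraMap K L c) := by
    rw [map_sub, map_pow, ← Q.ss]; ring
  have e2 : w'.valuation L (Q.s - algebraMap K L c) = w'.valuation L (Q.s + algebraMap K L c) := by
    rw [h, map_sub, Q.τ_s, Q.τ_alg, ← Valuation.map_neg]; congr 1; ring
  have e3 : algebraMap K L (4 * a) = ((Q.s - algebraMap K L c) + (Q.s + algebraMap K L c)) ^ 2 := by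
    rw [map_mul, ← Q.ss, map_ofNat]; ring
  rw [e1, e3, map_mul, map_pow, e2, ← pow_two] at hc'
  have h5 := Valuation.map_add (w'.valuation L) (Q.s - algebraMap K L c) (Q.s + algebraMap K L c)
  rw [e2, max_self] at h5
  exact absurd (pow_le_pow_left₀ zero_le' h5 2) (not_le.mpr hc')

end
end HM

open IsDedekindDomain NumberField
namespace HM
section
variable {K : Type*} [Field K] [NumberField K]

/-- finite places in `S` together with the real places -/
noncomputable def pls (S : Finset (HeightOneSpectrum (𝓞 K))) : Finset (Pl K) := S.disjSum Finset.univ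

@[simp] theorem mem_pls_inl {S : Finset (HeightOneSpectrum (𝓞 K))} {v} :
    (Sum.inl v : Pl K) ∈ pls S ↔ v ∈ S := by simp [pls]
@[simp] theorem mem_pls_inr {S : Finset (HeightOneSpectrum (𝓞 K))} (σ : K →+* ℝ) :
    (Sum.inr σ : Pl K) ∈ pls S := by simp [pls]

variable (K) in
theorem card_real : Fintype.card (K →+* ℝ) = InfinitePlace.nrRealPlaces K := by
  classical
  rw [← InfinitePlace.card_real_embeddings]
  apply Fintype.card_congr
  refine Equiv.ofBijective (fun σ => ⟨Complex.ofRealHom.comp σ, ?_⟩) ⟨?_, ?_⟩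
  · rw [ComplexEmbedding.isReal_iff]
    ext x
    simp
  · intro σ τ h
    ext x
    have := congrArg (fun φ => (φ.1 : K →+* ℂ) x) h
    simpa using this
  · rintro ⟨φ, hφ⟩
    refine ⟨hφ.embedding, ?_⟩
    ext x
    simp

theorem prod_q (S : Finset (HeightOneSpectrum (𝓞 K)))
    (hS : ∀ v ∉ S, v.valuation K 2 = 1) : ∏ v ∈ S, (lf v).q = 2 ^ Module.finrank ℚ K := by
  classical
  have h2 : (2 : 𝓞 K) ≠ 0 := two_ne_zero
  set I : Ideal (𝓞 K) := Ideal.span {2} with hI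
  have hI0 : I ≠ 0 := by simpa [hI] using h2
  have hc : ∀ v : HeightOneSpectrum (𝓞 K), v.valuation K 2 =
      WithZero.exp (-((Associates.mk v.asIdeal).count (Associates.mk I).factors : ℤ)) := by
    intro v
    rw [← map_ofNat (algebraMap (𝓞 K) K) 2, HeightOneSpectrum.valuation_of_algebraMap,
      HeightOneSpectrum.intValuation_if_neg _ h2]
  have hm : ∀ v : HeightOneSpectrum (𝓞 K), (lf v).q = Ideal.absNorm (v.maxPowDividing I) := by
    intro v
    obtain ⟨e, he, hq⟩ := q_eq v
    rw [hq, HeightOneSpectrum.maxPowDividing, map_pow]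
    rw [hc, WithZero.exp_inj] at he
    congr 1
    omega
  have hfp := Ideal.finprod_heightOneSpectrum_factorization hI0
  rw [finprod_eq_prod_of_mulSupport_subset (s := S)] at hfp
  · calc _ = ∏ v ∈ S, Ideal.absNorm (v.maxPowDividing I) := Finset.prod_congr rfl (fun v _ => hm v)
      _ = Ideal.absNorm I := by rw [← map_prod, hfp]
      _ = _ := by
        rw [hI, Ideal.absNorm_span_singleton]
        have : (2 : 𝓞 K) = algebraMap ℤ (𝓞 K) 2 := by simp
        rw [this, Algebra.norm_algebraMap, Int.natAbs_pow, RingOfIntegers.rank]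
        rfl
  · intro v hv
    by_contra hvS
    have := hS v hvS
    rw [hc, ← WithZero.exp_zero, WithZero.exp_inj] at this
    apply hv
    change v.asIdeal ^ _ = 1
    have h0 : (Associates.mk v.asIdeal).count (Associates.mk I).factors = 0 := by omega
    rw [h0, pow_zero]

theorem prod_Sq (S : Finset (HeightOneSpectrum (𝓞 K)))
    (hS : ∀ v ∉ S, v.valuation K 2 = 1) :
    ∏ p ∈ pls S, (Sq p).index = 4 ^ (S.card + Fintype.card (InfinitePlace K)) := by
  rw [pls, Finset.prod_disjSum]
  simp only [Sq_index_fin, Sq_index_real, Finset.prod_mul_distrib, prod_q S hS, Finset.prod_const,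
    Finset.card_univ]
  rw [card_real, InfinitePlace.card_eq_nrRealPlaces_add_nrComplexPlaces,
    ← InfinitePlace.card_add_two_mul_card_eq_rank]
  have : (4 : ℕ) = 2 ^ 2 := by norm_num
  rw [this, ← pow_mul, ← pow_mul, ← pow_add, ← pow_add]
  congr 1
  ring

variable {L : Type*} [Field L] [NumberField L] [Algebra K L]

variable (L) in
noncomputable def above (S : Finset (HeightOneSpectrum (𝓞 K))) : Finset (HeightOneSpectrum (𝓞 L)) :=
  (S.finite_toSet.biUnion (fun v _ => above_finite L v)).toFinset

@[simp] theorem mem_above {S : Finset (HeightOneSpectrum (𝓞 K))} {w : HeightOneSpectrum (𝓞 L)} :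
    w ∈ above L S ↔ un K w ∈ S := by
  simp [above]

variable {a : K} (Q : Quad K L a)

open Classical in
theorem Quad.card_above (Q : Quad K L a) (S : Finset (HeightOneSpectrum (𝓞 K))) :
    S.card + (S.filter (fun v => LSq (.inl v) a)).card ≤ (above L S).card := by
  rw [Finset.card_eq_sum_card_fiberwise (f := un K) (s := above L S) (t := S)
    (fun w hw => by simpa using hw), Finset.card_eq_sum_ones, Finset.card_filter, ← Finset.sum_add_distrib]
  apply Finset.sum_le_sum
  intro v hv
  obtain ⟨w, rfl⟩ := exists_above (L := L) v
  have hw : w ∈ (above L S).filter (fun x => un K x = un K w) := by simpa using hv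
  split_ifs with h
  · obtain ⟨w', hw'⟩ := Q.exists_conj w
    have h1 := Q.un_conj hw'
    have h2 := Q.conj_ne hw' h
    have hw'' : w' ∈ (above L S).filter (fun x => un K x = un K w) := by simpa [h1] using hv
    exact Finset.one_lt_card.mpr ⟨w', hw'', w, hw, h2⟩
  · exact Finset.card_pos.mpr ⟨w, hw⟩

noncomputable def Quad.lift (σ : K →+* ℝ) (r : ℝ) (hr : r * r = σ a) : L →+* ℝ where
  toFun x := σ (Q.re x) + r * σ (Q.im x)
  map_one' := by simp
  map_zero' := by simp
  map_add' x y := by simp; ring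
  map_mul' x y := by simp [← hr]; ring

theorem Quad.card_real_ge (Q : Quad K L a) [DecidablePred (fun σ : K →+* ℝ => LSq (.inr σ) a)] :
    2 * (Finset.univ.filter (fun σ : K →+* ℝ => LSq (.inr σ) a)).card ≤ Fintype.card (L →+* ℝ) := by
  classical
  set A := Finset.univ.filter (fun σ : K →+* ℝ => LSq (.inr σ) a)
  have h1 : (Finset.univ.filter (fun φ : L →+* ℝ => φ.comp (algebraMap K L) ∈ A)).card ≤
      Fintype.card (L →+* ℝ) := by
    rw [← Finset.card_univ]; exact Finset.card_le_card (Finset.filter_subset _ _)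
  refine le_trans ?_ h1
  rw [Finset.card_eq_sum_card_fiberwise (f := fun φ : L →+* ℝ => φ.comp (algebraMap K L)) (t := A)
    (fun w hw => by simpa using hw), mul_comm, ← smul_eq_mul]
  apply Finset.card_nsmul_le_sum
  intro σ hσ
  obtain ⟨r, hr⟩ := (Finset.mem_filter.mp hσ).2
  have hr0 : r ≠ 0 := by
    rintro rfl
    exact Q.a_ne (by simpa using hr)
  refine Finset.one_lt_card.mpr ⟨Q.lift σ r hr.symm, ?_, Q.lift σ (-r) (by rw [hr]; ring), ?_, ?_⟩
  · have : (Q.lift σ r hr.symm).comp (algebraMap K L) = σ := by ext x; simp [Quad.lift]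
    simp [this, hσ]
  · have : (Q.lift σ (-r) (by rw [hr]; ring)).comp (algebraMap K L) = σ := by ext x; simp [Quad.lift]
    simp [this, hσ]
  · intro h
    have := congrArg (fun φ : L →+* ℝ => φ Q.s) h
    simp [Quad.lift] at this
    exact hr0 (by linarith)

theorem Quad.finrank_two (Q : Quad K L a) : Module.finrank K L = 2 := by
  let e : L ≃ₗ[K] (K × K) :=
    { toFun := fun x => (Q.re x, Q.im x)
      invFun := fun p => Q.mk p.1 p.2
      map_add' := fun x y => by simp
      map_smul' := fun c x => by simp [Algebra.smul_def]
      left_inv := fun x => Q.mk_eta x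
      right_inv := fun p => by simp }
  rw [e.finrank_eq]; simp

open Classical in
theorem Quad.card_L (Q : Quad K L a) (S : Finset (HeightOneSpectrum (𝓞 K))) :
    2 * (S.card + Fintype.card (InfinitePlace K)) ≤ (above L S).card + Fintype.card (InfinitePlace L) +
      ((pls S).filter (fun p => ¬ LSq p a)).card := by
  have h1 := Q.card_above S
  have h2 := Q.card_real_ge
  have h3 : ((pls S).filter (fun p => ¬ LSq p a)).card = (S.filter (fun v => ¬ LSq (.inl v) a)).card +
      (Finset.univ.filter (fun σ : K →+* ℝ => ¬ LSq (.inr σ) a)).card := by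
    simp only [Finset.card_filter, pls, Finset.sum_disjSum]
  have h4 := Finset.card_filter_add_card_filter_not (s := S) (fun v => LSq (.inl v) a)
  have h5 := Finset.card_filter_add_card_filter_not (s := Finset.univ) (fun σ : K →+* ℝ => LSq (.inr σ) a)
  rw [Finset.card_univ, card_real] at h5
  rw [card_real] at h2
  have h6 := Module.finrank_mul_finrank ℚ K L
  rw [Q.finrank_two, ← InfinitePlace.card_add_two_mul_card_eq_rank,
    ← InfinitePlace.card_add_two_mul_card_eq_rank] at h6
  rw [InfinitePlace.card_eq_nrRealPlaces_add_nrComplexPlaces,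
    InfinitePlace.card_eq_nrRealPlaces_add_nrComplexPlaces]
  omega

end
end HM

open IsDedekindDomain NumberField
namespace HM
section
variable {K : Type*} [Field K] [NumberField K]

theorem val_sq_one {v : HeightOneSpectrum (𝓞 K)} {y : K} (h : v.valuation K (y ^ 2) = 1) :
    v.valuation K y = 1 := by
  rw [map_pow] at h
  exact (pow_eq_one_iff_of_nonneg zero_le (two_ne_zero)).mp h

theorem mem_sqs_SU {S : Finset (HeightOneSpectrum (𝓞 K))} {x : SU S} :
    x ∈ sqs (SU S) ↔ IsSquare ((x : Kˣ) : K) := by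
  rw [mem_sqs]
  constructor
  · rintro ⟨y, rfl⟩
    exact ⟨((y : Kˣ) : K), by simp [pow_two]⟩
  · rintro ⟨y, hy⟩
    have hy0 : y ≠ 0 := by
      rintro rfl
      simp at hy
    refine ⟨⟨Units.mk0 y hy0, fun v hv => ?_⟩, ?_⟩
    · have := x.2 v hv
      rw [hy, ← pow_two] at this
      exact val_sq_one this
    · ext
      simp [hy, pow_two]

/-- good set for `a` -/
structure Good (a : K) (S : Finset (HeightOneSpectrum (𝓞 K))) : Prop where
  two : ∀ v ∉ S, v.valuation K 2 = 1
  unit : ∀ v ∉ S, v.valuation K a = 1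
  cl : Cl1 S

theorem Good.mono {a : K} {S T : Finset (HeightOneSpectrum (𝓞 K))} (h : Good a S) (hST : S ⊆ T) :
    Good a T :=
  ⟨fun v hv => h.two v (fun h => hv (hST h)), fun v hv => h.unit v (fun h => hv (hST h)), h.cl.mono hST⟩

theorem exists_good (a : K) (ha : a ≠ 0) (S : Finset (HeightOneSpectrum (𝓞 K))) :
    ∃ T, S ⊆ T ∧ Good a T := by
  classical
  obtain ⟨C, hC⟩ := exists_Cl1 K
  have h2 := fin_supp (2 : K) two_ne_zero
  have h3 := fin_supp a ha
  refine ⟨S ∪ (C ∪ (h2.toFinset ∪ h3.toFinset)), Finset.subset_union_left, ?_, ?_, ?_⟩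
  · intro v hv
    by_contra h
    exact hv (by simp [h])
  · intro v hv
    by_contra h
    exact hv (by simp [h])
  · apply hC.mono
    intro v hv
    simp [hv]

theorem arithA {n sL t s : ℕ} (hQI : n * 2 ^ sL * 2 = 2 ^ (s * 2)) (hc : 2 * s ≤ sL + t) :
    n ≠ 0 ∧ 2 * n ≤ 2 ^ t := by
  constructor
  · rintro rfl
    have : 0 < 2 ^ (s * 2) := by positivity
    omega
  · have h1 : 2 ^ (s * 2) ≤ 2 ^ (sL + t) := Nat.pow_le_pow_right (by norm_num) (by omega)
    rw [← hQI, pow_add] at h1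
    have h2 : 0 < 2 ^ sL := by positivity
    apply Nat.le_of_mul_le_mul_left _ h2
    calc _ = n * 2 ^ sL * 2 := by ring
      _ ≤ _ := h1

variable {L : Type*} [Field L] [NumberField L] [Algebra K L]
variable {a : K} (Q : Quad K L a)

theorem iU_SU (S : Finset (HeightOneSpectrum (𝓞 K))) {x : Kˣ} (hx : x ∈ SU S) :
    (Quad.iU x : Lˣ) ∈ SU (above L S) := by
  intro w hw
  exact (val_un_eq_one w _).mpr (hx (un K w) (by simpa using hw))

theorem Quad.τ_SU (S : Finset (HeightOneSpectrum (𝓞 K))) {y : L}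
    (hy : ∀ w ∉ above L S, w.valuation L y = 1) : ∀ w ∉ above L S, w.valuation L (Q.τ y) = 1 := by
  intro w hw
  obtain ⟨w', hw'⟩ := Q.exists_conj w
  rw [← hw']
  apply hy
  rw [mem_above, Q.un_conj hw', ← mem_above (L := L)]
  exact hw

theorem Quad.N_SU (S : Finset (HeightOneSpectrum (𝓞 K))) {x : Lˣ} (hx : x ∈ SU (above L S)) :
    Q.NU x ∈ SU S := by
  intro v hv
  obtain ⟨w, rfl⟩ := exists_above (L := L) v
  rw [← val_un_eq_one w]
  change w.valuation L (algebraMap K L (Q.N x)) = 1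
  have hw : w ∉ above L S := by simpa using hv
  rw [Q.alg_N, map_mul, hx w hw, Q.τ_SU S hx w hw, one_mul]

open Classical in
theorem Quad.lemmaA (Q : Quad K L a) (S : Finset (HeightOneSpectrum (𝓞 K))) (hS : Good a S) :
    ((SU (above L S)).map Q.NU).relIndex (SU S) ≠ 0 ∧
    2 * ((SU (above L S)).map Q.NU).relIndex (SU S) ≤ 2 ^ ((pls S).filter (fun p => ¬ LSq p a)).card := by
  set i : SU S →* SU (above L S) :=
    ((Quad.iU : Kˣ →* Lˣ).comp (SU S).subtype).codRestrict _ (fun x => iU_SU S x.2) with hi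
  set N : SU (above L S) →* SU S :=
    (Q.NU.comp (SU (above L S)).subtype).codRestrict _ (fun x => Q.N_SU S x.2) with hN
  have hiv : ∀ x, (((i x : Lˣ)) : L) = algebraMap K L ((x : Kˣ) : K) := fun x => rfl
  have hNv : ∀ x, (((N x : Kˣ)) : K) = Q.N ((x : Lˣ) : L) := fun x => rfl
  have hQI := QI i N ?_ ?_ ?_
  · have hrel : (sqs (SU S)).relIndex ((sqs (SU (above L S))).comap i) = 2 := by
      rw [Subgroup.relIndex_eq_two_iff_exists_notMem_and]
      have ha : Units.mk0 a Q.a_ne ∈ SU S := hS.unit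
      refine ⟨⟨_, ha⟩, ?_, ?_, ?_⟩
      · rw [Subgroup.mem_comap, mem_sqs_SU]
        exact ⟨Q.s, Q.ss.symm⟩
      · rw [mem_sqs_SU]; exact Q.nsq
      · intro b hb
        rw [Subgroup.mem_comap, mem_sqs_SU] at hb
        rw [mem_sqs_SU, mem_sqs_SU]
        exact (Q.sq_of hb).symm
    have hidx : N.range.index = ((SU (above L S)).map Q.NU).relIndex (SU S) := by
      rw [Subgroup.relIndex]
      congr 1
      ext x
      rw [Subgroup.mem_subgroupOf, Subgroup.mem_map]
      constructor
      · rintro ⟨y, rfl⟩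
        exact ⟨y, y.2, rfl⟩
      · rintro ⟨y, hy, h⟩
        exact ⟨⟨y, hy⟩, Subtype.ext h⟩
    rw [hrel, hidx, sqs_SU, sqs_SU, ← pow_mul] at hQI
    exact arithA hQI (Q.card_L S)
  · intro b
    ext
    rw [hNv, hiv, Q.N_alg]
    rfl
  · intro x hx
    have hx1 : Q.N ((x : Lˣ) : L) = 1 := by rw [← hNv, hx]; rfl
    obtain ⟨y, hy, h⟩ := Q.h90 hx1
    have hpq : Q.re y ≠ 0 ∨ Q.im y ≠ 0 := by
      by_contra! hc
      apply hy
      apply Q.hext <;> simp [hc.1, hc.2]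
    obtain ⟨c, hc⟩ := hS.cl.gcd (Q.re y) (Q.im y) hpq
    have hwy : ∀ w ∉ above L S, w.valuation L y = w.valuation L (algebraMap K L c) := by
      intro w hw
      have hw' : un K w ∉ S := by simpa using hw
      have hs : w.valuation L Q.s = 1 := by
        apply val_sq_one
        rw [pow_two, Q.ss, val_un_eq_one]
        exact hS.unit _ hw'
      have h2 : w.valuation L 2 = 1 := by
        rw [← map_ofNat (algebraMap K L) 2, val_un_eq_one]
        exact hS.two _ hw'
      have hτ : w.valuation L (Q.τ y) = w.valuation L y := by
        conv_rhs => rw [← h, map_mul, x.2 w hw, one_mul]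
      have hp : w.valuation L (algebraMap K L (Q.re y)) ≤ w.valuation L y := by
        have e : 2 * algebraMap K L (Q.re y) = y + Q.τ y := by
          apply Q.hext
          · rw [two_mul]; simp
          · rw [two_mul]; simp
        calc _ = w.valuation L (2 * algebraMap K L (Q.re y)) := by rw [map_mul, h2, one_mul]
          _ ≤ _ := by rw [e]; apply (Valuation.map_add _ _ _).trans; rw [hτ, max_self]
      have hq : w.valuation L (algebraMap K L (Q.im y)) ≤ w.valuation L y := by
        have e : 2 * algebraMap K L (Q.im y) * Q.s = y - Q.τ y := by
          rw [sub_eq_add_neg]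
          apply Q.hext
          · rw [two_mul]; simp
          · rw [two_mul]; simp
        calc _ = w.valuation L (2 * algebraMap K L (Q.im y) * Q.s) := by
              rw [map_mul, map_mul, h2, hs, one_mul, mul_one]
          _ ≤ _ := by rw [e]; apply (Valuation.map_sub _ _ _).trans; rw [hτ, max_self]
      have hle : w.valuation L y ≤ max (w.valuation L (algebraMap K L (Q.re y)))
          (w.valuation L (algebraMap K L (Q.im y))) := by
        conv_lhs => rw [Q.eta y]
        apply (Valuation.map_add _ _ _).trans
        rw [map_mul, hs, mul_one]
      have hcc := hc _ hw'
      apply le_antisymm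
      · apply hle.trans
        apply max_le
        · rw [val_un_le, hcc]; exact le_max_left _ _
        · rw [val_un_le, hcc]; exact le_max_right _ _
      · rcases le_total ((un K w).valuation K (Q.re y)) ((un K w).valuation K (Q.im y)) with h' | h'
        · rw [max_eq_right h'] at hcc
          rw [(val_un_eq w _ _).mpr hcc]; exact hq
        · rw [max_eq_left h'] at hcc
          rw [(val_un_eq w _ _).mpr hcc]; exact hp
    have hc0 : algebraMap K L c ≠ 0 := by simp
    set y' := y / algebraMap K L c with hy'
    have hy'0 : y' ≠ 0 := div_ne_zero hy hc0
    have hy'm : Units.mk0 y' hy'0 ∈ SU (above L S) := by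
      intro w hw
      rw [Units.val_mk0, hy', map_div₀, hwy w hw, div_self]
      simp
    refine ⟨⟨_, hy'm⟩, (N ⟨_, hy'm⟩)⁻¹, ?_⟩
    rw [map_inv, eq_mul_inv_iff_mul_eq]
    ext
    have e := Q.alg_N y'
    change ((x : Lˣ) : L) * algebraMap K L (Q.N y') = y' ^ 2
    have hτ : ((x : Lˣ) : L) * Q.τ y' = y' := by
      rw [hy', map_div₀, Q.τ_alg, mul_div_assoc', h]
    rw [e, mul_left_comm, hτ, sq]
  · intro y
    refine ⟨y ^ 2 * (i (N y))⁻¹, N y, ?_, ?_⟩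
    · ext
      rw [map_mul, map_inv, map_pow]
      have : N (i (N y)) = N y ^ 2 := by
        ext
        rw [hNv, hiv, Q.N_alg]
        rfl
      rw [this, mul_inv_cancel]
    · rw [inv_mul_cancel_right]

end
end HM

open IsDedekindDomain NumberField
namespace HM
section
universe u
variable {K : Type u} [Field K] [NumberField K]

theorem mem_biInf {G ι : Type*} [Group G] {T : Finset ι} {H : ι → Subgroup G} {x : G} :
    x ∈ ⨅ p ∈ T, H p ↔ ∀ p ∈ T, x ∈ H p := by
  simp only [Subgroup.mem_iInf]

theorem iInf_index (T : Finset (Pl K)) (H : Pl K → Subgroup Kˣ) (hH : ∀ p, Sq p ≤ H p) :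
    (⨅ p ∈ T, H p).index = ∏ p ∈ T, (H p).index := by
  classical
  induction T using Finset.induction_on with
  | empty => simp
  | insert q T hq ih =>
    rw [Finset.iInf_insert, Finset.prod_insert hq, ← ih]
    set M := ⨅ p ∈ T, H p with hM
    have hsup : H q ⊔ M = ⊤ := by
      rw [eq_top_iff]
      intro y _
      obtain ⟨x, hx⟩ := weak_sq (insert q T) (fun p => if p = q then (1 : K) else (y : K)) (by
        intro p _
        by_cases hp : p = q <;> simp [hp])
      have e : y = x⁻¹ * (x * y) := by rw [inv_mul_cancel_left]
      rw [e]
      apply Subgroup.mul_mem_sup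
      · apply (H q).inv_mem
        apply hH
        have := hx q (Finset.mem_insert_self _ _)
        rw [mem_Sq]
        simpa using this
      · rw [hM, mem_biInf]
        intro p hp
        apply hH
        have := hx p (Finset.mem_insert_of_mem hp)
        have hpq : p ≠ q := by rintro rfl; exact hq hp
        rw [mem_Sq]
        simpa [hpq] using this
    rw [← Subgroup.relIndex_mul_index (inf_le_right : H q ⊓ M ≤ M), Subgroup.inf_relIndex_right,
      ← Subgroup.relIndex_sup_left, hsup, Subgroup.relIndex_top_right]

theorem iInf_index_ne (T : Finset (Pl K)) (a : K) : (⨅ p ∈ T, Nm a p).index ≠ 0 := by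
  rw [iInf_index _ _ (Sq_le_Nm a), Finset.prod_ne_zero_iff]
  exact fun p _ => Nm_index_ne a p

open Classical in
theorem iInf_Nm_ge (T : Finset (Pl K)) (a : K) :
    2 ^ (T.filter (fun p => ¬ LSq p a)).card ≤ (⨅ p ∈ T, Nm a p).index := by
  rw [iInf_index _ _ (Sq_le_Nm a), Finset.card_filter, ← Finset.prod_pow_eq_pow_sum]
  apply Finset.prod_le_prod'
  intro p _
  have h0 := Nm_index_ne a p
  by_cases h : LSq p a
  · simp only [h, not_true, if_false]; omega
  · simp only [h, not_false_eq_true, if_true]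
    have : (Nm a p).index ≠ 1 := fun h1 => Nm_ne_top h (Subgroup.index_eq_one.mp h1)
    omega

theorem Quad.NU_mem {L : Type*} [Field L] [Algebra K L] {a : K} (Q : Quad K L a) (x : Lˣ) (p : Pl K) :
    Q.NU x ∈ Nm a p := by
  rw [mem_Nm]
  have e : ((Q.NU x : Kˣ) : K) = Q.re x ^ 2 - a * Q.im x ^ 2 := rfl
  refine ⟨Q.re x, Q.im x, ?_, ?_⟩
  · rw [← e]; exact Units.ne_zero _
  · rw [← e]; exact LSq_self _ _

theorem exists_ext (a : K) (ha : ¬ IsSquare a) : ∃ (L : Type u) (_ : Field L) (_ : NumberField L)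
    (_ : Algebra K L), Nonempty (Quad K L a) := by
  obtain ⟨L, i1, i2, i3, hQ⟩ := exists_quad K two_ne_zero a ha
  have : NumberField L := by
    have : CharZero L := charZero_of_injective_algebraMap (algebraMap K L).injective
    exact NumberField.of_module_finite K L
  exact ⟨L, i1, this, i2, hQ⟩

theorem lemmaB (a : K) (ha : ¬ IsSquare a) (S : Finset (HeightOneSpectrum (𝓞 K))) (hS : Good a S) :
    SU S ⊔ ⨅ p ∈ pls S, Nm a p ≠ ⊤ := by
  classical
  intro htop
  obtain ⟨L, _, _, _, ⟨Q⟩⟩ := exists_ext a ha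
  obtain ⟨h0, h1⟩ := Q.lemmaA S hS
  set M := ⨅ p ∈ pls S, Nm a p with hM
  have h2 := iInf_Nm_ge (pls S) a
  rw [← hM, ← Subgroup.relIndex_top_right, ← htop, sup_comm, Subgroup.relIndex_sup_left] at h2
  have h3 : (SU (above L S)).map Q.NU ≤ M := by
    rintro _ ⟨x, -, rfl⟩
    rw [hM, mem_biInf]
    exact fun p _ => Q.NU_mem x p
  have h4 := Subgroup.relIndex_le_of_le_left h3 h0
  omega

/-- density statement for a single nonsquare -/
theorem dens1 (a : K) (ha : ¬ IsSquare a) (S : Finset (HeightOneSpectrum (𝓞 K))) :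
    ∃ v ∉ S, ¬ LSq (.inl v) a := by
  classical
  by_contra! hc
  have ha0 : a ≠ 0 := by rintro rfl; exact ha ⟨0, by simp⟩
  obtain ⟨T, hST, hT⟩ := exists_good a ha0 S
  set M := ⨅ p ∈ pls T, Nm a p with hM
  have hMi : M.index ≠ 0 := iInf_index_ne _ _
  have : Finite (Kˣ ⧸ M) := by
    have : M.FiniteIndex := ⟨hMi⟩
    exact Subgroup.finite_quotient_of_finiteIndex
  have : Fintype (Kˣ ⧸ M) := Fintype.ofFinite _
  set R : Finset (HeightOneSpectrum (𝓞 K)) := T ∪ Finset.univ.biUnion (fun c : Kˣ ⧸ M =>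
    (fin_supp ((Quotient.out c : Kˣ) : K) (Units.ne_zero _)).toFinset) with hR
  have hTR : T ⊆ R := Finset.subset_union_left
  apply lemmaB a ha R (hT.mono hTR)
  rw [eq_top_iff]
  intro y _
  have e : y = (Quotient.out (y : Kˣ ⧸ M) : Kˣ) * ((Quotient.out (y : Kˣ ⧸ M) : Kˣ)⁻¹ * y) := by
    rw [mul_inv_cancel_left]
  rw [e]
  apply Subgroup.mul_mem_sup
  · intro v hv
    by_contra hne
    apply hv
    rw [hR, Finset.mem_union]
    right
    rw [Finset.mem_biUnion]
    exact ⟨(y : Kˣ ⧸ M), Finset.mem_univ _, by simpa using hne⟩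
  · have h1 : (Quotient.out (y : Kˣ ⧸ M) : Kˣ)⁻¹ * y ∈ M := by
      rw [← QuotientGroup.eq]
      exact Quotient.out_eq _
    rw [hM, mem_biInf] at h1
    rw [mem_biInf]
    rintro (v | σ) hp
    · by_cases hv : v ∈ T
      · exact h1 _ (by simpa using hv)
      · rw [Nm_eq_top (hc v (fun h => hv (hST h))) ha0]
        trivial
    · exact h1 _ (by simp)

/-- unit square classes at odd places -/
theorem odd_units {v : HeightOneSpectrum (𝓞 K)} (h2 : v.valuation K 2 = 1) {x y : K}
    (hx : v.valuation K x = 1) (hy : v.valuation K y = 1)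
    (hx' : ¬ LSq (.inl v) x) (hy' : ¬ LSq (.inl v) y) : LSq (.inl v) (x * y) := by
  have hq : (lf v).q = 1 := by
    obtain ⟨e, he, hq⟩ := q_eq v
    rw [h2, ← WithZero.exp_zero, WithZero.exp_inj] at he
    have : e = 0 := by omega
    rw [hq, this, pow_zero]
  have hidx : (Sq (.inl v : Pl K)).index = 4 := by rw [Sq_index_fin, hq]
  let U : Subgroup Kˣ := (v.valuation K).toMonoidWithZeroHom.toMonoidHom.comp (Units.coeHom K) |>.ker
  have hU : ∀ z : Kˣ, z ∈ U ↔ v.valuation K (z : K) = 1 := fun z => Iff.rfl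
  have hx0 : x ≠ 0 := by rintro rfl; simp at hx
  have hy0 : y ≠ 0 := by rintro rfl; simp at hy
  set H := Sq (.inl v : Pl K) with hH
  have hne : H ⊔ U ≠ ⊤ := by
    intro htop
    obtain ⟨π, hπ⟩ := v.valuation_exists_uniformizer K
    have hπ0 : π ≠ 0 := by
      rintro rfl
      rw [map_zero] at hπ
      exact WithZero.exp_ne_zero hπ.symm
    have hm : Units.mk0 π hπ0 ∈ H ⊔ U := by rw [htop]; trivial
    rw [Subgroup.mem_sup] at hm
    obtain ⟨s, hs, t, ht, hst⟩ := hm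
    have h1 : LSq (.inl v) (s : K) := hs
    obtain ⟨r, hr⟩ := (LSq_fin_iff v (Units.ne_zero s)).mp h1
    have h4 : v.valuation K (4 * (s : K)) = v.valuation K (s : K) := by
      have : (4 : K) = 2 * 2 := by norm_num
      rw [map_mul, this, map_mul, h2, one_mul, one_mul]
    rw [h4] at hr
    have h5 : v.valuation K (r ^ 2) = v.valuation K (s : K) := by
      rw [Valuation.map_sub_swap] at hr
      exact Valuation.map_eq_of_sub_lt _ hr
    have h6 : v.valuation K π = v.valuation K r ^ 2 := by
      have : π = s * t := by rw [← Units.val_mul, hst, Units.val_mk0]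
      rw [this, map_mul, (hU t).mp ht, mul_one, ← h5, map_pow]
    rw [hπ] at h6
    have hr0 : v.valuation K r ≠ 0 := by
      intro h0; rw [h0] at h6; simp at h6
    rw [← WithZero.exp_log hr0, ← WithZero.exp_nsmul] at h6
    have := WithZero.exp_inj.mp h6
    simp at this
    omega
  have hr : H.relIndex U ≤ 2 ∧ H.relIndex U ≠ 0 := by
    have h1 := Subgroup.relIndex_mul_index (le_sup_left : H ≤ H ⊔ U)
    rw [Subgroup.relIndex_sup_left, hidx] at h1
    have h2 : (H ⊔ U).index ≠ 1 := fun h => hne (Subgroup.index_eq_one.mp h)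
    constructor
    · by_contra! h3
      rcases Nat.lt_or_ge (H ⊔ U).index 2 with h4 | h4
      · have : (H ⊔ U).index = 0 := by omega
        rw [this] at h1
        omega
      · nlinarith
    · intro h0; rw [h0] at h1; omega
  have hxU : Units.mk0 x hx0 ∈ U := hx
  have hyU : Units.mk0 y hy0 ∈ U := hy
  have hr2 : H.relIndex U = 1 ∨ H.relIndex U = 2 := by omega
  rcases hr2 with h1 | h1
  · rw [Subgroup.relIndex_eq_one] at h1
    exact absurd (h1 hxU) hx'
  · have := (Subgroup.mul_mem_iff_of_index_two h1 (a := ⟨_, hxU⟩) (b := ⟨_, hyU⟩))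
    rw [Subgroup.mem_subgroupOf, Subgroup.mem_subgroupOf, Subgroup.mem_subgroupOf] at this
    exact this.mpr ⟨fun h => absurd h hx', fun h => absurd h hy'⟩

theorem dens2 (a b : K) (ha : ¬ IsSquare a) (hb : ¬ IsSquare b) (hab : ¬ IsSquare (b * a))
    (S : Finset (HeightOneSpectrum (𝓞 K))) :
    ∃ v ∉ S, LSq (.inl v) a ∧ ¬ LSq (.inl v) b := by
  have ha0 : a ≠ 0 := by rintro rfl; exact ha ⟨0, by simp⟩
  have hb0 : b ≠ 0 := by rintro rfl; exact hb ⟨0, by simp⟩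
  obtain ⟨T, hST, hT⟩ := exists_good a ha0 S
  obtain ⟨R, hTR, hR⟩ := exists_good b hb0 T
  have hRa := hT.mono hTR
  obtain ⟨L, _, _, _, ⟨Q⟩⟩ := exists_ext a ha
  obtain ⟨w, hw, hwb⟩ := dens1 (algebraMap K L b)
    (fun h => (Q.sq_of h).elim hb hab) (above L R)
  have hv : un K w ∉ R := by simpa using hw
  have h1 : ¬ LSq (.inl (un K w)) b := fun h => hwb (LSq_above w h)
  refine ⟨un K w, fun h => hv (hTR (hST h)), ?_, h1⟩
  by_contra h2
  have h3 := LSq_above w (odd_units (hR.two _ hv) (hR.unit _ hv) (hRa.unit _ hv) h1 h2)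
  rw [map_mul, ← Q.ss, ← pow_two] at h3
  exact hwb (LSq_of_mul_sq _ Q.s_ne h3)

end
end HM

open IsDedekindDomain NumberField
namespace HM
section
universe u
variable {K : Type u} [Field K] [NumberField K]

theorem odd_rel {v : HeightOneSpectrum (𝓞 K)} (h2 : v.valuation K 2 = 1)
    (S : Finset (HeightOneSpectrum (𝓞 K))) (hv : v ∉ S) : (Sq (.inl v : Pl K)).relIndex (SU S) ≤ 2 := by
  by_cases h : SU S ≤ Sq (.inl v : Pl K)
  · rw [Subgroup.relIndex_eq_one.mpr h]; norm_num
  · obtain ⟨e, he, he'⟩ := SetLike.not_le_iff_exists.mp h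
    apply le_of_eq
    rw [Subgroup.relIndex_eq_two_iff_exists_notMem_and]
    refine ⟨e, he, he', fun b hb => ?_⟩
    by_cases hb' : b ∈ Sq (.inl v : Pl K)
    · exact Or.inr hb'
    · exact Or.inl (odd_units h2 (hb v hv) (he v hv) hb' he')

theorem sqs_rel (S : Finset (HeightOneSpectrum (𝓞 K))) :
    (sqs Kˣ).relIndex (SU S) = 2 ^ (S.card + Fintype.card (InfinitePlace K)) := by
  rw [← sqs_SU, Subgroup.relIndex]
  congr 1
  ext x
  rw [Subgroup.mem_subgroupOf, mem_sqs_units, mem_sqs_SU]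

theorem Cl1.prod {S : Finset (HeightOneSpectrum (𝓞 K))} (hS : Cl1 S)
    (T : Finset (HeightOneSpectrum (𝓞 K))) (hT : ∀ v ∈ T, v ∉ S) (y : Kˣ) :
    ∃ c : Kˣ, (∀ v ∈ T, v.valuation K (c : K) = v.valuation K (y : K)) ∧
      ∀ v ∉ S, v ∉ T → v.valuation K (c : K) = 1 := by
  classical
  have : ∀ v, ∃ x : Kˣ, v ∉ S → v.valuation K (x : K) = WithZero.exp (-1 : ℤ) ∧
    ∀ w ∉ S, w ≠ v → w.valuation K (x : K) = 1 := by
    intro v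
    by_cases hv : v ∈ S
    · exact ⟨1, fun h => absurd hv h⟩
    · obtain ⟨x, hx⟩ := hS v hv
      exact ⟨x, fun _ => hx⟩
  choose π hπ using this
  refine ⟨∏ v ∈ T, (π v) ^ (- WithZero.log (v.valuation K (y : K))), fun v hvT => ?_, fun v hv hvT => ?_⟩
  · have hv := hT v hvT
    have hm0 : v.valuation K (y : K) ≠ 0 := by simp
    rw [Units.coe_prod, map_prod]
    rw [Finset.prod_eq_single_of_mem v hvT]
    · rw [Units.val_zpow_eq_zpow_val, map_zpow₀, (hπ v hv).1, ← WithZero.exp_zsmul]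
      simp [WithZero.exp_log hm0]
    · intro w hw hwv
      rw [Units.val_zpow_eq_zpow_val, map_zpow₀, (hπ w (hT w hw)).2 v hv hwv.symm, one_zpow]
  · rw [Units.coe_prod, map_prod, Finset.prod_eq_one]
    intro w hw
    rw [Units.val_zpow_eq_zpow_val, map_zpow₀, (hπ w (hT w hw)).2 v hv
        (by rintro rfl; exact hvT hw), one_zpow]

theorem exists_T (a : K) (ha : ¬ IsSquare a) (S : Finset (HeightOneSpectrum (𝓞 K))) (hS : Good a S) (k : ℕ)
    (hk : k + 1 ≤ S.card + Fintype.card (InfinitePlace K)) :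
    ∃ T : Finset (HeightOneSpectrum (𝓞 K)), (∀ v ∈ T, v ∉ S) ∧ T.card = k ∧ (∀ v ∈ T, LSq (.inl v) a) ∧
      (⨅ v ∈ T, Sq (.inl v : Pl K)).relIndex (SU S) ≤ 2 ^ k ∧
      ∀ P : HeightOneSpectrum (𝓞 K) → Prop, ∃ e ∈ SU S, ∀ v ∈ T, (LSq (.inl v) (e : K) ↔ P v) := by
  classical
  have ha0 : a ≠ 0 := by rintro rfl; exact ha ⟨0, by simp⟩
  induction k with
  | zero => exact ⟨∅, by simp, rfl, by simp, by simp, fun P => ⟨1, one_mem _, by simp⟩⟩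
  | succ k ih =>
    obtain ⟨T, hT1, hT2, hT3, hT4, hT5⟩ := ih (by omega)
    set M := ⨅ v ∈ T, Sq (.inl v : Pl K) with hM
    have haS : Units.mk0 a ha0 ∈ SU S := hS.unit
    have haM : Units.mk0 a ha0 ∈ M := by
      rw [hM, mem_biInf]
      exact fun v hv => hT3 v hv
    have hex : ∃ e ∈ M ⊓ SU S, ¬ IsSquare (e : K) ∧ ¬ IsSquare ((e : K) * a) := by
      by_contra! hc
      have hDM : sqs Kˣ ⊓ SU S ≤ M ⊓ SU S := by
        apply inf_le_inf_right
        rw [hM]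
        exact le_iInf₂ (fun v _ => sqs_le_Sq _)
      have h1 := Subgroup.relIndex_mul_relIndex _ _ _ hDM inf_le_right
      rw [Subgroup.inf_relIndex_right, Subgroup.inf_relIndex_right, sqs_rel] at h1
      have h2 : (sqs Kˣ ⊓ SU S).relIndex (M ⊓ SU S) = 2 := by
        rw [Subgroup.relIndex_eq_two_iff_exists_notMem_and]
        refine ⟨Units.mk0 a ha0, ⟨haM, haS⟩, ?_, ?_⟩
        · rintro ⟨h, -⟩
          exact ha (mem_sqs_units.mp h)
        · intro b hb
          by_cases hb' : IsSquare (b : K)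
          · exact Or.inr ⟨mem_sqs_units.mpr hb', hb.2⟩
          · exact Or.inl ⟨mem_sqs_units.mpr (hc b hb hb'), (SU S).mul_mem hb.2 haS⟩
      rw [h2] at h1
      have h3 : 2 ^ (k + 2) ≤ 2 ^ (S.card + Fintype.card (InfinitePlace K)) :=
        Nat.pow_le_pow_right (by norm_num) (by omega)
      have h4 : 0 < 2 ^ k := by positivity
      rw [← h1, pow_add] at h3
      omega
    obtain ⟨e, ⟨heM, heS⟩, he1, he2⟩ := hex
    replace heM : e ∈ M := heM
    replace heS : e ∈ SU S := heS
    obtain ⟨v, hv, hva, hve⟩ := dens2 a e ha he1 he2 (S ∪ T)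
    simp only [Finset.mem_union, not_or] at hv
    refine ⟨insert v T, ?_, ?_, ?_, ?_, ?_⟩
    · intro w hw
      rcases Finset.mem_insert.mp hw with rfl | hw
      · exact hv.1
      · exact hT1 w hw
    · rw [Finset.card_insert_of_notMem hv.2, hT2]
    · intro w hw
      rcases Finset.mem_insert.mp hw with rfl | hw
      · exact hva
      · exact hT3 w hw
    · rw [Finset.iInf_insert, pow_succ, mul_comm]
      exact Subgroup.relIndex_inf_le.trans (Nat.mul_le_mul (odd_rel (hS.two v hv.1) S hv.1) hT4)
    · intro P
      obtain ⟨e0, he0, hP⟩ := hT5 P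
      by_cases hgood : LSq (.inl v) (e0 : K) ↔ P v
      · refine ⟨e0, he0, fun w hw => ?_⟩
        rcases Finset.mem_insert.mp hw with rfl | hw
        · exact hgood
        · exact hP w hw
      · refine ⟨e0 * e, (SU S).mul_mem he0 heS, fun w hw => ?_⟩
        rcases Finset.mem_insert.mp hw with rfl | hw
        · by_cases h0 : LSq (.inl w) (e0 : K)
          · have hnP : ¬ P w := by tauto
            refine ⟨fun h => absurd ?_ hve, fun h => absurd h hnP⟩
            have h' : e0 * e ∈ Sq (.inl w : Pl K) := h
            exact ((Sq (.inl w : Pl K)).mul_mem_cancel_left (show e0 ∈ _ from h0)).mp h'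
          · have hP' : P w := by tauto
            refine ⟨fun _ => hP', fun _ => ?_⟩
            exact odd_units (hS.two w hv.1) (he0 w hv.1) (heS w hv.1) h0 hve
        · rw [← hP w hw]
          rw [hM, mem_biInf] at heM
          exact (Sq (.inl w : Pl K)).mul_mem_cancel_right (heM w hw)

open Classical in
theorem lemmaC (S T : Finset (HeightOneSpectrum (𝓞 K)))
    (h2 : ∀ v ∉ S, v.valuation K 2 = 1) (hS : Cl1 S) (hT1 : ∀ v ∈ T, v ∉ S)
    (hT5 : ∀ P : HeightOneSpectrum (𝓞 K) → Prop, ∃ e ∈ SU S, ∀ v ∈ T, (LSq (.inl v) (e : K) ↔ P v))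
    (x : Kˣ) (hx : x ∈ SU (S ∪ T)) (hxS : ∀ p ∈ pls S, x ∈ Sq p) : IsSquare (x : K) := by
  by_contra hsq
  have hST : S ⊆ S ∪ T := Finset.subset_union_left
  apply lemmaB (x : K) hsq (S ∪ T)
    ⟨fun v hv => h2 v (fun h => hv (hST h)), hx, hS.mono hST⟩
  rw [eq_top_iff]
  intro y _
  obtain ⟨c, hc1, hc2⟩ := hS.prod T hT1 y
  obtain ⟨e, he, heP⟩ := hT5 (fun v => LSq (.inl v) ((c⁻¹ * y : Kˣ) : K))
  have hcm : c ∈ SU (S ∪ T) := by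
    intro v hv
    simp only [Finset.mem_union, not_or] at hv
    exact hc2 v hv.1 hv.2
  have ey : y = (c * e⁻¹) * (e * (c⁻¹ * y)) := by
    rw [mul_assoc, inv_mul_cancel_left, mul_inv_cancel_left]
  rw [ey]
  apply Subgroup.mul_mem_sup
  · exact (SU _).mul_mem hcm ((SU _).inv_mem (SU_mono hST he))
  · rw [mem_biInf]
    intro p hp
    by_cases hpS : p ∈ pls S
    · rw [Nm_eq_top (hxS p hpS) (Units.ne_zero x)]; trivial
    · rcases p with v | σ
      · have hvS : v ∉ S := by simpa using hpS
        have hvT : v ∈ T := by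
          have : v ∈ S ∪ T := by simpa using hp
          exact (Finset.mem_union.mp this).resolve_left hvS
        apply Sq_le_Nm
        have h3 := heP v hvT
        by_cases h4 : LSq (.inl v) (e : K)
        · exact (Sq (.inl v : Pl K)).mul_mem h4 (h3.mp h4)
        · refine odd_units (h2 v hvS) (he v hvS) ?_ h4 (fun h => h4 (h3.mpr h))
          rw [Units.val_mul, map_mul, Units.val_inv_eq_inv_val, map_inv₀, hc1 v hvT]
          exact inv_mul_cancel₀ (by simp)
      · exact absurd (mem_pls_inr σ) hpS

theorem norm_thm (a : K) (ha : ¬ IsSquare a) (b : Kˣ) (hb : ∀ p : Pl K, b ∈ Nm a p) :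
    ∃ x y : K, (b : K) = x ^ 2 - a * y ^ 2 := by
  classical
  have ha0 : a ≠ 0 := by rintro rfl; exact ha ⟨0, by simp⟩
  obtain ⟨S, hbS, hS⟩ := exists_good a ha0 (fin_supp (b : K) (Units.ne_zero b)).toFinset
  have hbS' : b ∈ SU S := by
    intro v hv
    by_contra h
    exact hv (hbS (by simpa using h))
  have hpos : 0 < Fintype.card (InfinitePlace K) := Fintype.card_pos
  obtain ⟨T, hT1, hT2, hT3, -, hT5⟩ := exists_T a ha S hS
    (S.card + Fintype.card (InfinitePlace K) - 1) (by omega)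
  set R := S ∪ T with hR
  have hSR : S ⊆ R := Finset.subset_union_left
  have hcard : R.card = S.card + T.card := by
    rw [hR]
    apply Finset.card_union_of_disjoint
    rw [Finset.disjoint_right]
    exact hT1
  obtain ⟨L, _, _, _, ⟨Q⟩⟩ := exists_ext a ha
  obtain ⟨hA0, hA1⟩ := Q.lemmaA R (hS.mono hSR)
  have ht : ((pls R).filter (fun p => ¬ LSq p a)).card ≤ ((pls S).filter (fun p => ¬ LSq p a)).card := by
    apply Finset.card_le_card
    intro p hp
    rw [Finset.mem_filter] at hp ⊢
    refine ⟨?_, hp.2⟩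
    rcases p with v | σ
    · have hv := hp.1
      rw [mem_pls_inl, hR, Finset.mem_union] at hv
      rcases hv with hv | hv
      · simpa using hv
      · exact absurd (hT3 v hv) hp.2
    · simp
  set D := ⨅ p ∈ pls S, Sq p with hD
  set B := ⨅ p ∈ pls S, Nm a p with hB
  set s := S.card + Fintype.card (InfinitePlace K) with hs
  have hDB : D ≤ B := iInf₂_mono (fun p _ => Sq_le_Nm a p)
  have hDi : D.index = 4 ^ s := by
    rw [hD, iInf_index _ _ (fun p => le_rfl), prod_Sq S hS.two]
  have hDR : D.relIndex (SU R) = 2 ^ (2 * s - 1) := by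
    have e1 : D.relIndex (SU R) = (sqs Kˣ).relIndex (SU R) := by
      rw [Subgroup.relIndex, Subgroup.relIndex]
      congr 1
      ext x
      rw [Subgroup.mem_subgroupOf, Subgroup.mem_subgroupOf]
      constructor
      · intro h
        rw [hD, mem_biInf] at h
        exact mem_sqs_units.mpr (lemmaC S T hS.two hS.cl hT1 hT5 x x.2 h)
      · intro h
        rw [hD, mem_biInf]
        exact fun p _ => sqs_le_Sq p h
    rw [e1, sqs_rel]
    congr 1
    omega
  have hsup : (D ⊔ SU R).index = 2 := by
    have h1 := Subgroup.relIndex_mul_index (le_sup_left : D ≤ D ⊔ SU R)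
    rw [Subgroup.relIndex_sup_left, hDR, hDi] at h1
    have h2 : (4 : ℕ) ^ s = 2 ^ (2 * s - 1) * 2 := by
      rw [← pow_succ, show (4 : ℕ) = 2 ^ 2 by norm_num, ← pow_mul]
      congr 1
      omega
    rw [h2] at h1
    exact Nat.eq_of_mul_eq_mul_left (by positivity) h1
  have hBR : B.index ≤ 2 * B.relIndex (SU R) := by
    have h1 := Subgroup.relIndex_mul_index (le_sup_left : B ≤ B ⊔ SU R)
    rw [Subgroup.relIndex_sup_left] at h1
    have h2 : (B ⊔ SU R).index ∣ 2 := by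
      rw [← hsup]
      exact Subgroup.index_dvd_of_le (sup_le_sup_right hDB _)
    have h3 := Nat.le_of_dvd (by norm_num) h2
    rw [← h1, mul_comm]
    exact Nat.mul_le_mul_right _ h3
  have hBt := iInf_Nm_ge (pls S) a
  rw [← hB] at hBt
  set N := (SU (above L R)).map Q.NU with hN
  have hNB : N ≤ B ⊓ SU R := by
    rintro _ ⟨x, hx, rfl⟩
    refine ⟨?_, Q.N_SU R hx⟩
    change _ ∈ B
    rw [hB, mem_biInf]
    exact fun p _ => Q.NU_mem x p
  have hmul := Subgroup.relIndex_mul_relIndex _ _ _ hNB inf_le_right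
  rw [Subgroup.inf_relIndex_right] at hmul
  have hpow : 2 ^ ((pls R).filter (fun p => ¬ LSq p a)).card ≤
    2 ^ ((pls S).filter (fun p => ¬ LSq p a)).card := Nat.pow_le_pow_right (by norm_num) ht
  have hone : N.relIndex (B ⊓ SU R) = 1 := by
    rw [← hmul] at hA0 hA1
    have p1 : B.relIndex (SU R) ≠ 0 := right_ne_zero_of_mul hA0
    have p2 : N.relIndex (B ⊓ SU R) ≠ 0 := left_ne_zero_of_mul hA0
    have h1 : N.relIndex (B ⊓ SU R) * B.relIndex (SU R) ≤ B.relIndex (SU R) := by omega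
    have h2 : N.relIndex (B ⊓ SU R) ≤ 1 := by
      by_contra! h
      have := Nat.mul_le_mul_right (B.relIndex (SU R)) h
      omega
    omega
  rw [Subgroup.relIndex_eq_one] at hone
  have hbm : b ∈ B ⊓ SU R := by
    refine ⟨?_, SU_mono hSR hbS'⟩
    change b ∈ B
    rw [hB, mem_biInf]
    exact fun p _ => hb p
  obtain ⟨x, -, hx⟩ := hone hbm
  refine ⟨Q.re x, Q.im x, ?_⟩
  rw [← hx]
  rfl

end
end HM

open IsDedekindDomain NumberField
namespace HM
section
universe u
variable {K : Type u} [Field K] [NumberField K]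

/-- local isotropy, expressed over the global field -/
def LI {m : ℕ} (p : Pl K) (a : Fin m → K) : Prop :=
  ∃ e : Fin m → K, e ≠ 0 ∧ (∀ i, LSq p (e i)) ∧ ∑ i, a i * e i = 0

open Topology Filter in
theorem LI_gen {F : Type*} [NormedField F] (φ : K →+* F) (hd : DenseRange φ)
    (hU : ∀ z : F, z ≠ 0 → ∀ᶠ y in 𝓝 (z ^ 2), IsSquare y) {m : ℕ} (a : Fin m → K)
    (ha : ∀ i, a i ≠ 0) (z : Fin m → F) (hz : z ≠ 0) (h : ∑ i, φ (a i) * z i ^ 2 = 0) :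
    ∃ e : Fin m → K, e ≠ 0 ∧ (∀ i, IsSquare (φ (e i))) ∧ ∑ i, a i * e i = 0 := by
  classical
  obtain ⟨i0, hi0⟩ := Function.ne_iff.mp hz
  have hi0 : z i0 ≠ 0 := hi0
  have ha' : φ (a i0) ≠ 0 := (map_ne_zero φ).mpr (ha i0)
  let G : (Fin m → F) → F := fun w => -(∑ i ∈ Finset.univ.erase i0, φ (a i) * w i ^ 2) / φ (a i0)
  have hG : Continuous G := by fun_prop
  have hGz : G z = z i0 ^ 2 := by
    have := Finset.add_sum_erase Finset.univ (fun i => φ (a i) * z i ^ 2) (Finset.mem_univ i0)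
    simp only [G]
    rw [div_eq_iff ha']
    rw [h] at this
    linear_combination -this
  have h1 : ∀ᶠ w in 𝓝 z, IsSquare (G w) ∧ G w ≠ 0 := by
    have h0 : z i0 ^ 2 ≠ 0 := pow_ne_zero _ hi0
    have := (hU _ hi0).and (isOpen_ne.mem_nhds h0)
    rw [← hGz] at this
    exact hG.continuousAt.eventually this
  have hdd : DenseRange (Pi.map (fun _ : Fin m => (φ : K → F))) := DenseRange.piMap (fun _ => hd)
  obtain ⟨_, ⟨c, rfl⟩, hc⟩ := (Dense.inter_nhds_nonempty hdd h1)
  have hc : IsSquare (G (fun i => φ (c i))) ∧ G (fun i => φ (c i)) ≠ 0 := hc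
  let e0 : K := -(∑ i ∈ Finset.univ.erase i0, a i * c i ^ 2) / a i0
  have he0 : φ e0 = G (fun i => φ (c i)) := by simp [e0, G]
  refine ⟨fun i => if i = i0 then e0 else c i ^ 2, ?_, ?_, ?_⟩
  · intro h0
    have := congrFun h0 i0
    simp only [if_true, Pi.zero_apply] at this
    rw [← he0, this] at hc
    simp at hc
  · intro i
    dsimp only
    split_ifs
    · rw [he0]; exact hc.1
    · rw [map_pow]; exact ⟨_, pow_two _⟩
  · rw [← Finset.add_sum_erase Finset.univ _ (Finset.mem_univ i0)]
    simp only [if_true]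
    rw [Finset.sum_congr rfl (g := fun i => a i * c i ^ 2)]
    · simp only [e0]; rw [mul_div_cancel₀ _ (ha i0)]; simp
    · intro i hi; simp [Finset.ne_of_mem_erase hi]

open Topology Filter in
theorem LI_inl (v : HeightOneSpectrum (𝓞 K)) {m : ℕ} (a : Fin m → K)
    (ha : ∀ i, a i ≠ 0) (z : Fin m → v.adicCompletion K) (hz : z ≠ 0)
    (h : ∑ i, ι v (a i) * z i ^ 2 = 0) : LI (.inl v) a := by
  refine LI_gen (ι v) ?_ ?_ a ha z hz h
  · rw [Metric.denseRange_iff]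
    intro x r hr
    obtain ⟨y, hy⟩ := dense v x hr
    exact ⟨y, by rwa [dist_eq_norm]⟩
  · intro z hz
    have hz2 := pow_ne_zero 2 hz
    have h4 := (lf v).four
    have : ∀ᶠ y in 𝓝 (z ^ 2), ‖y - z ^ 2‖ < ‖4 * y‖ := by
      apply (ContinuousAt.eventually_lt (f := fun y => ‖y - z ^ 2‖) (g := fun y => ‖4 * y‖))
      · fun_prop
      · fun_prop
      · simp only [sub_self, norm_zero]; exact norm_pos_iff.mpr (mul_ne_zero h4 hz2)
    filter_upwards [this, isOpen_ne.mem_nhds hz2] with y hy hy0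
    exact (lf v).sq_crit y z hy0 hy

open Topology Filter in
theorem LI_inr (σ : K →+* ℝ) {m : ℕ} (a : Fin m → K)
    (ha : ∀ i, a i ≠ 0) (z : Fin m → ℝ) (hz : z ≠ 0)
    (h : ∑ i, σ (a i) * z i ^ 2 = 0) : LI (.inr σ) a := by
  refine LI_gen σ ?_ ?_ a ha z hz h
  · have : DenseRange ((↑) : ℚ → ℝ) := Rat.denseRange_cast
    refine Dense.mono ?_ this
    rintro _ ⟨q, rfl⟩
    exact ⟨q, by simp⟩
  · intro z hz
    have hz2 : 0 < z ^ 2 := by positivity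
    filter_upwards [lt_mem_nhds hz2] with y hy
    exact Real.isSquare_iff.mpr hy.le

theorem nmOf (p : Pl K) (α : K) {A C : K} (hA : LSq p A) (hC : LSq p C) (h : A - α * C ≠ 0) :
    Units.mk0 _ h ∈ Nm α p := by
  obtain ⟨ε, hε, H⟩ := open_sq p _ h
  have hα : 0 < abv p α + 1 := by have := (abv p).nonneg α; linarith
  obtain ⟨x, hx⟩ := approx_sqrt p hA (half_pos hε)
  obtain ⟨y, hy⟩ := approx_sqrt p hC (div_pos (half_pos hε) hα)
  have key : abv p ((x ^ 2 - α * y ^ 2) - (A - α * C)) < ε := by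
    have e : (x ^ 2 - α * y ^ 2) - (A - α * C) = (x ^ 2 - A) - α * (y ^ 2 - C) := by ring
    rw [e]
    have h1 := (abv p).sub_le_add (x ^ 2 - A) (α * (y ^ 2 - C))
    rw [map_mul] at h1
    rw [lt_div_iff₀ hα] at hy
    have := (abv p).nonneg (y ^ 2 - C)
    nlinarith
  obtain ⟨h1, h2⟩ := H _ key
  rw [mem_Nm]
  exact ⟨x, y, h1, by rw [mul_comm]; exact h2⟩

theorem nm4 (p : Pl K) {α β : K} (hα : α ≠ 0) (hβ : β ≠ 0) {A C E G : K} (hA : LSq p A) (hC : LSq p C)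
    (hE : LSq p E) (hG : LSq p G) (h0 : ¬ (A = 0 ∧ C = 0 ∧ E = 0 ∧ G = 0))
    (h : A - α * C = β * (E - α * G)) : Units.mk0 β hβ ∈ Nm α p := by
  by_cases hs : LSq p α
  · rw [Nm_eq_top hs hα]; trivial
  have key : ∀ {A C : K}, LSq p A → LSq p C → A - α * C = 0 → A = 0 ∧ C = 0 := by
    intro A C hA hC h
    by_cases hC0 : C = 0
    · subst hC0; simp at h; exact ⟨h, rfl⟩
    · exfalso; apply hs
      apply LSq_div p (y := C) _ hC hC0
      rwa [← sub_eq_zero.mp h]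
  by_cases h1 : A - α * C = 0
  · exfalso
    have h2 : E - α * G = 0 := by
      rw [h1] at h
      exact (mul_eq_zero.mp h.symm).resolve_left hβ
    have := key hA hC h1
    have := key hE hG h2
    tauto
  · have h2 : E - α * G ≠ 0 := by
      rintro h2; rw [h2, mul_zero] at h; exact h1 h
    have e : Units.mk0 β hβ = Units.mk0 _ h1 / Units.mk0 _ h2 := by
      ext; simp only [Units.val_mk0, Units.val_div_eq_div_val]; rw [eq_div_iff h2, h]
    rw [e]
    exact div_mem (nmOf p α hA hC h1) (nmOf p α hE hG h2)

end
end HM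

open IsDedekindDomain NumberField
namespace HM
section
universe u
variable {K : Type u} [Field K] [NumberField K]

/-- global isotropy -/
def GI {m : ℕ} (a : Fin m → K) : Prop :=
  ∃ x : Fin m → K, x ≠ 0 ∧ ∑ i, a i * x i ^ 2 = 0

theorem exists_place : Nonempty (HeightOneSpectrum (𝓞 K)) := by
  obtain ⟨P, hP, hP'⟩ := Ring.not_isField_iff_exists_prime.mp (RingOfIntegers.not_isField K)
  exact ⟨⟨P, hP', hP⟩⟩

theorem hm1 (a : Fin 1 → K) (ha : ∀ i, a i ≠ 0) (h : ∀ p : Pl K, LI p a) : GI a := by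
  exfalso
  obtain ⟨v⟩ := exists_place (K := K)
  obtain ⟨e, he, -, h⟩ := h (.inl v)
  simp [ha 0] at h
  exact he (by ext i; fin_cases i; exact h)

theorem hm2 (a : Fin 2 → K) (ha : ∀ i, a i ≠ 0) (h : ∀ p : Pl K, LI p a) : GI a := by
  have h1 : IsSquare (-(a 0 * a 1)) := by
    by_contra hs
    obtain ⟨v, -, hv⟩ := dens1 _ hs ∅
    apply hv
    obtain ⟨e, he, he2, h⟩ := h (.inl v)
    simp only [Fin.sum_univ_two] at h
    have h10 := ha 1
    have h00 := ha 0
    have e0 : e 0 ≠ 0 := by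
      intro h0
      apply he
      rw [h0] at h
      simp [h10] at h
      ext i; fin_cases i
      · exact h0
      · exact h
    apply LSq_div _ (y := e 0) _ (he2 0) e0
    have : -(a 0 * a 1) * e 0 = e 1 * a 1 ^ 2 := by linear_combination (-a 1) * h
    rw [this]
    exact LSq_mul _ (he2 1) (LSq_sq _ _)
  obtain ⟨r, hr⟩ := h1
  refine ⟨![a 1, r], fun h => ha 1 (congrFun h 0), ?_⟩
  simp only [Fin.sum_univ_two, Matrix.cons_val_zero, Matrix.cons_val_one]
  linear_combination (-a 1) * hr

theorem fin_tern (a0 a1 a2 : K) (h0 : a0 ≠ 0) (h1 : a1 ≠ 0) (h2 : a2 ≠ 0)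
    (h : ∀ p : Pl K, Units.mk0 (-(a0 * a2)) (neg_ne_zero.mpr (mul_ne_zero h0 h2)) ∈ Nm (-(a0 * a1)) p) :
    ∃ x y z : K, ¬ (x = 0 ∧ y = 0 ∧ z = 0) ∧ a0 * x ^ 2 + a1 * y ^ 2 + a2 * z ^ 2 = 0 := by
  by_cases hs : IsSquare (-(a0 * a1))
  · obtain ⟨r, hr⟩ := hs
    exact ⟨a1, r, 0, by tauto, by linear_combination (-a1) * hr⟩
  · obtain ⟨x, y, hxy⟩ := norm_thm _ hs _ h
    rw [Units.val_mk0] at hxy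
    refine ⟨x / a0, y, 1, by simp, ?_⟩
    field_simp
    linear_combination -hxy

theorem hm3 (a : Fin 3 → K) (ha : ∀ i, a i ≠ 0) (h : ∀ p : Pl K, LI p a) : GI a := by
  have hα := neg_ne_zero.mpr (mul_ne_zero (ha 0) (ha 1))
  have hβ := neg_ne_zero.mpr (mul_ne_zero (ha 0) (ha 2))
  obtain ⟨x, y, z, h0, hxyz⟩ := fin_tern (a 0) (a 1) (a 2) (ha 0) (ha 1) (ha 2) (fun p => by
    obtain ⟨e, he, he2, h⟩ := h p
    simp only [Fin.sum_univ_three] at h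
    refine nm4 p hα hβ (A := a 0 ^ 2 * e 0) (C := e 1) (E := e 2) (G := 0) (LSq_mul _ (LSq_sq _ _) (he2 0))
      (he2 1) (he2 2) (LSq_zero p) ?_ ?_
    · rintro ⟨h1, h2, h3, -⟩
      apply he
      simp [ha 0] at h1
      ext i; fin_cases i <;> assumption
    · linear_combination (a 0) * h)
  refine ⟨![x, y, z], fun h => h0 ⟨congrFun h 0, congrFun h 1, congrFun h 2⟩, ?_⟩
  simpa [Fin.sum_univ_three] using hxyz

theorem hm4_sq (a : Fin 4 → K) (ha : ∀ i, a i ≠ 0) (hd : IsSquare (a 0 * a 1 * a 2 * a 3))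
    (h : ∀ p : Pl K, LI p a) : GI a := by
  have hα := neg_ne_zero.mpr (mul_ne_zero (ha 0) (ha 1))
  have hβ := neg_ne_zero.mpr (mul_ne_zero (ha 0) (ha 2))
  obtain ⟨δ, hδ⟩ := hd
  have h00 := ha 0
  have h10 := ha 1
  have h20 := ha 2
  have h30 := ha 3
  have hδ0 : δ ≠ 0 := by rintro rfl; simp [h00, h10, h20, h30] at hδ
  obtain ⟨x, y, z, h0, hxyz⟩ := fin_tern (a 0) (a 1) (a 2) (ha 0) (ha 1) (ha 2) (fun p => by
    obtain ⟨e, he, he2, h⟩ := h p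
    simp only [Fin.sum_univ_four] at h
    refine nm4 p hα hβ (A := a 0 ^ 2 * e 0) (C := e 1) (E := e 2)
      (G := e 3 * (δ / (a 0 * a 1 * a 2)) ^ 2) (LSq_mul _ (LSq_sq _ _) (he2 0))
      (he2 1) (he2 2) (LSq_mul _ (he2 3) (LSq_sq _ _)) ?_ ?_
    · rintro ⟨h1, h2, h3, h4⟩
      apply he
      simp [ha 0] at h1
      simp [h00, h10, h20, hδ0] at h4
      ext i; fin_cases i <;> assumption
    · field_simp
      linear_combination (a 1 * a 2 * a 0) * h - e 3 * hδ)
  refine ⟨![x, y, z, 0], fun h => h0 ⟨congrFun h 0, congrFun h 1, congrFun h 2⟩, ?_⟩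
  simpa [Fin.sum_univ_four] using hxyz

end
end HM

open IsDedekindDomain NumberField
namespace HM
section
universe u
variable {K : Type u} [Field K] [NumberField K]

theorem exists_perp {m k : ℕ} (hk : k < m) (a : Fin m → K) (w : Fin k → Fin m → K) :
    ∃ z : Fin m → K, z ≠ 0 ∧ ∀ j, ∑ i, a i * w j i * z i = 0 := by
  let f : (Fin m → K) →ₗ[K] (Fin k → K) := Matrix.mulVecLin (Matrix.of fun j i => a i * w j i)
  have := LinearMap.ker_ne_bot_of_finrank_lt (f := f) (by simpa using hk)
  obtain ⟨z, hz, hz0⟩ := (Submodule.ne_bot_iff _).mp this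
  refine ⟨z, hz0, fun j => ?_⟩
  have := congrFun (LinearMap.mem_ker.mp hz) j
  simpa [f, Matrix.mulVec, dotProduct] using this

theorem descend4 (a : Fin 4 → K) {L : Type u} [Field L] [NumberField L] [Algebra K L]
    (Q : Quad K L (a 0 * a 1 * a 2 * a 3)) (h : GI (fun i => algebraMap K L (a i))) : GI a := by
  by_contra hG
  have hno : ∀ x : Fin 4 → K, x ≠ 0 → ∑ i, a i * x i ^ 2 ≠ 0 := by
    intro x hx h; exact hG ⟨x, hx, h⟩
  have hd := Q.a_ne
  set d := a 0 * a 1 * a 2 * a 3 with hdd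
  obtain ⟨x, hx, hs⟩ := h
  set u : Fin 4 → K := fun i => Q.re (x i) with hu
  set v : Fin 4 → K := fun i => Q.im (x i) with hv
  have h1 := congrArg Q.re hs
  have h2 := congrArg Q.im hs
  simp only [Fin.sum_univ_four, pow_two, Q.re_add, Q.im_add, Q.re_mul, Q.im_mul, Q.re_alg, Q.im_alg,
    Q.re_zero, Q.im_zero] at h1 h2
  have h1 : ∑ i, a i * u i ^ 2 + d * ∑ i, a i * v i ^ 2 = 0 := by
    simp only [Fin.sum_univ_four, u, v]; linear_combination h1
  have h2 : ∑ i, a i * u i * v i = 0 := by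
    simp only [Fin.sum_univ_four, u, v]
    have : (2 : K) ≠ 0 := two_ne_zero
    apply mul_left_cancel₀ this
    linear_combination h2
  have hv0 : v ≠ 0 := by
    intro hv0
    rw [hv0] at h1
    simp at h1
    refine hno u ?_ h1
    intro hu0
    apply hx
    ext i
    apply Q.hext
    · rw [Pi.zero_apply, Q.re_zero]; exact congrFun hu0 i
    · rw [Pi.zero_apply, Q.im_zero]; exact congrFun hv0 i
  obtain ⟨w, hw0, hw⟩ := exists_perp (by norm_num : 2 < 4) a ![u, v]
  obtain ⟨t, ht0, ht⟩ := exists_perp (by norm_num : 3 < 4) a ![u, v, w]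
  have fv := hno v hv0
  have fw := hno w hw0
  have ft := hno t ht0
  have huw : ∑ i, a i * u i * w i = 0 := hw 0
  have hvw : ∑ i, a i * v i * w i = 0 := hw 1
  have hut : ∑ i, a i * u i * t i = 0 := ht 0
  have hvt : ∑ i, a i * v i * t i = 0 := ht 1
  have hwt : ∑ i, a i * w i * t i = 0 := ht 2
  let M : Matrix (Fin 4) (Fin 4) K := Matrix.of ![u, v, w, t]
  have hM : M * Matrix.diagonal a * M.transpose = Matrix.diagonal
      ![∑ i, a i * u i ^ 2, ∑ i, a i * v i ^ 2, ∑ i, a i * w i ^ 2, ∑ i, a i * t i ^ 2] := by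
    clear_value u v d
    simp only [Fin.sum_univ_four] at h2 huw hvw hut hvt hwt
    ext i j
    rw [Matrix.mul_apply]
    simp only [Matrix.mul_diagonal, Matrix.transpose_apply, M, Matrix.of_apply, Fin.sum_univ_four]
    fin_cases i <;> fin_cases j <;> simp [Matrix.diagonal] <;>
    first
      | ring1
      | linear_combination h2
      | linear_combination huw
      | linear_combination hvw
      | linear_combination hut
      | linear_combination hvt
      | linear_combination hwt
  have hdet := congrArg Matrix.det hM
  rw [Matrix.det_mul, Matrix.det_mul, Matrix.det_transpose, Matrix.det_diagonal, Matrix.det_diagonal,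
    Fin.prod_univ_four, Fin.prod_univ_four] at hdet
  simp only [Matrix.cons_val] at hdet
  set D := M.det
  set fu' := ∑ i, a i * u i ^ 2
  set fv' := ∑ i, a i * v i ^ 2
  set fw' := ∑ i, a i * w i ^ 2
  set ft' := ∑ i, a i * t i ^ 2
  rw [← hdd] at hdet
  have key : fw' * ft' = - (D / fv') ^ 2 := by
    field_simp
    apply mul_left_cancel₀ hd
    linear_combination hdet + h1 * fv' * fw' * ft'
  set r := D / fv'
  refine hno (fun i => ft' * w i + r * t i) ?_ ?_
  · intro h0
    have : ∑ i, a i * w i * (ft' * w i + r * t i) = 0 := by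
      apply Finset.sum_eq_zero; intro i _
      have := congrFun h0 i
      simp only [Pi.zero_apply] at this
      rw [this, mul_zero]
    have e : ∑ i, a i * w i * (ft' * w i + r * t i) = ft' * fw' + r * ∑ i, a i * w i * t i := by
      simp only [fw', Finset.mul_sum]
      rw [← Finset.sum_add_distrib]
      apply Finset.sum_congr rfl; intros; ring
    rw [e, hwt, mul_zero, add_zero] at this
    exact mul_ne_zero ft fw this
  · have e : ∑ i, a i * (ft' * w i + r * t i) ^ 2 =
        ft' ^ 2 * fw' + 2 * ft' * r * (∑ i, a i * w i * t i) + r ^ 2 * ∑ i, a i * t i ^ 2 := by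
      simp only [fw', Finset.mul_sum]
      rw [← Finset.sum_add_distrib, ← Finset.sum_add_distrib]
      apply Finset.sum_congr rfl; intros; ring
    rw [e, hwt]
    change ft' ^ 2 * fw' + 2 * ft' * r * 0 + r ^ 2 * ft' = 0
    linear_combination ft' * key

theorem LI_up {L : Type u} [Field L] [NumberField L] [Algebra K L] {m : ℕ} (a : Fin m → K)
    (h : ∀ p : Pl K, LI p a) (q : Pl L) : LI q (fun i => algebraMap K L (a i)) := by
  have key : ∃ p : Pl K, ∀ x, LSq p x → LSq q (algebraMap K L x) := by
    cases q with
    | inl w => exact ⟨.inl (un K w), fun x hx => LSq_above w hx⟩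
    | inr σ => exact ⟨.inr (σ.comp (algebraMap K L)), fun x hx => hx⟩
  obtain ⟨p, hp⟩ := key
  obtain ⟨e, he, he2, hs⟩ := h p
  refine ⟨fun i => algebraMap K L (e i), ?_, fun i => hp _ (he2 i), ?_⟩
  · intro h0; apply he; ext i
    have := congrFun h0 i
    simpa using this
  · simp only [← map_mul, ← map_sum, hs, map_zero]

theorem hm4 (a : Fin 4 → K) (ha : ∀ i, a i ≠ 0) (h : ∀ p : Pl K, LI p a) : GI a := by
  by_cases hd : IsSquare (a 0 * a 1 * a 2 * a 3)
  · exact hm4_sq a ha hd h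
  · obtain ⟨L, i1, i2, i3, ⟨Q⟩⟩ := exists_ext _ hd
    apply descend4 a Q
    refine hm4_sq _ (fun i => by simpa using ha i) ⟨Q.s, ?_⟩ (LI_up a h)
    simp only [← map_mul]
    exact Q.ss.symm

end
end HM

open IsDedekindDomain NumberField
namespace HM
section
universe u
variable {K : Type u} [Field K] [NumberField K]

theorem int_approx (v : HeightOneSpectrum (𝓞 K)) (g : K) (hg : v.valuation K g = 1) :
    ∃ n : 𝓞 K, v.valuation K (g - algebraMap (𝓞 K) K n) < 1 := by
  obtain ⟨π, hπ⟩ := v.valuation_exists_uniformizer K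
  have hπ0 : π ≠ 0 := by
    rintro rfl
    rw [map_zero] at hπ
    exact WithZero.exp_ne_zero hπ.symm
  obtain ⟨n, hn⟩ := approx_int v (ι v g) (by rw [norm_ι, av_le_one]; exact hg.le) (ι v π)
    ((map_ne_zero _).mpr hπ0)
  refine ⟨n, ?_⟩
  rw [← map_sub, norm_ι, norm_ι, av_le] at hn
  refine hn.trans_lt ?_
  rw [hπ, ← WithZero.exp_zero, WithZero.exp_lt_exp]
  norm_num

open Polynomial in
theorem odd_tern (v : HeightOneSpectrum (𝓞 K)) (h2 : v.valuation K 2 = 1) (g0 g1 g2 : K)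
    (h0 : v.valuation K g0 = 1) (h1 : v.valuation K g1 = 1) (hh : v.valuation K g2 = 1) :
    ∃ x y z : K, LSq (.inl v) x ∧ LSq (.inl v) y ∧ LSq (.inl v) z ∧ z ≠ 0 ∧
      g0 * x + g1 * y + g2 * z = 0 := by
  obtain ⟨n0, hn0⟩ := int_approx v g0 h0
  obtain ⟨n1, hn1⟩ := int_approx v g1 h1
  obtain ⟨n2, hn2⟩ := int_approx v g2 hh
  have nu : ∀ (g : K) (n : 𝓞 K), v.valuation K g = 1 → v.valuation K (g - algebraMap (𝓞 K) K n) < 1 →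
      n ∉ v.asIdeal := by
    intro g n hg hn hm
    have hm := (v.valuation_lt_one_iff_mem (K := K) n).mpr hm
    have := Valuation.map_add_lt (v.valuation K) hn hm
    rw [sub_add_cancel, hg] at this
    exact lt_irrefl _ this
  have := v.isMaximal
  let : Field (𝓞 K ⧸ v.asIdeal) := Ideal.Quotient.field _
  have : Finite (𝓞 K ⧸ v.asIdeal) := by
    have := fin_ideal v 1
    rwa [pow_one] at this
  let := Fintype.ofFinite (𝓞 K ⧸ v.asIdeal)
  have hc : ringChar (𝓞 K ⧸ v.asIdeal) ≠ 2 := by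
    intro hc
    have : ((2 : ℕ) : 𝓞 K ⧸ v.asIdeal) = 0 := by rw [← hc]; exact ringChar.Nat.cast_ringChar
    have h3 : Ideal.Quotient.mk v.asIdeal ((2 : ℕ) : 𝓞 K) = 0 := by
      rw [map_natCast]; exact this
    rw [Ideal.Quotient.eq_zero_iff_mem, ← v.valuation_lt_one_iff_mem (K := K)] at h3
    change v.valuation K (algebraMap (𝓞 K) K ((2 : ℕ) : 𝓞 K)) < 1 at h3
    rw [map_natCast, Nat.cast_ofNat, h2] at h3
    exact lt_irrefl _ h3
  have m0 : Ideal.Quotient.mk v.asIdeal n0 ≠ 0 := fun h =>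
    nu _ _ h0 hn0 (Ideal.Quotient.eq_zero_iff_mem.mp h)
  have m1 : Ideal.Quotient.mk v.asIdeal n1 ≠ 0 := fun h =>
    nu _ _ h1 hn1 (Ideal.Quotient.eq_zero_iff_mem.mp h)
  obtain ⟨x, y, hxy⟩ := FiniteField.exists_root_sum_quadratic
    (f := C (Ideal.Quotient.mk v.asIdeal n0) * X ^ 2)
    (g := C (Ideal.Quotient.mk v.asIdeal n1) * X ^ 2 + C (Ideal.Quotient.mk v.asIdeal n2))
    (degree_C_mul_X_pow 2 m0)
    (by
      rw [degree_add_eq_left_of_degree_lt]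
      · exact degree_C_mul_X_pow 2 m1
      · rw [degree_C_mul_X_pow 2 m1]
        exact degree_C_le.trans_lt (by norm_num)) (FiniteField.odd_card_of_char_ne_two hc)
  obtain ⟨x, rfl⟩ := Ideal.Quotient.mk_surjective x
  obtain ⟨y, rfl⟩ := Ideal.Quotient.mk_surjective y
  simp only [eval_mul, eval_C, eval_pow, eval_X, eval_add, ← map_pow, ← map_mul, ← map_add] at hxy
  rw [Ideal.Quotient.eq_zero_iff_mem, ← v.valuation_lt_one_iff_mem (K := K)] at hxy
  change v.valuation K (algebraMap (𝓞 K) K _) < 1 at hxy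
  have eM : algebraMap (𝓞 K) K (n0 * x ^ 2 + (n1 * y ^ 2 + n2)) = algebraMap (𝓞 K) K n0 *
      algebraMap (𝓞 K) K x ^ 2 + (algebraMap (𝓞 K) K n1 * algebraMap (𝓞 K) K y ^ 2 +
      algebraMap (𝓞 K) K n2) := by simp only [map_add, map_mul, map_pow]
  rw [eM] at hxy
  set X' : K := algebraMap (𝓞 K) K x
  set Y' : K := algebraMap (𝓞 K) K y
  have hX : v.valuation K X' ≤ 1 := v.valuation_le_one x
  have hY : v.valuation K Y' ≤ 1 := v.valuation_le_one y
  have hg20 : g2 ≠ 0 := by rintro rfl; simp at hh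
  have hs : v.valuation K (g0 * X' ^ 2 + g1 * Y' ^ 2 + g2) < 1 := by
    have e : g0 * X' ^ 2 + g1 * Y' ^ 2 + g2 = (algebraMap (𝓞 K) K n0 * X' ^ 2 +
      (algebraMap (𝓞 K) K n1 * Y' ^ 2 + algebraMap (𝓞 K) K n2)) +
      ((g0 - algebraMap (𝓞 K) K n0) * X' ^ 2 + ((g1 - algebraMap (𝓞 K) K n1) * Y' ^ 2 +
      (g2 - algebraMap (𝓞 K) K n2))) := by ring
    rw [e]
    have key : ∀ s t : K, v.valuation K s < 1 → v.valuation K t ≤ 1 → v.valuation K (s * t ^ 2) < 1 := by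
      intro s t hs ht
      rw [map_mul, map_pow]
      exact (mul_le_of_le_one_right' (pow_le_one' ht 2)).trans_lt hs
    exact Valuation.map_add_lt _ hxy (Valuation.map_add_lt _ (key _ _ hn0 hX)
      (Valuation.map_add_lt _ (key _ _ hn1 hY) hn2))
  set z := -(g0 * X' ^ 2 + g1 * Y' ^ 2) / g2 with hz
  have hz1 : v.valuation K (z - 1 ^ 2) < 1 := by
    have : z - 1 ^ 2 = -(g0 * X' ^ 2 + g1 * Y' ^ 2 + g2) / g2 := by rw [hz]; field_simp; ring
    rw [this, map_div₀, Valuation.map_neg, hh, div_one]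
    exact hs
  have hzv : v.valuation K z = 1 := by
    have : z = 1 + (z - 1 ^ 2) := by ring
    rw [this]; exact Valuation.map_one_add_of_lt _ hz1
  have hz0 : z ≠ 0 := by rintro h; rw [h] at hzv; simp at hzv
  refine ⟨X' ^ 2, Y' ^ 2, z, LSq_sq _ _, LSq_sq _ _, ?_, hz0, ?_⟩
  · rw [LSq_fin_iff v hz0]
    refine ⟨1, hz1.trans_le ?_⟩
    have : (4 : K) * z = 2 * 2 * z := by ring
    rw [this, map_mul, map_mul, h2, hzv]; simp
  · rw [hz]; field_simp; ring

end
end HM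

open IsDedekindDomain NumberField
namespace HM
section
universe u
variable {K : Type u} [Field K] [NumberField K]

theorem cont2 (p : Pl K) (a0 a1 X Y : K) {ε : ℝ} (hε : 0 < ε) :
    ∃ δ > 0, ∀ x y, abv p (x - X) < δ → abv p (y - Y) < δ →
      abv p ((a0 * x ^ 2 + a1 * y ^ 2) - (a0 * X ^ 2 + a1 * Y ^ 2)) < ε := by
  have n := (abv p).nonneg
  set A := abv p a0 * (1 + abv p (2 * X))
  set B := abv p a1 * (1 + abv p (2 * Y))
  have hA : 0 ≤ A := mul_nonneg (n _) (by linarith [n (2 * X)])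
  have hB : 0 ≤ B := mul_nonneg (n _) (by linarith [n (2 * Y)])
  have key : ∀ (a x X : K) (δ : ℝ), abv p (x - X) < δ → δ ≤ 1 →
      abv p (a * (x - X) * ((x - X) + 2 * X)) ≤ (abv p a * (1 + abv p (2 * X))) * δ := by
    intro a x X δ h1 h2
    rw [map_mul, map_mul]
    have h3 := (abv p).add_le (x - X) (2 * X)
    have h4 : abv p ((x - X) + 2 * X) ≤ 1 + abv p (2 * X) := by linarith
    have h5 : abv p (x - X) * abv p ((x - X) + 2 * X) ≤ δ * (1 + abv p (2 * X)) :=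
      mul_le_mul h1.le h4 (n _) ((n _).trans h1.le)
    calc _ = abv p a * (abv p (x - X) * abv p ((x - X) + 2 * X)) := by ring
      _ ≤ abv p a * (δ * (1 + abv p (2 * X))) := mul_le_mul_of_nonneg_left h5 (n _)
      _ = _ := by ring
  have hden : 0 < A + B + 1 := by linarith
  refine ⟨min 1 (ε / (A + B + 1)), lt_min one_pos (div_pos hε hden), fun x y hx hy => ?_⟩
  set δ := min 1 (ε / (A + B + 1))
  have hδ : 0 < δ := lt_min one_pos (div_pos hε hden)
  have hδ1 : δ ≤ 1 := min_le_left _ _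
  have hδ2 : δ * (A + B + 1) ≤ ε := by
    rw [← le_div_iff₀ hden]; exact min_le_right _ _
  have e : (a0 * x ^ 2 + a1 * y ^ 2) - (a0 * X ^ 2 + a1 * Y ^ 2) =
    a0 * (x - X) * ((x - X) + 2 * X) + a1 * (y - Y) * ((y - Y) + 2 * Y) := by ring
  rw [e]
  have h1 := (abv p).add_le (a0 * (x - X) * ((x - X) + 2 * X)) (a1 * (y - Y) * ((y - Y) + 2 * Y))
  have h2 := key a0 x X δ hx hδ1
  have h3 := key a1 y Y δ hy hδ1
  change _ ≤ A * δ at h2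
  change _ ≤ B * δ at h3
  nlinarith

theorem loc_c {n : ℕ} (i0 : Fin n) (a0 a1 : K) (h0 : a0 ≠ 0) (h1 : a1 ≠ 0) (g : Fin n → K)
    (hg : ∀ i, g i ≠ 0) (p : Pl K)
    (h : LI p (Fin.cons a0 (Fin.cons a1 g : Fin (n + 1) → K) : Fin (n + 2) → K)) :
    ∃ X Y : K, a0 * X ^ 2 + a1 * Y ^ 2 ≠ 0 ∧ ∀ c, c ≠ 0 → LSq p (c * (a0 * X ^ 2 + a1 * Y ^ 2)) →
      LI p (Fin.cons c g : Fin (n + 1) → K) := by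
  classical
  obtain ⟨E, hE, hE2, hs⟩ := h
  simp only [Fin.sum_univ_succ, Fin.cons_zero, Fin.cons_succ] at hs
  set s := E 0
  set t := E (Fin.succ 0)
  set e : Fin n → K := fun i => E i.succ.succ with he
  have hs : a0 * s + (a1 * t + ∑ i, g i * e i) = 0 := hs
  by_cases hc : a0 * s + a1 * t = 0
  · by_cases he0 : e = 0
    · have hst : s ≠ 0 ∧ t ≠ 0 := by
        by_contra hst
        have : s = 0 ∧ t = 0 := by
          by_cases hs0 : s = 0
          · rw [hs0] at hc; simp [h1] at hc; exact ⟨hs0, hc⟩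
          · by_cases ht0 : t = 0
            · rw [ht0] at hc; simp [h0] at hc; exact ⟨hc, ht0⟩
            · exact absurd ⟨hs0, ht0⟩ hst
        apply hE
        ext i
        refine Fin.cases this.1 (fun j => ?_) i
        refine Fin.cases this.2 (fun k => ?_) j
        exact congrFun he0 k
      have hα : LSq p (-(a0 * a1)) := by
        apply LSq_div p (y := t) _ (hE2 _) hst.2
        have : -(a0 * a1) * t = s * a0 ^ 2 := by linear_combination -a0 * hc
        rw [this]
        exact LSq_mul p (hE2 0) (LSq_sq _ _)
      have hb : -(a0 * g i0) ≠ 0 := neg_ne_zero.mpr (mul_ne_zero h0 (hg _))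
      have hmem : Units.mk0 _ hb ∈ Nm (-(a0 * a1)) p := by
        rw [Nm_eq_top hα (neg_ne_zero.mpr (mul_ne_zero h0 h1))]; trivial
      obtain ⟨x, y, hN, hN2⟩ := mem_Nm.mp hmem
      rw [Units.val_mk0] at hN2
      have eN : a0 * (x / a0) ^ 2 + a1 * y ^ 2 = (x ^ 2 - -(a0 * a1) * y ^ 2) / a0 := by
        field_simp; ring
      refine ⟨x / a0, y, ?_, ?_⟩
      · rw [eN]; exact div_ne_zero hN h0
      · intro c hc0 hc
        rw [eN] at hc
        set N := x ^ 2 - -(a0 * a1) * y ^ 2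
        have h3 : LSq p (-(g i0) / c) := by
          have := LSq_mul p hc hN2
          apply LSq_of_mul_sq p (y := N * c) (mul_ne_zero hN hc0)
          have e : -g i0 / c * (N * c) ^ 2 = c * (N / a0) * (-(a0 * g i0) * N) := by
            field_simp
          rwa [e]
        refine ⟨Fin.cons (-(g i0) / c) (Pi.single i0 1), ?_, ?_, ?_⟩
        · intro h
          have := congrFun h 0
          simp [hc0, hg] at this
        · intro i
          refine Fin.cases ?_ (fun j => ?_) i
          · simpa using h3
          · simp only [Fin.cons_succ, Pi.single_apply]
            split_ifs
            · exact LSq_one p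
            · exact LSq_zero p
        · simp only [Fin.sum_univ_succ, Fin.cons_zero, Fin.cons_succ]
          simp [Pi.single_apply]
          field_simp
          ring
    · refine ⟨1, 0, by simpa using h0, fun c hc0 _ => ?_⟩
      refine ⟨Fin.cons 0 e, ?_, ?_, ?_⟩
      · intro h
        apply he0
        ext i
        have := congrFun h i.succ
        simpa using this
      · intro i
        refine Fin.cases ?_ (fun j => ?_) i
        · simpa using LSq_zero p
        · simpa [e] using hE2 _
      · simp only [Fin.sum_univ_succ, Fin.cons_zero, Fin.cons_succ]
        linear_combination hs - hc
  · obtain ⟨ε, hε, H⟩ := open_sq p _ hc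
    set c' := a0 * s + a1 * t with hc'
    have hA : 0 < abv p a0 + abv p a1 + 1 := by
      have := (abv p).nonneg a0
      have := (abv p).nonneg a1
      linarith
    obtain ⟨X, hX⟩ := approx_sqrt p (hE2 0) (div_pos hε hA)
    obtain ⟨Y, hY⟩ := approx_sqrt p (hE2 (Fin.succ 0)) (div_pos hε hA)
    have key : abv p ((a0 * X ^ 2 + a1 * Y ^ 2) - c') < ε := by
      have e : (a0 * X ^ 2 + a1 * Y ^ 2) - c' = a0 * (X ^ 2 - s) + a1 * (Y ^ 2 - t) := by
        rw [hc']; ring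
      rw [e]
      have h1 := (abv p).add_le (a0 * (X ^ 2 - s)) (a1 * (Y ^ 2 - t))
      rw [map_mul, map_mul] at h1
      set δ := ε / (abv p a0 + abv p a1 + 1) with hδ
      have hδ0 : 0 < δ := div_pos hε hA
      have hδ2 : δ * (abv p a0 + abv p a1 + 1) = ε := by rw [hδ]; field_simp
      have h2 := mul_le_mul_of_nonneg_left hX.le ((abv p).nonneg a0)
      have h3 := mul_le_mul_of_nonneg_left hY.le ((abv p).nonneg a1)
      change abv p a0 * abv p (X ^ 2 - s) ≤ _ at h2
      change abv p a1 * abv p (Y ^ 2 - t) ≤ _ at h3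
      linarith
    obtain ⟨k1, k2⟩ := H _ key
    refine ⟨X, Y, k1, fun c hc0 hcs => ?_⟩
    set c0 := a0 * X ^ 2 + a1 * Y ^ 2
    have h3 : LSq p (c' / c) := by
      have := LSq_mul p hcs k2
      apply LSq_of_mul_sq p (y := c0 * c) (mul_ne_zero k1 hc0)
      have e : c' / c * (c0 * c) ^ 2 = c * c0 * (c0 * c') := by
        field_simp
      rwa [e]
    refine ⟨Fin.cons (c' / c) e, ?_, ?_, ?_⟩
    · intro h
      have := congrFun h 0
      simp [hc0, hc] at this
    · intro i
      refine Fin.cases ?_ (fun j => ?_) i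
      · simpa using h3
      · simpa [e] using hE2 _
    · simp only [Fin.sum_univ_succ, Fin.cons_zero, Fin.cons_succ]
      rw [mul_div_cancel₀ _ hc0, hc']
      linear_combination hs

theorem out_LI {n : ℕ} (hn : 3 ≤ n) (c : K) (g : Fin n → K) (v : HeightOneSpectrum (𝓞 K))
    (h2 : v.valuation K 2 = 1) (hg : ∀ i, v.valuation K (g i) = 1) :
    LI (.inl v) (Fin.cons c g : Fin (n + 1) → K) := by
  classical
  let i0 : Fin n := ⟨0, by omega⟩
  let i1 : Fin n := ⟨1, by omega⟩
  let i2 : Fin n := ⟨2, by omega⟩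
  have h01 : i0 ≠ i1 := by simp [i0, i1]
  have h02 : i0 ≠ i2 := by simp [i0, i2]
  have h12 : i1 ≠ i2 := by simp [i1, i2]
  obtain ⟨x, y, z, hx, hy, hz, hz0, hs⟩ := odd_tern v h2 (g i0) (g i1) (g i2) (hg _) (hg _) (hg _)
  refine ⟨Fin.cons 0 (Pi.single i0 x + Pi.single i1 y + Pi.single i2 z), ?_, ?_, ?_⟩
  · intro h
    have := congrFun h i2.succ
    simp [h02, h12, hz0] at this
  · intro i
    refine Fin.cases ?_ (fun j => ?_) i
    · simpa using LSq_zero _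
    · simp only [Fin.cons_succ, Pi.add_apply]
      by_cases e2 : j = i2
      · subst e2; simpa [h02, h12] using hz
      by_cases e1 : j = i1
      · subst e1; simpa [h01, h12] using hy
      by_cases e0 : j = i0
      · subst e0; simpa [h01, h02] using hx
      simpa [e0, e1, e2] using LSq_zero _
  · simp only [Fin.sum_univ_succ, Fin.cons_zero, Fin.cons_succ]
    simp [mul_add, Finset.sum_add_distrib, Pi.single_apply]
    exact hs

theorem step {n : ℕ} (hn : 3 ≤ n) (a0 a1 : K) (h0 : a0 ≠ 0) (h1 : a1 ≠ 0) (g : Fin n → K)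
    (hg : ∀ i, g i ≠ 0)
    (IH : ∀ b : Fin (n + 1) → K, (∀ i, b i ≠ 0) → (∀ p, LI p b) → GI b)
    (h : ∀ p, LI p (Fin.cons a0 (Fin.cons a1 g : Fin (n + 1) → K) : Fin (n + 2) → K)) :
    GI (Fin.cons a0 (Fin.cons a1 g : Fin (n + 1) → K) : Fin (n + 2) → K) := by
  classical
  obtain ⟨v0⟩ := exists_place (K := K)
  choose X Y hXY hL using fun p => loc_c ⟨0, by omega⟩ a0 a1 h0 h1 g hg p (h p)
  choose ε hε Hε using fun p => open_sq p _ (hXY p)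
  choose δ hδ Hδ using fun p => cont2 p a0 a1 (X p) (Y p) (hε p)
  let S : Finset (HeightOneSpectrum (𝓞 K)) := insert v0 ((fin_supp (2 : K) two_ne_zero).toFinset ∪
    Finset.univ.biUnion fun i => (fin_supp (g i) (hg i)).toFinset)
  obtain ⟨x, hx⟩ := weak_approx (pls S) X δ (fun p _ => hδ p)
  obtain ⟨y, hy⟩ := weak_approx (pls S) Y δ (fun p _ => hδ p)
  have H : ∀ p ∈ pls S, a0 * x ^ 2 + a1 * y ^ 2 ≠ 0 ∧
      LSq p ((a0 * x ^ 2 + a1 * y ^ 2) * (a0 * X p ^ 2 + a1 * Y p ^ 2)) := fun p hp =>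
    Hε p _ (Hδ p _ _ (hx p hp) (hy p hp))
  have hc : a0 * x ^ 2 + a1 * y ^ 2 ≠ 0 := (H (.inl v0) (by simp [S])).1
  obtain ⟨w, hw, hws⟩ := IH (Fin.cons (a0 * x ^ 2 + a1 * y ^ 2) g)
    (fun i => Fin.cases (by simpa using hc) (fun j => by simpa using hg j) i) (fun p => by
      by_cases hp : p ∈ pls S
      · exact hL p _ hc (H p hp).2
      · cases p with
        | inr σ => simp at hp
        | inl v =>
          simp only [mem_pls_inl, S, Finset.mem_insert, Finset.mem_union, Finset.mem_biUnion,
            Set.Finite.mem_toFinset, Set.mem_ofPred_eq, Finset.mem_univ, true_and, not_or, not_exists,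
            not_not] at hp
          exact out_LI hn _ g v hp.2.1 hp.2.2)
  simp only [Fin.sum_univ_succ, Fin.cons_zero, Fin.cons_succ] at hws
  refine ⟨Fin.cons (x * w 0) (Fin.cons (y * w 0) (fun i => w i.succ) : Fin (n + 1) → K), ?_, ?_⟩
  · intro hz
    have z0 : x * w 0 = 0 := congrFun hz 0
    have z1 : y * w 0 = 0 := congrFun hz (Fin.succ 0)
    have zt : ∀ i : Fin n, w i.succ = 0 := fun i => congrFun hz i.succ.succ
    apply hw
    ext i
    refine Fin.cases ?_ zt i
    by_contra hw0
    have hw0 : w 0 ≠ 0 := hw0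
    apply hc
    rw [(mul_eq_zero.mp z0).resolve_right hw0, (mul_eq_zero.mp z1).resolve_right hw0]
    simp
  · simp only [Fin.sum_univ_succ, Fin.cons_zero, Fin.cons_succ]
    linear_combination hws

theorem hm_all : ∀ (m : ℕ) (_ : 1 ≤ m) (a : Fin m → K) (_ : ∀ i, a i ≠ 0) (_ : ∀ p, LI p a), GI a
  | 0, h, _, _, _ => by omega
  | 1, _, a, ha, h => hm1 a ha h
  | 2, _, a, ha, h => hm2 a ha h
  | 3, _, a, ha, h => hm3 a ha h
  | 4, _, a, ha, h => hm4 a ha h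
  | n + 5, _, a, ha, h => by
    have e : a = Fin.cons (a 0) (Fin.cons (a (Fin.succ 0)) (fun i : Fin (n + 3) => a i.succ.succ) :
        Fin (n + 4) → K) := by
      ext i
      refine Fin.cases rfl (fun j => ?_) i
      exact Fin.cases rfl (fun k => rfl) j
    rw [e] at h ⊢
    exact step (by omega) _ _ (ha _) (ha _) _ (fun i => ha _)
      (fun b hb hL => hm_all (n + 4) (by omega) b hb hL) h

end
end HM

/-- Hasse–Minkowski: a diagonal quadratic form with nonzero coefficients over a number field
`K` is isotropic over `K` iff it is isotropic over `ℝ` for every real embedding of `K` and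
isotropic over the completion `K_v` for every finite place `v` of `K`. -/
theorem hasse_minkowski_diagonal
    (K : Type*) [Field K] [NumberField K] (m : ℕ) (hm : 1 ≤ m)
    (a : Fin m → K) (ha : ∀ i, a i ≠ 0) :
    (∃ x : Fin m → K, x ≠ 0 ∧ (∑ i, a i * x i ^ 2) = 0) ↔
      ((∀ σ : K →+* ℝ, ∃ x : Fin m → ℝ, x ≠ 0 ∧ (∑ i, σ (a i) * x i ^ 2) = 0) ∧
        (∀ v : HeightOneSpectrum (𝓞 K),
          ∃ x : Fin m → v.adicCompletion K, x ≠ 0 ∧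
            (∑ i, algebraMap K (v.adicCompletion K) (a i) * x i ^ 2) = 0)) := by
  constructor
  · rintro ⟨x, hx, hs⟩
    obtain ⟨i, hi⟩ := Function.ne_iff.mp hx
    refine ⟨fun σ => ⟨fun i => σ (x i), fun h => hi ?_, ?_⟩,
      fun v => ⟨fun i => algebraMap K (v.adicCompletion K) (x i), fun h => hi ?_, ?_⟩⟩
    · have := congrFun h i
      simpa using this
    · simp only [← map_pow, ← map_mul, ← map_sum, hs, map_zero]
    · have := congrFun h i
      simpa using this
    · simp only [← map_pow, ← map_mul, ← map_sum, hs, map_zero]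
  · rintro ⟨h1, h2⟩
    apply HM.hm_all m hm a ha
    intro p
    cases p with
    | inl v =>
      obtain ⟨x, hx, hs⟩ := h2 v
      exact HM.LI_inl v a ha x hx hs
    | inr σ =>
      obtain ⟨x, hx, hs⟩ := h1 σ
      exact HM.LI_inr σ a ha x hx hs
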